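/- arXiv:1810.03869 — 12 statements merged into one kernel-verified Lean document; each statement's English description precedes it below -/
import Mathlib

section
/- Let q : [0,T] → ℝ⁵ be an admissible trajectory of the Cartan control system with q(0) = 0 whose control satisfies u_i(t) = s for a.e. t ∈ [0,T], for some fixed index i ∈ {1,2} and sign s ∈ {1,−1}. Then q is time-optimal: every admissible trajectory of the Cartan control system defined on [0,T'] from 0 to q(T) satisfies T' ≥ T. -/
open MeasureTheory Set

/-- The Cartan control system ODE on `ℝ⁵` with coordinates `(x,y,z,v,w)`. -/
def CartanOde (x y z v w u1 u2 : ℝ → ℝ) (t : ℝ) : Prop :=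
  HasDerivAt x (u1 t) t ∧ HasDerivAt y (u2 t) t ∧
  HasDerivAt z ((x t * u2 t - y t * u1 t) / 2) t ∧
  HasDerivAt v (u2 t * (x t ^ 2 + y t ^ 2) / 2) t ∧
  HasDerivAt w (-(u1 t) * (x t ^ 2 + y t ^ 2) / 2) t

/-- An admissible trajectory of the Cartan control system on `[0,T]`. -/
def IsAdmissible (T : ℝ) (x y z v w u1 u2 : ℝ → ℝ) : Prop :=
  (∃ K, LipschitzOnWith K (fun t => (x t, y t, z t, v t, w t)) (Icc 0 T)) ∧
  Measurable u1 ∧ Measurable u2 ∧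
  (∀ᵐ t ∂(volume.restrict (Icc 0 T)),
    max |u1 t| |u2 t| ≤ 1 ∧ CartanOde x y z v w u1 u2 t)

/-- `Reach q1 T` : the point `q1` is reachable from the origin in time `T ≥ 0`. -/
def Reach (q1 : ℝ × ℝ × ℝ × ℝ × ℝ) (T : ℝ) : Prop :=
  0 ≤ T ∧ ∃ x y z v w u1 u2 : ℝ → ℝ,
    IsAdmissible T x y z v w u1 u2 ∧
    (x 0, y 0, z 0, v 0, w 0) = (0, 0, 0, 0, 0) ∧
    (x T, y T, z T, v T, w T) = q1

theorem cartan_aux_bound (T c d : ℝ) (hT : 0 ≤ T) (f a : ℝ → ℝ)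
    (hf : ∃ K, LipschitzOnWith K f (Icc 0 T)) (h0 : f 0 = 0)
    (h : ∀ᵐ t ∂(volume.restrict (Icc 0 T)), HasDerivAt f (a t) t ∧ c ≤ a t ∧ a t ≤ d) :
    c * T ≤ f T ∧ f T ≤ d * T := by
  obtain ⟨K, hK⟩ := hf
  rw [← uIcc_of_le hT] at hK
  have hac := hK.absolutelyContinuousOnInterval
  have hi := hac.intervalIntegrable_deriv
  have he := hac.integral_deriv_eq_sub
  have h1 : ∫ t in (0:ℝ)..T, c ≤ ∫ t in (0:ℝ)..T, deriv f t := by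
    refine intervalIntegral.integral_mono_ae_restrict hT (by simp) hi ?_
    filter_upwards [h] with t ht
    rw [ht.1.deriv]; exact ht.2.1
  have h2 : ∫ t in (0:ℝ)..T, deriv f t ≤ ∫ t in (0:ℝ)..T, d := by
    refine intervalIntegral.integral_mono_ae_restrict hT hi (by simp) ?_
    filter_upwards [h] with t ht
    rw [ht.1.deriv]; exact ht.2.2
  simp only [he, intervalIntegral.integral_const, smul_eq_mul, h0] at h1 h2
  constructor <;> linarith

theorem cartan_aux_main (T T' s : ℝ) (hT : 0 ≤ T) (hT' : 0 ≤ T') (hs : s = 1 ∨ s = -1)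
    (f a g b : ℝ → ℝ)
    (hf : ∃ K, LipschitzOnWith K f (Icc 0 T)) (hg : ∃ K, LipschitzOnWith K g (Icc 0 T'))
    (hf0 : f 0 = 0) (hg0 : g 0 = 0) (hfg : g T' = f T)
    (h : ∀ᵐ t ∂(volume.restrict (Icc 0 T)), HasDerivAt f (a t) t)
    (ha : ∀ᵐ t ∂(volume.restrict (Icc 0 T)), a t = s)
    (h' : ∀ᵐ t ∂(volume.restrict (Icc 0 T')), |b t| ≤ 1 ∧ HasDerivAt g (b t) t) :
    T ≤ T' := by
  have h1 := cartan_aux_bound T s s hT f a hf hf0 (by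
    filter_upwards [h, ha] with t h1 h2
    exact ⟨h1, h2.ge, h2.le⟩)
  have h2 := cartan_aux_bound T' (-1) 1 hT' g b hg hg0 (by
    filter_upwards [h'] with t h1
    exact ⟨h1.2, (abs_le.1 h1.1).1, (abs_le.1 h1.1).2⟩)
  rcases hs with rfl | rfl <;> linarith [h1.1, h1.2, h2.1, h2.2]

theorem cartan_aux_lip (T : ℝ) (x y z v w : ℝ → ℝ)
    (h : ∃ K, LipschitzOnWith K (fun t => (x t, y t, z t, v t, w t)) (Icc 0 T)) :
    (∃ K, LipschitzOnWith K x (Icc 0 T)) ∧ (∃ K, LipschitzOnWith K y (Icc 0 T)) := by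
  obtain ⟨K, hK⟩ := h
  exact ⟨⟨_, LipschitzWith.prod_fst.comp_lipschitzOnWith hK⟩,
    ⟨_, (LipschitzWith.prod_fst.comp LipschitzWith.prod_snd).comp_lipschitzOnWith hK⟩⟩

/-- A trajectory from the origin one of whose control components is a.e. constantly
equal to `1` or to `−1` is time-optimal. -/
theorem constant_component_control_is_optimal
    (T : ℝ) (hT : 0 ≤ T) (x y z v w u1 u2 : ℝ → ℝ) (s : ℝ)
    (hs : s = 1 ∨ s = -1)
    (htraj : IsAdmissible T x y z v w u1 u2)
    (hstart : (x 0, y 0, z 0, v 0, w 0) = (0, 0, 0, 0, 0))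
    (hconst : (∀ᵐ t ∂(volume.restrict (Icc 0 T)), u1 t = s) ∨
              (∀ᵐ t ∂(volume.restrict (Icc 0 T)), u2 t = s)) :
    ∀ T' : ℝ, Reach (x T, y T, z T, v T, w T) T' → T ≤ T' := by
  rintro T' ⟨hT', x', y', z', v', w', a1, a2, ⟨hl', -, -, hae'⟩, hs', he'⟩
  obtain ⟨hl, -, -, hae⟩ := htraj
  obtain ⟨hx, hy⟩ := cartan_aux_lip _ _ _ _ _ _ hl
  obtain ⟨hx', hy'⟩ := cartan_aux_lip _ _ _ _ _ _ hl'
  simp only [Prod.mk.injEq] at hs' he' hstart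
  rcases hconst with hc | hc
  · refine cartan_aux_main T T' s hT hT' hs x u1 x' a1 hx hx' hstart.1 hs'.1 he'.1 ?_ hc ?_
    · filter_upwards [hae] with t ht using ht.2.1
    · filter_upwards [hae'] with t ht using ⟨(le_max_left _ _).trans ht.1, ht.2.1⟩
  · refine cartan_aux_main T T' s hT hT' hs y u2 y' a2 hy hy' hstart.2.1 hs'.2.1 he'.2.1 ?_ hc ?_
    · filter_upwards [hae] with t ht using ht.2.2.1
    · filter_upwards [hae'] with t ht using ⟨(le_max_right _ _).trans ht.1, ht.2.2.1⟩
end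

section
/- Let q : [0,T] → ℝ⁵ be an admissible trajectory of the Cartan control system from 0 to a point q1, whose control satisfies max(|u1(t)|,|u2(t)|) < 1 on a subset of [0,T] of positive Lebesgue measure. Then q is not time-optimal: there exist T' < T and an admissible trajectory of the Cartan control system from 0 to q1 defined on [0,T']. Equivalently, every time-optimal control satisfies max(|u1(t)|,|u2(t)|) = 1 for a.e. t. -/
open MeasureTheory Set

lemma reparam_exists (r : ℝ → ℝ) (hr : Measurable r) (h1 : ∀ t, r t ≤ 1) (h2 : ∀ t, 1/2 ≤ r t) :
    ∃ τ : ℝ → ℝ, LipschitzWith 2 τ ∧ StrictMono τ ∧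
      (∀ t, τ (∫ s in (0:ℝ)..t, r s) = t) ∧
      (∀ Q : ℝ → Prop, (∀ᵐ t, Q t) → ∀ᵐ s, Q (τ s)) ∧
      (∀ᵐ s, HasDerivAt τ (r (τ s))⁻¹ s) := by
  have hint : ∀ a b, IntervalIntegrable r volume a b := by
    intro a b
    refine (intervalIntegrable_const (c := (1:ℝ))).mono_fun hr.aestronglyMeasurable ?_
    refine Filter.Eventually.of_forall fun t => ?_
    have := h1 t; have := h2 t
    simp only [Real.norm_eq_abs]
    rw [abs_of_nonneg (by linarith)]; simpa
  have hloc : LocallyIntegrable r volume := by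
    refine (locallyIntegrable_const (1:ℝ)).mono hr.aestronglyMeasurable ?_
    refine Filter.Eventually.of_forall fun t => ?_
    have := h1 t; have := h2 t
    simp only [Real.norm_eq_abs]
    rw [abs_of_nonneg (by linarith)]; simpa
  set σ : ℝ → ℝ := fun t => ∫ s in (0:ℝ)..t, r s with hσ
  have hsub : ∀ a b, σ b - σ a = ∫ s in a..b, r s := fun a b =>
    intervalIntegral.integral_interval_sub_left (hint _ _) (hint _ _)
  have hlow : ∀ a b, a ≤ b → (b - a) / 2 ≤ σ b - σ a := by
    intro a b hab
    rw [hsub]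
    have := intervalIntegral.integral_mono_on (μ := volume) hab
      (intervalIntegrable_const (c := (1/2:ℝ))) (hint a b) (fun t _ => h2 t)
    simp only [intervalIntegral.integral_const, smul_eq_mul] at this
    linarith
  have hup : ∀ a b, a ≤ b → σ b - σ a ≤ b - a := by
    intro a b hab
    rw [hsub]
    have := intervalIntegral.integral_mono_on (μ := volume) hab
      (hint a b) (intervalIntegrable_const (c := (1:ℝ))) (fun t _ => h1 t)
    simp only [intervalIntegral.integral_const, smul_eq_mul] at this
    linarith
  have hlip : LipschitzWith 1 σ := by
    refine LipschitzWith.of_dist_le_mul fun a b => ?_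
    simp only [NNReal.coe_one, one_mul, Real.dist_eq]
    rcases le_total a b with h | h
    · have := hup a b h; have := hlow a b h
      rw [abs_sub_comm, abs_sub_comm a, abs_of_nonneg (by linarith), abs_of_nonneg (by linarith)]
      linarith
    · have := hup b a h; have := hlow b a h
      rw [abs_of_nonneg (by linarith), abs_of_nonneg (by linarith)]
      linarith
  have hmono : StrictMono σ := by
    intro a b hab
    have := hlow a b hab.le
    linarith
  have hσ0 : σ 0 = 0 := by simp [hσ]
  have hsurj : Function.Surjective σ := by
    intro s
    have hc := hlip.continuous
    have hA := hlow 0 (2 * |s|) (by positivity)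
    have hB := hlow (-(2 * |s|)) 0 (by linarith [abs_nonneg s])
    have := intermediate_value_Icc (a := -(2*|s|)) (b := 2*|s|) (by linarith [abs_nonneg s])
      hc.continuousOn
    obtain ⟨t, _, ht⟩ := this (show s ∈ _ from
      ⟨by linarith [neg_abs_le s], by linarith [le_abs_self s]⟩)
    exact ⟨t, ht⟩
  let e := StrictMono.orderIsoOfSurjective σ hmono hsurj
  have he : ∀ t, e.symm (σ t) = t := fun t => e.symm_apply_apply t
  have he' : ∀ s, σ (e.symm s) = s := fun s => e.apply_symm_apply s
  have hlipτ : LipschitzWith 2 e.symm := by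
    refine LipschitzWith.of_dist_le_mul fun a b => ?_
    simp only [NNReal.coe_ofNat, Real.dist_eq]
    rcases le_total a b with h | h
    · have h' := e.symm.monotone h
      have := hlow _ _ h'
      rw [he', he'] at this
      rw [abs_sub_comm, abs_sub_comm a, abs_of_nonneg (by linarith), abs_of_nonneg (by linarith)]
      linarith
    · have h' := e.symm.monotone h
      have := hlow _ _ h'
      rw [he', he'] at this
      rw [abs_of_nonneg (by linarith), abs_of_nonneg (by linarith)]
      linarith
  have htr : ∀ Q : ℝ → Prop, (∀ᵐ t, Q t) → ∀ᵐ s, Q (e.symm s) := by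
    intro Q hQ
    rw [ae_iff] at hQ ⊢
    have h := hlip.hausdorffMeasure_image_le (d := 1) zero_le_one {a | ¬ Q a}
    rw [hausdorffMeasure_real, hQ, mul_zero] at h
    refine measure_mono_null ?_ (le_antisymm h (zero_le))
    intro s hs
    exact ⟨e.symm s, hs, he' s⟩
  refine ⟨e.symm, hlipτ, e.symm.strictMono, he, htr, ?_⟩
  filter_upwards [htr _ (LocallyIntegrable.ae_hasDerivAt_integral hloc)] with s hs
  refine HasDerivAt.of_local_left_inverse hlipτ.continuous.continuousAt (hs 0) ?_
    (Filter.Eventually.of_forall he')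
  have := h2 (e.symm s)
  linarith

/-- If the control of an admissible trajectory satisfies `max (|u1|,|u2|) < 1` on a
set of positive measure, the trajectory is not time-optimal: its endpoint can be
reached in a strictly smaller time. -/
theorem nonmaximal_control_not_optimal
    (T : ℝ) (hT : 0 ≤ T) (x y z v w u1 u2 : ℝ → ℝ) (q1 : ℝ × ℝ × ℝ × ℝ × ℝ)
    (htraj : IsAdmissible T x y z v w u1 u2)
    (hstart : (x 0, y 0, z 0, v 0, w 0) = (0, 0, 0, 0, 0))
    (hend : (x T, y T, z T, v T, w T) = q1)
    (hsmall : 0 < volume {t ∈ Icc (0:ℝ) T | max |u1 t| |u2 t| < 1}) :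
    ∃ T' : ℝ, T' < T ∧ Reach q1 T' := by
  obtain ⟨⟨K, hK⟩, hm1, hm2, hae⟩ := htraj
  set r : ℝ → ℝ := fun t => min 1 (max (max |u1 t| |u2 t|) (1/2)) with hr
  have hrm : Measurable r := by
    have e1 : Measurable fun t => |u1 t| := hm1.abs
    have e2 : Measurable fun t => |u2 t| := hm2.abs
    exact measurable_const.min ((e1.max e2).max measurable_const)
  have h1 : ∀ t, r t ≤ 1 := fun t => min_le_left _ _
  have h2 : ∀ t, 1/2 ≤ r t := fun t => le_min (by norm_num) (le_max_right _ _)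
  obtain ⟨τ, hτL, hτm, hτσ, hτae, hτd⟩ := reparam_exists r hrm h1 h2
  have hint : IntervalIntegrable r volume 0 T := by
    refine (intervalIntegrable_const (c := (1:ℝ))).mono_fun hrm.aestronglyMeasurable ?_
    refine Filter.Eventually.of_forall fun t => ?_
    have := h1 t; have := h2 t
    simp only [Real.norm_eq_abs]
    rw [abs_of_nonneg (by linarith)]; simpa
  have hτ0 : τ 0 = 0 := by simpa using hτσ 0
  have hτT := hτσ T
  refine ⟨∫ s in (0:ℝ)..T, r s, ?_, ?_, ?_⟩
  · have := intervalIntegral.integral_lt_integral_of_ae_le_of_measure_setOfPred_lt_ne_zero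
      (μ := volume) hT hint (intervalIntegrable_const (c := (1:ℝ)))
      (Filter.Eventually.of_forall h1) ?_
    · simpa using this
    · rw [Measure.restrict_congr_set Ioc_ae_eq_Icc, Measure.restrict_apply' measurableSet_Icc]
      refine (lt_of_lt_of_le hsmall (measure_mono ?_)).ne'
      rintro t ⟨ht, hlt⟩
      refine ⟨?_, ht⟩
      show r t < 1
      exact min_lt_of_right_lt (max_lt hlt (by norm_num))
  · exact intervalIntegral.integral_nonneg hT fun t _ => by linarith [h2 t]
  set T' := ∫ s in (0:ℝ)..T, r s
  have hmaps : ∀ s ∈ Icc 0 T', τ s ∈ Icc 0 T := fun s hs =>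
    ⟨hτ0 ▸ hτm.monotone hs.1, hτT ▸ hτm.monotone hs.2⟩
  refine ⟨x ∘ τ, y ∘ τ, z ∘ τ, v ∘ τ, w ∘ τ, fun s => u1 (τ s) * (r (τ s))⁻¹,
    fun s => u2 (τ s) * (r (τ s))⁻¹, ⟨⟨K * 2, ?_⟩, ?_, ?_, ?_⟩, ?_, ?_⟩
  · exact hK.comp hτL.lipschitzOnWith hmaps
  · exact (hm1.comp hτL.continuous.measurable).mul (hrm.comp hτL.continuous.measurable).inv
  · exact (hm2.comp hτL.continuous.measurable).mul (hrm.comp hτL.continuous.measurable).inv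
  · rw [ae_restrict_iff' measurableSet_Icc] at hae ⊢
    filter_upwards [hτae _ hae, hτd] with s hs hd hsI
    obtain ⟨hle, hx, hy, hz, hv, hw⟩ := hs (hmaps s hsI)
    have hrpos : 0 < r (τ s) := by linarith [h2 (τ s)]
    have hmr : max |u1 (τ s)| |u2 (τ s)| ≤ r (τ s) := le_min hle (le_max_left _ _)
    refine ⟨?_, ?_, ?_, ?_, ?_, ?_⟩
    · simp only [← div_eq_mul_inv, abs_div, abs_of_pos hrpos]
      exact max_le ((div_le_one hrpos).2 ((le_max_left _ _).trans hmr))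
        ((div_le_one hrpos).2 ((le_max_right _ _).trans hmr))
    · exact hx.comp s hd
    · exact hy.comp s hd
    · refine (hz.comp s hd).congr_deriv ?_
      simp only [Function.comp]; ring
    · refine (hv.comp s hd).congr_deriv ?_
      simp only [Function.comp]; ring
    · refine (hw.comp s hd).congr_deriv ?_
      simp only [Function.comp]; ring
  · simp only [Function.comp, hτ0]; exact hstart
  · simp only [Function.comp, hτT]; exact hend
end

section
/- Let h : [0,T] → ℝ⁵ be Lipschitz and u = (u1,u2) measurable with max(|u1|,|u2|) ≤ 1 a.e., satisfying the vertical subsystem and the maximality condition u1·h1 + u2·h2 = |h1| + |h2| a.e., and suppose |h1(t)| + |h2(t)| > 0 for all t (normal case). If h1(t) = 0 for all t in an open interval I ⊆ [0,T] (h1-singular arc), then on I: h3 ≡ 0; h2 is a nonzero constant; u2(t) = s2 := sgn(h2) for a.e. t ∈ I; and exactly one of the following holds: (a) h4 = h5 = 0 on I (and u1 is only restricted by |u1| ≤ 1), or (b) h4 ≠ 0 on I, |h5/h4| ≤ 1, and u1(t) = −s2·h5/h4 for a.e. t ∈ I. -/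
open MeasureTheory Set

/-- The vertical subsystem of the Pontryagin maximum principle for the Cartan
control system. -/
def VertOde (h1 h2 h3 h4 h5 u1 u2 : ℝ → ℝ) (t : ℝ) : Prop :=
  HasDerivAt h1 (-(u2 t) * h3 t) t ∧ HasDerivAt h2 (u1 t * h3 t) t ∧
  HasDerivAt h3 (u1 t * h4 t + u2 t * h5 t) t ∧
  HasDerivAt h4 0 t ∧ HasDerivAt h5 0 t

/-- A Lipschitz solution of the vertical subsystem on `[0,T]` with measurable control. -/
def IsVertSol (T : ℝ) (h1 h2 h3 h4 h5 u1 u2 : ℝ → ℝ) : Prop :=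
  (∃ K, LipschitzOnWith K (fun t => (h1 t, h2 t, h3 t, h4 t, h5 t)) (Icc 0 T)) ∧
  Measurable u1 ∧ Measurable u2 ∧
  (∀ᵐ t ∂(volume.restrict (Icc 0 T)), VertOde h1 h2 h3 h4 h5 u1 u2 t)

theorem const_aux (K : NNReal) (f : ℝ → ℝ) (a b : ℝ) (hf : LipschitzOnWith K f (Ioo a b))
    (hd : ∀ᵐ t ∂(volume.restrict (Ioo a b)), HasDerivAt f 0 t) :
    ∀ x ∈ Ioo a b, ∀ y ∈ Ioo a b, f x = f y := by
  intro x hx y hy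
  have hsub : uIcc x y ⊆ Ioo a b := by
    intro z hz
    rw [mem_uIcc] at hz
    simp only [mem_Ioo] at *
    grind
  have hac := (hf.mono hsub).absolutelyContinuousOnInterval
  obtain ⟨C, hC⟩ := hac.const_of_ae_hasDerivAt_zero (by
    rw [ae_restrict_iff' measurableSet_Ioo] at hd
    filter_upwards [hd] with t ht hm
    exact ht (hsub hm))
  rw [hC _ left_mem_uIcc, hC _ right_mem_uIcc]

/-- Characterization of `h1`-singular normal arcs. -/
theorem h1_singular_arc_structure
    (T a b : ℝ) (h1 h2 h3 h4 h5 u1 u2 : ℝ → ℝ)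
    (hsol : IsVertSol T h1 h2 h3 h4 h5 u1 u2)
    (hbound : ∀ᵐ t ∂(volume.restrict (Icc 0 T)), max |u1 t| |u2 t| ≤ 1)
    (hmax : ∀ᵐ t ∂(volume.restrict (Icc 0 T)),
      u1 t * h1 t + u2 t * h2 t = |h1 t| + |h2 t|)
    (hnormal : ∀ t ∈ Icc (0:ℝ) T, 0 < |h1 t| + |h2 t|)
    (hab : a < b) (hI : Ioo a b ⊆ Icc (0:ℝ) T)
    (hsing : ∀ t ∈ Ioo a b, h1 t = 0) :
    (∀ t ∈ Ioo a b, h3 t = 0) ∧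
    (∃ c : ℝ, c ≠ 0 ∧ ∀ t ∈ Ioo a b, h2 t = c) ∧
    (∀ᵐ t ∂(volume.restrict (Ioo a b)), u2 t = Real.sign (h2 t)) ∧
    ((∀ t ∈ Ioo a b, h4 t = 0 ∧ h5 t = 0) ∨
      ((∀ t ∈ Ioo a b, h4 t ≠ 0 ∧ |h5 t / h4 t| ≤ 1) ∧
        (∀ᵐ t ∂(volume.restrict (Ioo a b)),
          u1 t = -(Real.sign (h2 t)) * (h5 t / h4 t)))) := by
  obtain ⟨⟨K, hK⟩, -, -, hode⟩ := hsol
  replace hK := hK.mono hI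
  have hode := ae_restrict_of_ae_restrict_of_subset hI hode
  have hbound := ae_restrict_of_ae_restrict_of_subset hI hbound
  have hmax := ae_restrict_of_ae_restrict_of_subset hI hmax
  have hmem : ∀ᵐ t ∂(volume.restrict (Ioo a b)), t ∈ Ioo a b := ae_restrict_mem measurableSet_Ioo
  have L2 : LipschitzOnWith K h2 (Ioo a b) := by
    have := (LipschitzWith.prod_fst.comp LipschitzWith.prod_snd).comp_lipschitzOnWith hK
    rw [one_mul, one_mul] at this
    exact this
  have L3 : LipschitzOnWith K h3 (Ioo a b) := by
    have := (LipschitzWith.prod_fst.comp (LipschitzWith.prod_snd.comp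
      LipschitzWith.prod_snd)).comp_lipschitzOnWith hK
    simp only [one_mul] at this
    exact this
  have L4 : LipschitzOnWith K h4 (Ioo a b) := by
    have := (LipschitzWith.prod_fst.comp (LipschitzWith.prod_snd.comp (LipschitzWith.prod_snd.comp
      LipschitzWith.prod_snd))).comp_lipschitzOnWith hK
    simp only [one_mul] at this
    exact this
  have L5 : LipschitzOnWith K h5 (Ioo a b) := by
    have := (LipschitzWith.prod_snd.comp (LipschitzWith.prod_snd.comp (LipschitzWith.prod_snd.comp
      LipschitzWith.prod_snd))).comp_lipschitzOnWith hK
    simp only [one_mul] at this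
    exact this
  have hne : ∀ t ∈ Ioo a b, h2 t ≠ 0 := by
    intro t ht h0
    have := hnormal t (hI ht)
    rw [hsing t ht, h0] at this
    simp at this
  have hu2 : ∀ᵐ t ∂(volume.restrict (Ioo a b)), u2 t = Real.sign (h2 t) := by
    filter_upwards [hmax, hmem] with t h ht
    rw [hsing t ht] at h
    simp only [mul_zero, zero_add, abs_zero] at h
    rcases lt_or_gt_of_ne (hne t ht) with h' | h'
    · rw [Real.sign_of_neg h']
      rw [abs_of_neg h'] at h
      exact mul_right_cancel₀ (hne t ht) (by linarith)
    · rw [Real.sign_of_pos h']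
      rw [abs_of_pos h'] at h
      exact mul_right_cancel₀ (hne t ht) (by linarith)
  have hsne : ∀ t ∈ Ioo a b, Real.sign (h2 t) ≠ 0 := fun t ht h0 =>
    hne t ht (Real.sign_eq_zero_iff.mp h0)
  have z3 : ∀ t ∈ Ioo a b, h3 t = 0 := by
    have : h3 =ᵐ[volume.restrict (Ioo a b)] fun _ => (0:ℝ) := by
      filter_upwards [hode, hu2, hmem] with t h hu ht
      have e : HasDerivAt h1 0 t := (hasDerivAt_const t (0:ℝ)).congr_of_eventuallyEq (by
        filter_upwards [isOpen_Ioo.mem_nhds ht] with s hs using hsing s hs)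
      have := h.1.unique e
      rw [hu] at this
      have hs := hsne t ht
      simpa [hs] using this
    exact Measure.eqOn_Ioo_of_ae_eq volume this L3.continuousOn continuousOn_const
  have c2 := const_aux K h2 a b L2 (by
    filter_upwards [hode, hmem] with t h ht
    simpa [z3 t ht] using h.2.1)
  have c4 := const_aux K h4 a b L4 (by filter_upwards [hode] with t h using h.2.2.2.1)
  have c5 := const_aux K h5 a b L5 (by filter_upwards [hode] with t h using h.2.2.2.2)
  have hrel : ∀ᵐ t ∂(volume.restrict (Ioo a b)), u1 t * h4 t + Real.sign (h2 t) * h5 t = 0 := by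
    filter_upwards [hode, hu2, hmem] with t h hu ht
    have e : HasDerivAt h3 0 t := (hasDerivAt_const t (0:ℝ)).congr_of_eventuallyEq (by
      filter_upwards [isOpen_Ioo.mem_nhds ht] with s hs using z3 s hs)
    rw [← hu]
    exact h.2.2.1.unique e
  obtain ⟨m, hm⟩ : ∃ m, m ∈ Ioo a b := ⟨(a+b)/2, by constructor <;> linarith⟩
  have : (ae (volume.restrict (Ioo a b))).NeBot := by
    rw [ae_neBot, Ne, Measure.restrict_eq_zero]
    simp [hab]
  refine ⟨z3, ⟨h2 m, hne m hm, fun t ht => c2 t ht m hm⟩, hu2, ?_⟩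
  obtain ⟨p, hp, hpr, hpb⟩ := (hmem.and (hrel.and hbound)).exists
  by_cases h0 : h4 m = 0
  · left
    intro t ht
    have e4 : h4 p = 0 := (c4 p hp m hm).trans h0
    refine ⟨(c4 t ht m hm).trans h0, (c5 t ht p hp).trans ?_⟩
    rw [e4] at hpr
    simpa [hsne p hp] using hpr
  · right
    have n4 : ∀ t ∈ Ioo a b, h4 t ≠ 0 := fun t ht => by rw [c4 t ht m hm]; exact h0
    refine ⟨fun t ht => ⟨n4 t ht, ?_⟩, ?_⟩
    · rw [c4 t ht p hp, c5 t ht p hp, abs_div, div_le_one (abs_pos.mpr (n4 p hp))]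
      have hs : |Real.sign (h2 p)| = 1 := by
        rcases lt_or_gt_of_ne (hne p hp) with h' | h'
        · simp [Real.sign_of_neg h']
        · simp [Real.sign_of_pos h']
      have e : |u1 p| * |h4 p| = |h5 p| := by
        rw [← abs_mul, eq_neg_of_add_eq_zero_left hpr, abs_neg, abs_mul, hs, one_mul]
      rw [← e]
      exact mul_le_of_le_one_left (abs_nonneg _) ((le_max_left _ _).trans hpb)
    · filter_upwards [hrel, hmem] with t h ht
      have := n4 t ht
      field_simp
      linarith
end

section
/- Let h : [0,T] → ℝ⁵ be Lipschitz and u = (u1,u2) measurable with max(|u1|,|u2|) ≤ 1 a.e., satisfying the vertical subsystem and the maximality condition u1·h1 + u2·h2 = |h1| + |h2| a.e., and suppose |h1(t)| + |h2(t)| > 0 for all t (normal case). If h2(t) = 0 for all t in an open interval I ⊆ [0,T] (h2-singular arc), then on I: h3 ≡ 0; h1 is a nonzero constant; u1(t) = s1 := sgn(h1) for a.e. t ∈ I; and exactly one of the following holds: (a) h4 = h5 = 0 on I (and u2 is only restricted by |u2| ≤ 1), or (b) h5 ≠ 0 on I, |h4/h5| ≤ 1, and u2(t) = −s1·h4/h5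 for a.e. t ∈ I. -/
open MeasureTheory Set

lemma const_of_lip_ae {f : ℝ → ℝ} {a b : ℝ} {K : NNReal}
    (hf : LipschitzOnWith K f (Ioo a b))
    (hd : ∀ᵐ t ∂(volume.restrict (Ioo a b)), HasDerivAt f 0 t) :
    ∀ x ∈ Ioo a b, ∀ y ∈ Ioo a b, f x = f y := by
  intro x hx y hy
  have hsub : uIcc x y ⊆ Ioo a b := (ordConnected_Ioo).uIcc_subset hx hy
  have hac := (hf.mono hsub).absolutelyContinuousOnInterval
  have hd' := (ae_restrict_iff' measurableSet_Ioo).1 hd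
  obtain ⟨C, hC⟩ := hac.const_of_ae_hasDerivAt_zero (by
    filter_upwards [hd'] with t ht hm
    exact ht (hsub hm))
  rw [hC x left_mem_uIcc, hC y right_mem_uIcc]

/-- Characterization of `h2`-singular normal arcs. -/
theorem h2_singular_arc_structure
    (T a b : ℝ) (h1 h2 h3 h4 h5 u1 u2 : ℝ → ℝ)
    (hsol : IsVertSol T h1 h2 h3 h4 h5 u1 u2)
    (hbound : ∀ᵐ t ∂(volume.restrict (Icc 0 T)), max |u1 t| |u2 t| ≤ 1)
    (hmax : ∀ᵐ t ∂(volume.restrict (Icc 0 T)),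
      u1 t * h1 t + u2 t * h2 t = |h1 t| + |h2 t|)
    (hnormal : ∀ t ∈ Icc (0:ℝ) T, 0 < |h1 t| + |h2 t|)
    (hab : a < b) (hI : Ioo a b ⊆ Icc (0:ℝ) T)
    (hsing : ∀ t ∈ Ioo a b, h2 t = 0) :
    (∀ t ∈ Ioo a b, h3 t = 0) ∧
    (∃ c : ℝ, c ≠ 0 ∧ ∀ t ∈ Ioo a b, h1 t = c) ∧
    (∀ᵐ t ∂(volume.restrict (Ioo a b)), u1 t = Real.sign (h1 t)) ∧
    ((∀ t ∈ Ioo a b, h4 t = 0 ∧ h5 t = 0) ∨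
      ((∀ t ∈ Ioo a b, h5 t ≠ 0 ∧ |h4 t / h5 t| ≤ 1) ∧
        (∀ᵐ t ∂(volume.restrict (Ioo a b)),
          u2 t = -(Real.sign (h1 t)) * (h4 t / h5 t)))) := by
  obtain ⟨⟨K, hK⟩, -, -, hode⟩ := hsol
  have hle : volume.restrict (Ioo a b) ≤ volume.restrict (Icc 0 T) :=
    Measure.restrict_mono hI le_rfl
  replace hK := hK.mono hI
  have L1 : LipschitzOnWith K h1 (Ioo a b) := by
    simpa [Function.comp_def] using LipschitzWith.prod_fst.comp_lipschitzOnWith hK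
  have M1 : LipschitzOnWith K (fun t => (h2 t, h3 t, h4 t, h5 t)) (Ioo a b) := by
    simpa [Function.comp_def] using LipschitzWith.prod_snd.comp_lipschitzOnWith hK
  have M2 : LipschitzOnWith K (fun t => (h3 t, h4 t, h5 t)) (Ioo a b) := by
    simpa [Function.comp_def] using LipschitzWith.prod_snd.comp_lipschitzOnWith M1
  have L3 : LipschitzOnWith K h3 (Ioo a b) := by
    simpa [Function.comp_def] using LipschitzWith.prod_fst.comp_lipschitzOnWith M2
  have M3 : LipschitzOnWith K (fun t => (h4 t, h5 t)) (Ioo a b) := by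
    simpa [Function.comp_def] using LipschitzWith.prod_snd.comp_lipschitzOnWith M2
  have L4 : LipschitzOnWith K h4 (Ioo a b) := by
    simpa [Function.comp_def] using LipschitzWith.prod_fst.comp_lipschitzOnWith M3
  have L5 : LipschitzOnWith K h5 (Ioo a b) := by
    simpa [Function.comp_def] using LipschitzWith.prod_snd.comp_lipschitzOnWith M3
  replace hode := ae_mono hle hode
  replace hbound := ae_mono hle hbound
  replace hmax := ae_mono hle hmax
  have hmem : ∀ᵐ t ∂(volume.restrict (Ioo a b)), t ∈ Ioo a b :=
    ae_restrict_mem measurableSet_Ioo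
  have h1ne : ∀ t ∈ Ioo a b, h1 t ≠ 0 := by
    intro t ht h0
    have := hnormal t (hI ht)
    simp [h0, hsing t ht] at this
  have hzero : ∀ f : ℝ → ℝ, (∀ t ∈ Ioo a b, f t = 0) → ∀ t ∈ Ioo a b, ∀ d,
      HasDerivAt f d t → d = 0 := by
    intro f hf t ht d hd
    have : f =ᶠ[nhds t] fun _ => 0 :=
      Filter.eventuallyEq_of_mem (isOpen_Ioo.mem_nhds ht) hf
    exact hd.unique ((hasDerivAt_const t (0:ℝ)).congr_of_eventuallyEq this)
  have hu1 : ∀ᵐ t ∂(volume.restrict (Ioo a b)), u1 t = Real.sign (h1 t) := by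
    filter_upwards [hmax, hmem] with t hm ht
    rw [hsing t ht] at hm
    simp only [mul_zero, add_zero, abs_zero] at hm
    have hne := h1ne t ht
    apply mul_right_cancel₀ hne
    rw [hm]
    rcases lt_or_gt_of_ne hne with h | h
    · rw [Real.sign_of_neg h, abs_of_neg h]; ring
    · rw [Real.sign_of_pos h, abs_of_pos h]; ring
  have hsn : ∀ t ∈ Ioo a b, Real.sign (h1 t) ≠ 0 := fun t ht h0 =>
    h1ne t ht (Real.sign_eq_zero_iff.1 h0)
  have hss : ∀ t ∈ Ioo a b, |Real.sign (h1 t)| = 1 := fun t ht => by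
    rcases Real.sign_apply_eq_of_ne_zero _ (h1ne t ht) with h | h <;> simp [h]
  have h3z : ∀ t ∈ Ioo a b, h3 t = 0 := by
    refine Measure.eqOn_open_of_ae_eq (μ := volume) (g := fun _ => (0:ℝ)) ?_ isOpen_Ioo
      L3.continuousOn continuousOn_const
    filter_upwards [hode, hmem, hu1] with t ho ht hu
    have := hzero h2 hsing t ht _ ho.2.1
    rw [hu] at this
    exact (mul_eq_zero.1 this).resolve_left (hsn t ht)
  have c1 := const_of_lip_ae L1 (by
    filter_upwards [hode, hmem] with t ho ht
    simpa [h3z t ht] using ho.1)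
  have c4 := const_of_lip_ae L4 (by
    filter_upwards [hode] with t ho using ho.2.2.2.1)
  have c5 := const_of_lip_ae L5 (by
    filter_upwards [hode] with t ho using ho.2.2.2.2)
  have hm : (a + b) / 2 ∈ Ioo a b := ⟨by linarith, by linarith⟩
  have hrel : ∀ᵐ t ∂(volume.restrict (Ioo a b)),
      Real.sign (h1 t) * h4 t + u2 t * h5 t = 0 := by
    filter_upwards [hode, hmem, hu1] with t ho ht hu
    rw [← hu]
    exact hzero h3 h3z t ht _ ho.2.2.1
  have : (ae (volume.restrict (Ioo a b))).NeBot := by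
    rw [ae_restrict_neBot]
    simp [hab]
  refine ⟨h3z, ⟨h1 ((a+b)/2), h1ne _ hm, fun t ht => c1 t ht _ hm⟩, hu1, ?_⟩
  obtain ⟨t0, hr0, ht0, hb0⟩ := (hrel.and (hmem.and hbound)).exists
  by_cases h50 : h5 t0 = 0
  · left
    intro t ht
    rw [c4 t ht t0 ht0, c5 t ht t0 ht0]
    refine ⟨?_, h50⟩
    rw [h50, mul_zero, add_zero] at hr0
    exact (mul_eq_zero.1 hr0).resolve_left (hsn t0 ht0)
  · right
    refine ⟨fun t ht => ?_, ?_⟩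
    · rw [c4 t ht t0 ht0, c5 t ht t0 ht0]
      refine ⟨h50, ?_⟩
      rw [abs_div, div_le_one (abs_pos.2 h50)]
      have e : Real.sign (h1 t0) * h4 t0 = -(u2 t0 * h5 t0) := by linarith
      have e2 := congrArg abs e
      rw [abs_mul, hss t0 ht0, one_mul, abs_neg, abs_mul] at e2
      rw [e2]
      exact mul_le_of_le_one_left (abs_nonneg _) ((le_max_right _ _).trans hb0)
    · filter_upwards [hrel, hmem] with t hr ht
      have h5t : h5 t ≠ 0 := by rw [c5 t ht t0 ht0]; exact h50
      field_simp
      linarith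
end

section
/- Let c4, c5 ∈ ℝ and let (f, g) : [a,b] → ℝ² be a Lipschitz curve satisfying for a.e. t: f'(t) = −g(t) and g'(t) = c4·sgn(f(t)) + c5. Then the function t ↦ g(t)²/2 + c5·f(t) + c4·|f(t)| is constant on [a,b]. -/
open MeasureTheory Set

/-- First integral of the reduced vertical subsystem `f' = −g`, `g' = c4·sgn f + c5`:
the function `g²/2 + c5·f + c4·|f|` is constant along Lipschitz solutions. -/
theorem reduced_system_first_integral
    (a b c4 c5 : ℝ) (f g : ℝ → ℝ)
    (hlip : ∃ K, LipschitzOnWith K (fun t => (f t, g t)) (Icc a b))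
    (hode : ∀ᵐ t ∂(volume.restrict (Icc a b)),
      HasDerivAt f (-(g t)) t ∧ HasDerivAt g (c4 * Real.sign (f t) + c5) t) :
    ∀ s ∈ Icc a b, ∀ t ∈ Icc a b,
      g s ^ 2 / 2 + c5 * f s + c4 * |f s| = g t ^ 2 / 2 + c5 * f t + c4 * |f t| := by
  intro s hs t ht
  have hab : a ≤ b := hs.1.trans hs.2
  obtain ⟨K, hK⟩ := hlip
  rw [← uIcc_of_le hab] at hK hs ht hode
  have hf : LipschitzOnWith K f (uIcc a b) := by
    simpa [Function.comp_def] using LipschitzWith.prod_fst.comp_lipschitzOnWith hK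
  have hg : LipschitzOnWith K g (uIcc a b) := by
    simpa [Function.comp_def] using LipschitzWith.prod_snd.comp_lipschitzOnWith hK
  have habs : LipschitzOnWith K (fun x => |f x|) (uIcc a b) := by
    simpa [Function.comp_def] using (lipschitzWith_one_norm (E := ℝ)).comp_lipschitzOnWith hf
  have Af := hf.absolutelyContinuousOnInterval
  have Ag := hg.absolutelyContinuousOnInterval
  have Aabs := habs.absolutelyContinuousOnInterval
  have A := ((((Ag.mul Ag).const_mul (1/2)).add (Af.const_mul c5)).add (Aabs.const_mul c4))
  have hd := Aabs.ae_differentiableAt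
  rw [ae_restrict_iff' measurableSet_uIcc] at hode
  obtain ⟨C, hC⟩ := A.const_of_ae_hasDerivAt_zero (by
    filter_upwards [hode, hd] with x h1 h2 hx
    obtain ⟨hf', hg'⟩ := h1 hx
    have key : HasDerivAt (fun x => |f x|) (Real.sign (f x) * (-(g x))) x := by
      rcases lt_trichotomy (f x) 0 with h | h | h
      · rw [Real.sign_of_neg h]
        exact (hasDerivAt_abs_neg h).comp x hf'
      · have hm : IsLocalMin (fun x => |f x|) x :=
          Filter.Eventually.of_forall fun y => by simp [h]
        have := (h2 hx).hasDerivAt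
        rw [hm.deriv_eq_zero] at this
        simpa [h] using this
      · rw [Real.sign_of_pos h]
        exact (hasDerivAt_abs_pos h).comp x hf'
    have := (((hg'.mul hg').const_mul (1/2)).add (hf'.const_mul c5)).add (key.const_mul c4)
    convert! this using 1
    ring)
  have h1 := hC s hs
  have h2 := hC t ht
  simp only [Pi.add_apply, Pi.mul_apply] at h1 h2
  linarith
end

section
/- Let x : [0,1] → ℝ be a Lipschitz function with x(0) = 0 and |x'(t)| ≤ 1 for a.e. t, and set x1 = x(1) and z1 = ∫₀¹ x(t) dt − x1/2. Then |z1| ≤ (1 − x1²)/4. Moreover the bound is sharp: for every x1 ∈ [−1,1] and every z1 with |z1| ≤ (1 − x1²)/4 there exists such a function x realizing these values of x(1) and ∫₀¹ x dt − x(1)/2. -/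
open MeasureTheory Set

/-- `x : [0,1] → ℝ` is Lipschitz with `x(0) = 0` and a.e. derivative `u` with `|u| ≤ 1`. -/
def AdmissibleX (x u : ℝ → ℝ) : Prop :=
  (∃ K, LipschitzOnWith K x (Icc (0:ℝ) 1)) ∧ Measurable u ∧
  (∀ᵐ t ∂(volume.restrict (Icc (0:ℝ) 1)), |u t| ≤ 1 ∧ HasDerivAt x (u t) t) ∧
  x 0 = 0

lemma adm_lip {x u : ℝ → ℝ} (h : AdmissibleX x u) {s t : ℝ} (hs : 0 ≤ s) (hst : s ≤ t)
    (ht : t ≤ 1) : |x t - x s| ≤ t - s := by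
  obtain ⟨⟨K, hK⟩, -, hae, -⟩ := h
  have hsub : uIcc s t ⊆ Icc (0:ℝ) 1 := by
    rw [uIcc_of_le hst]; exact Icc_subset_Icc hs ht
  have hac := (hK.mono hsub).absolutelyContinuousOnInterval
  rw [← hac.integral_deriv_eq_sub]
  rw [ae_restrict_iff' measurableSet_Icc] at hae
  have := intervalIntegral.norm_integral_le_of_norm_le_const_ae (a := s) (b := t) (C := 1)
    (f := deriv x) (by
      filter_upwards [hae] with r hr hr2
      obtain ⟨h1, h2⟩ := hr (hsub (uIoc_subset_uIcc hr2))
      rw [h2.deriv]; exact h1)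
  rw [abs_of_nonneg (sub_nonneg.2 hst), one_mul] at this
  exact this

lemma upper_half {x : ℝ → ℝ} (hc : ContinuousOn x (Icc (0:ℝ) 1)) (h0 : x 0 = 0)
    (hl : ∀ s t : ℝ, 0 ≤ s → s ≤ t → t ≤ 1 → |x t - x s| ≤ t - s) :
    (∫ t in (0:ℝ)..1, x t) - x 1 / 2 ≤ (1 - x 1 ^ 2) / 4 := by
  have h1 := abs_le.1 (hl 0 1 le_rfl zero_le_one le_rfl)
  rw [h0] at h1
  obtain ⟨c, hcdef⟩ : ∃ c, c = (1 + x 1) / 2 := ⟨_, rfl⟩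
  have hc0 : 0 ≤ c := by linarith
  have hc1 : c ≤ 1 := by linarith
  have i1 : IntervalIntegrable x volume 0 c := by
    apply ContinuousOn.intervalIntegrable
    rw [uIcc_of_le hc0]; exact hc.mono (Icc_subset_Icc le_rfl hc1)
  have i2 : IntervalIntegrable x volume c 1 := by
    apply ContinuousOn.intervalIntegrable
    rw [uIcc_of_le hc1]; exact hc.mono (Icc_subset_Icc hc0 le_rfl)
  have a1 : ∫ t in (0:ℝ)..c, x t ≤ ∫ t in (0:ℝ)..c, t := by
    apply intervalIntegral.integral_mono_on hc0 i1 intervalIntegral.intervalIntegrable_id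
    intro t ht
    have := abs_le.1 (hl 0 t le_rfl ht.1 (ht.2.trans hc1))
    linarith
  have a2 : ∫ t in c..1, x t ≤ ∫ t in c..1, ((x 1 + 1) - t) := by
    apply intervalIntegral.integral_mono_on hc1 i2
      ((by fun_prop : Continuous fun t : ℝ => (x 1 + 1) - t).intervalIntegrable _ _)
    intro t ht
    have := abs_le.1 (hl t 1 (hc0.trans ht.1) ht.2 le_rfl)
    linarith
  rw [integral_id] at a1
  rw [intervalIntegral.integral_sub (by simp) intervalIntegral.intervalIntegrable_id,
    integral_id, intervalIntegral.integral_const, smul_eq_mul] at a2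
  rw [← intervalIntegral.integral_add_adjacent_intervals i1 i2]
  have hx : x 1 = 2 * c - 1 := by linarith
  rw [hx] at a2 ⊢
  nlinarith

lemma int_abs (c : ℝ) (h0 : 0 ≤ c) (h1 : c ≤ 1) :
    ∫ t in (0:ℝ)..1, |t - c| = (c ^ 2 + (1 - c) ^ 2) / 2 := by
  have hco : Continuous fun t : ℝ => |t - c| := by fun_prop
  rw [← intervalIntegral.integral_add_adjacent_intervals (hco.intervalIntegrable 0 c)
    (hco.intervalIntegrable c 1)]
  have e1 : ∫ t in (0:ℝ)..c, |t - c| = ∫ t in (0:ℝ)..c, (c - t) := by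
    apply intervalIntegral.integral_congr
    intro t ht
    rw [uIcc_of_le h0] at ht
    simp only
    rw [abs_of_nonpos (by linarith [ht.2])]; ring
  have e2 : ∫ t in c..1, |t - c| = ∫ t in c..1, (t - c) := by
    apply intervalIntegral.integral_congr
    intro t ht
    rw [uIcc_of_le h1] at ht
    simp only
    rw [abs_of_nonneg (by linarith [ht.1])]
  rw [e1, e2, intervalIntegral.integral_sub (by simp) intervalIntegral.intervalIntegrable_id,
    intervalIntegral.integral_sub intervalIntegral.intervalIntegrable_id (by simp)]
  simp only [integral_id, intervalIntegral.integral_const, smul_eq_mul]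
  ring

lemma deriv_abs_sub {c t : ℝ} (h : t ≠ c) :
    HasDerivAt (fun t => |t - c|) (if t < c then -1 else 1) t := by
  rcases h.lt_or_gt with h | h
  · rw [if_pos h]
    simpa using (hasDerivAt_abs_neg (sub_neg.2 h)).comp_sub_const t c
  · rw [if_neg h.not_gt]
    simpa using (hasDerivAt_abs_pos (sub_pos.2 h)).comp_sub_const t c

lemma lip_abs_sub (c : ℝ) : LipschitzWith 1 (fun t : ℝ => |t - c|) := by
  apply LipschitzWith.of_dist_le_mul
  intro s t
  simp only [Real.dist_eq, NNReal.coe_one, one_mul]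
  refine (abs_abs_sub_abs_le _ _).trans (le_of_eq ?_)
  congr 1; ring

/-- The exact range of `z1 = ∫₀¹ x − x(1)/2` over Lipschitz functions with `x(0)=0`,
`|x'| ≤ 1` a.e. and prescribed endpoint `x1 = x(1)`: the bound `|z1| ≤ (1 − x1²)/4`
holds and is sharp. -/
theorem z_coordinate_range :
    (∀ x u : ℝ → ℝ, AdmissibleX x u →
      |(∫ t in (0:ℝ)..1, x t) - x 1 / 2| ≤ (1 - x 1 ^ 2) / 4) ∧
    (∀ x1 z1 : ℝ, x1 ∈ Icc (-1:ℝ) 1 → |z1| ≤ (1 - x1 ^ 2) / 4 →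
      ∃ x u : ℝ → ℝ, AdmissibleX x u ∧ x 1 = x1 ∧
        (∫ t in (0:ℝ)..1, x t) - x 1 / 2 = z1) := by
  constructor
  · intro x u h
    have hl := fun s t (hs : 0 ≤ s) (hst : s ≤ t) (ht : t ≤ 1) => adm_lip h hs hst ht
    obtain ⟨⟨K, hK⟩, -, -, h0⟩ := h
    have A := upper_half hK.continuousOn h0 hl
    have B := upper_half (x := fun t => - x t) hK.continuousOn.neg (by simp [h0]) (by
      intro s t a b c
      have := hl s t a b c
      rw [abs_sub_comm] at this
      convert! this using 2
      ring)
    rw [intervalIntegral.integral_neg] at B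
    rw [abs_le]
    constructor <;> nlinarith
  · intro x1 z1 hx hz
    obtain ⟨l, hl0, hl1, hl⟩ : ∃ l : ℝ, 0 ≤ l ∧ l ≤ 1 ∧
        (2 * l - 1) * ((1 - x1 ^ 2) / 4) = z1 := by
      have hz' := abs_le.1 hz
      rcases eq_or_lt_of_le ((abs_nonneg z1).trans hz) with h | h
      · refine ⟨1, by norm_num, le_rfl, ?_⟩
        rw [← h] at hz' ⊢; linarith
      · refine ⟨(z1 / ((1 - x1 ^ 2) / 4) + 1) / 2, ?_, ?_, ?_⟩
        · have : -1 ≤ z1 / ((1 - x1 ^ 2) / 4) := by rw [le_div_iff₀ h]; linarith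
          linarith
        · have : z1 / ((1 - x1 ^ 2) / 4) ≤ 1 := by rw [div_le_iff₀ h]; linarith
          linarith
        · have := div_mul_cancel₀ z1 h.ne'
          linarith
    obtain ⟨hxa, hxb⟩ := hx
    obtain ⟨c, hc⟩ : ∃ c, c = (1 + x1) / 2 := ⟨_, rfl⟩
    obtain ⟨d, hd⟩ : ∃ d, d = (1 - x1) / 2 := ⟨_, rfl⟩
    have hL : ∀ e : ℝ, Continuous fun t : ℝ => |t - e| := fun e => by fun_prop
    have hx1v : l * (c - |1 - c|) + (1 - l) * (|1 - d| - d) = x1 := by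
      rw [abs_of_nonneg (by linarith), abs_of_nonneg (by linarith), hc, hd]; ring
    refine ⟨fun t => l * (c - |t - c|) + (1 - l) * (|t - d| - d),
      fun t => l * (-(if t < c then -1 else 1)) + (1 - l) * (if t < d then -1 else 1),
      ⟨⟨2, ?_⟩, ?_, ?_, ?_⟩, hx1v, ?_⟩
    · apply LipschitzWith.lipschitzOnWith
      apply LipschitzWith.of_dist_le_mul
      intro s t
      have p := (lip_abs_sub c).dist_le_mul s t
      have q := (lip_abs_sub d).dist_le_mul s t
      simp only [Real.dist_eq, NNReal.coe_one, one_mul, NNReal.coe_ofNat] at p q ⊢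
      have hp := abs_le.1 p
      have hq := abs_le.1 q
      rw [abs_le]
      constructor <;> nlinarith [abs_nonneg (s - t)]
    · have m : ∀ e : ℝ, Measurable fun t : ℝ => (if t < e then (-1:ℝ) else 1) := fun e =>
        Measurable.ite measurableSet_Iio measurable_const measurable_const
      exact ((m c).neg.const_mul l).add ((m d).const_mul (1 - l))
    · apply ae_restrict_of_ae
      have n : ∀ e : ℝ, ∀ᵐ t : ℝ, t ≠ e := fun e => by
        simp [ae_iff]
      filter_upwards [n c, n d] with t h1 h2
      constructor
      · rw [abs_le]
        constructor <;> split_ifs <;> linarith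
      · exact (((deriv_abs_sub h1).const_sub c).const_mul l).add
          (((deriv_abs_sub h2).sub_const d).const_mul (1 - l))
    · simp only [zero_sub, abs_neg]
      rw [abs_of_nonneg (by linarith), abs_of_nonneg (by linarith)]; ring
    · simp only [hx1v]
      rw [intervalIntegral.integral_add
        ((by fun_prop : Continuous fun t : ℝ => l * (c - |t - c|)).intervalIntegrable _ _)
        ((by fun_prop : Continuous fun t : ℝ => (1 - l) * (|t - d| - d)).intervalIntegrable _ _),
        intervalIntegral.integral_const_mul, intervalIntegral.integral_const_mul,
        intervalIntegral.integral_sub (by simp) ((hL c).intervalIntegrable _ _),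
        intervalIntegral.integral_sub ((hL d).intervalIntegrable _ _) (by simp),
        int_abs c (by linarith) (by linarith), int_abs d (by linarith) (by linarith)]
      simp only [intervalIntegral.integral_const, smul_eq_mul]
      rw [← hl, hc, hd]; ring
end

section
/- Let x : [0,1] → ℝ be a Lipschitz function with x(0) = 0 and |x'(t)| ≤ 1 for a.e. t, set x1 = x(1), z1 = ∫₀¹ x(t) dt − x1/2, and w1 = −∫₀¹ x'(t)·(x(t)² + t²)/2 dt, and assume −1 < x1 < 1. Then −w_max(−x1, −z1) ≤ w1 ≤ w_max(x1, z1), where w_max(a,b) = (3 − 15a − 3a² − 17a³)/96 + b/2 − b²/(2(1+a)). -/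
open MeasureTheory Set

/-- The bounding function `w_max` for the `w`-coordinate of the attainable set. -/
noncomputable def wMax (a b : ℝ) : ℝ :=
  (3 - 15 * a - 3 * a ^ 2 - 17 * a ^ 3) / 96 + b / 2 - b ^ 2 / (2 * (1 + a))

theorem bump_bound (l r : ℝ) (hr : 0 < r) :
    ∫ t in (0:ℝ)..1, max ((r ^ 2 - (t - l) ^ 2) / 2) 0 ≤ 2 * r ^ 3 / 3 := by
  have hind : (fun t : ℝ => max ((r ^ 2 - (t - l) ^ 2) / 2) 0)
      = (Icc (l - r) (l + r)).indicator (fun t => (r ^ 2 - (t - l) ^ 2) / 2) := by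
    ext t
    by_cases ht : t ∈ Icc (l - r) (l + r)
    · rw [indicator_of_mem ht]
      apply max_eq_left
      have := mul_nonneg (sub_nonneg.2 ht.1) (sub_nonneg.2 ht.2)
      nlinarith
    · rw [indicator_of_notMem ht]
      apply max_eq_right
      by_contra! hc
      apply ht
      have := abs_le_of_sq_le_sq' (a := t - l) (b := r) (by linarith) hr.le
      exact ⟨by linarith [this.1], by linarith [this.2]⟩
  have hc : Continuous (fun t : ℝ => (r ^ 2 - (t - l) ^ 2) / 2) := by fun_prop
  have hint : Integrable (fun t : ℝ => max ((r ^ 2 - (t - l) ^ 2) / 2) 0) := by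
    rw [hind, integrable_indicator_iff measurableSet_Icc]
    exact hc.continuousOn.integrableOn_Icc
  rw [intervalIntegral.integral_of_le zero_le_one]
  refine (setIntegral_le_integral hint (Filter.Eventually.of_forall fun t => le_max_right _ _)).trans ?_
  rw [hind, integral_indicator measurableSet_Icc, integral_Icc_eq_integral_Ioc,
    ← intervalIntegral.integral_of_le (by linarith)]
  have hd : ∀ t ∈ uIcc (l - r) (l + r),
      HasDerivAt (fun t : ℝ => (r ^ 2 * t - (t - l) ^ 3 / 3) / 2) ((r ^ 2 - (t - l) ^ 2) / 2) t := by
    intro t _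
    have h := (((hasDerivAt_id t).const_mul (r ^ 2)).sub
      ((((hasDerivAt_id t).sub_const l).pow 3).div_const 3)).div_const 2
    convert! h using 1
    simp
  rw [intervalIntegral.integral_eq_sub_of_hasDerivAt hd (hc.intervalIntegrable _ _)]
  apply le_of_eq
  ring

theorem p_integral (l r : ℝ) :
    ∫ t in (0:ℝ)..1, (r ^ 2 - (t - l) ^ 2) / 2 = r ^ 2 / 2 - (1 - 3 * l + 3 * l ^ 2) / 6 := by
  have hc : Continuous (fun t : ℝ => (r ^ 2 - (t - l) ^ 2) / 2) := by fun_prop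
  have hd : ∀ t ∈ uIcc (0:ℝ) 1,
      HasDerivAt (fun t : ℝ => (r ^ 2 * t - (t - l) ^ 3 / 3) / 2) ((r ^ 2 - (t - l) ^ 2) / 2) t := by
    intro t _
    have h := (((hasDerivAt_id t).const_mul (r ^ 2)).sub
      ((((hasDerivAt_id t).sub_const l).pow 3).div_const 3)).div_const 2
    convert! h using 1
    simp
  rw [intervalIntegral.integral_eq_sub_of_hasDerivAt hd (hc.intervalIntegrable _ _)]
  ring

theorem admissible_neg (x u : ℝ → ℝ) (hx : AdmissibleX x u) :
    AdmissibleX (fun t => -x t) (fun t => -u t) := by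
  obtain ⟨⟨K, hK⟩, hu, hae, h0⟩ := hx
  refine ⟨⟨K, hK.neg⟩, hu.neg, ?_, by simp [h0]⟩
  filter_upwards [hae] with t ht
  exact ⟨by simpa using ht.1, ht.2.neg⟩

theorem dual_bound (x u : ℝ → ℝ) (hx : AdmissibleX x u) (l r : ℝ) (hr : 0 < r) :
    -(∫ t in (0:ℝ)..1, u t * ((x t) ^ 2 + t ^ 2) / 2) ≤
      4 * r ^ 3 / 3 - (r ^ 2 / 2 - (1 - 3 * l + 3 * l ^ 2) / 6) + l * (∫ t in (0:ℝ)..1, x t)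
        - ((x 1) ^ 3 / 6 + x 1 * (r ^ 2 / 2 - l ^ 2 / 2 + l)) := by
  obtain ⟨⟨K, hK⟩, hu, hae, h0⟩ := hx
  have hae' : ∀ᵐ t, t ∈ uIoc (0:ℝ) 1 → |u t| ≤ 1 ∧ HasDerivAt x (u t) t := by
    rw [ae_restrict_iff' measurableSet_Icc] at hae
    filter_upwards [hae] with t ht h
    rw [uIoc_of_le zero_le_one] at h
    exact ht ⟨h.1.le, h.2⟩
  have hxc : ContinuousOn x (uIcc 0 1) := by
    rw [uIcc_of_le zero_le_one]; exact hK.continuousOn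
  have hac : AbsolutelyContinuousOnInterval x 0 1 := by
    apply LipschitzOnWith.absolutelyContinuousOnInterval (K := K)
    rwa [uIcc_of_le zero_le_one]
  have hq : AbsolutelyContinuousOnInterval (fun t : ℝ => r ^ 2 / 2 - l ^ 2 / 2 + l * t) 0 1 := by
    apply LipschitzOnWith.absolutelyContinuousOnInterval (K := ‖l‖₊)
    apply LipschitzWith.lipschitzOnWith
    apply LipschitzWith.of_dist_le_mul
    intro s t
    rw [Real.dist_eq, Real.dist_eq, coe_nnnorm, Real.norm_eq_abs, ← abs_mul]
    apply le_of_eq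
    congr 1
    ring
  have hui : IntervalIntegrable u volume 0 1 := by
    refine (intervalIntegrable_const (c := (1:ℝ))).mono_fun hu.aestronglyMeasurable ?_
    rw [Filter.EventuallyLE, ae_restrict_iff' measurableSet_uIoc]
    filter_upwards [hae'] with t ht h
    simpa using (ht h).1
  have hG := (((hac.fun_mul (hac.fun_mul hac)).const_mul (1 / 6)).fun_add
    (hac.fun_mul hq)).integral_deriv_eq_sub
  have i1 : IntervalIntegrable (fun t => u t * ((x t) ^ 2 + t ^ 2) / 2) volume 0 1 := by
    have := hui.mul_continuousOn (g := fun t => ((x t) ^ 2 + t ^ 2) / 2) (by fun_prop)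
    simpa only [mul_div_assoc] using this
  have i2 : IntervalIntegrable (fun t => u t * ((r ^ 2 - (t - l) ^ 2) / 2)) volume 0 1 :=
    hui.mul_continuousOn (by fun_prop)
  have i3 : IntervalIntegrable (fun t => l * x t) volume 0 1 :=
    (hxc.intervalIntegrable).const_mul l
  have hcong : ∫ t in (0:ℝ)..1, (u t * ((x t) ^ 2 + t ^ 2) / 2
      + u t * ((r ^ 2 - (t - l) ^ 2) / 2) + l * x t)
      = (x 1) ^ 3 / 6 + x 1 * (r ^ 2 / 2 - l ^ 2 / 2 + l) := by
    trans
    swap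
    · refine hG.trans ?_
      simp only [h0]
      ring
    · apply intervalIntegral.integral_congr_ae
      filter_upwards [hae'] with t ht h
      have hd := (ht h).2
      have hl : HasDerivAt (fun t : ℝ => r ^ 2 / 2 - l ^ 2 / 2 + l * t) (l * 1) t :=
        ((hasDerivAt_id t).const_mul l).const_add _
      have hD := ((hd.fun_mul (hd.fun_mul hd)).const_mul (1 / 6)).fun_add (hd.fun_mul hl)
      refine Eq.trans ?_ hD.deriv.symm
      ring
  rw [intervalIntegral.integral_add (i1.add i2) i3, intervalIntegral.integral_add i1 i2,
    intervalIntegral.integral_const_mul] at hcong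
  have hp : IntervalIntegrable (fun t : ℝ => (r ^ 2 - (t - l) ^ 2) / 2) volume 0 1 :=
    (by fun_prop : Continuous _).intervalIntegrable _ _
  have hm : IntervalIntegrable (fun t : ℝ => 2 * max ((r ^ 2 - (t - l) ^ 2) / 2) 0) volume 0 1 :=
    (by fun_prop : Continuous _).intervalIntegrable _ _
  have hle : ∫ t in (0:ℝ)..1, u t * ((r ^ 2 - (t - l) ^ 2) / 2)
      ≤ ∫ t in (0:ℝ)..1, (2 * max ((r ^ 2 - (t - l) ^ 2) / 2) 0 - (r ^ 2 - (t - l) ^ 2) / 2) := by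
    apply intervalIntegral.integral_mono_ae_restrict zero_le_one i2 (hm.sub hp)
    filter_upwards [hae] with t ht
    obtain ⟨h1, h2⟩ := abs_le.1 ht.1
    generalize (r ^ 2 - (t - l) ^ 2) / 2 = p
    rcases le_total p 0 with hp | hp
    · simp only [max_eq_right hp]
      nlinarith
    · simp only [max_eq_left hp]
      nlinarith
  rw [intervalIntegral.integral_sub hm hp, intervalIntegral.integral_const_mul, p_integral] at hle
  have := bump_bound l r hr
  linarith

theorem upper_bound (x u : ℝ → ℝ) (hx : AdmissibleX x u) (hx1l : -1 < x 1) :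
    -(∫ t in (0:ℝ)..1, u t * ((x t) ^ 2 + t ^ 2) / 2)
        ≤ wMax (x 1) ((∫ t in (0:ℝ)..1, x t) - x 1 / 2) := by
  have h := dual_bound x u hx (1 / 2 - ((∫ t in (0:ℝ)..1, x t) - x 1 / 2) / (1 + x 1))
    ((1 + x 1) / 4) (by linarith)
  refine h.trans (le_of_eq ?_)
  unfold wMax
  have : 1 + x 1 ≠ 0 := by linarith
  field_simp
  ring

/-- Bounds on the coordinate `w1 = −∫₀¹ x'·(x² + t²)/2 dt` over the time-1 attainable
set of the Cartan system with `u2 ≡ 1`, in terms of `x1 = x(1)` and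
`z1 = ∫₀¹ x − x1/2`: one has `−w_max(−x1,−z1) ≤ w1 ≤ w_max(x1,z1)`. -/
theorem w_coordinate_bounds
    (x u : ℝ → ℝ) (hx : AdmissibleX x u)
    (hx1l : -1 < x 1) (hx1r : x 1 < 1) :
    -wMax (-(x 1)) (-((∫ t in (0:ℝ)..1, x t) - x 1 / 2))
        ≤ -(∫ t in (0:ℝ)..1, u t * ((x t) ^ 2 + t ^ 2) / 2) ∧
    -(∫ t in (0:ℝ)..1, u t * ((x t) ^ 2 + t ^ 2) / 2)
        ≤ wMax (x 1) ((∫ t in (0:ℝ)..1, x t) - x 1 / 2) := by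
  refine ⟨?_, upper_bound x u hx hx1l⟩
  have h := upper_bound (fun t => -x t) (fun t => -u t) (admissible_neg x u hx) (by simpa using hx1r)
  have e1 : ∫ t in (0:ℝ)..1, -x t = -∫ t in (0:ℝ)..1, x t := intervalIntegral.integral_neg
  have e2 : ∫ t in (0:ℝ)..1, -u t * ((-x t) ^ 2 + t ^ 2) / 2
      = -∫ t in (0:ℝ)..1, u t * ((x t) ^ 2 + t ^ 2) / 2 := by
    rw [← intervalIntegral.integral_neg]
    congr 1
    ext t
    ring
  simp only [e1, e2] at h
  have e3 : -((∫ t in (0:ℝ)..1, x t) - x 1 / 2) = (-∫ t in (0:ℝ)..1, x t) - -x 1 / 2 := by ring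
  rw [e3]
  linarith
end

section
/- Fix Tb, T1, T2 with 0 < Tb ≤ T2 and 0 < T1, let Te = T1·(T2 − Tb)/(T2 + Tb) and T = Tb + T1 + T2 + Te. Consider the Cartan control system with u2 ≡ 1 and the two piecewise constant controls: u1 equal to 1 on [0,Tb), −1 on [Tb, Tb+T1), 1 on [Tb+T1, Tb+T1+T2), −1 on [Tb+T1+T2, T]; and ū1 equal to −1 on [0,Te), 1 on [Te, Te+T2), −1 on [Te+T2, Te+T2+T1), 1 on [Te+T2+T1, T]. Then the trajectories of the Cartan system from the origin with controls (u1, 1) and (ū1, 1) have the same endpoint at time T, and the z-coordinate of this common endpoint equals 0. -/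
open MeasureTheory Set

/-- A Lipschitz trajectory of the Cartan control system on `[0,T]` with a given control. -/
def IsTraj (T : ℝ) (x y z v w u1 u2 : ℝ → ℝ) : Prop :=
  (∃ K, LipschitzOnWith K (fun t => (x t, y t, z t, v t, w t)) (Icc 0 T)) ∧
  (∀ᵐ t ∂(volume.restrict (Icc 0 T)), CartanOde x y z v w u1 u2 t)

/-- The bang-bang control `1, −1, 1, −1` with durations `Tb, T1, T2` and the rest. -/
noncomputable def bangControl (Tb T1 T2 : ℝ) (t : ℝ) : ℝ :=
  if t < Tb then 1 else if t < Tb + T1 then -1 else if t < Tb + T1 + T2 then 1 else -1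

/-- The symmetric bang-bang control `−1, 1, −1, 1` with durations `Te, T2, T1` and the rest. -/
noncomputable def bangControl' (Te T2 T1 : ℝ) (t : ℝ) : ℝ :=
  if t < Te then -1 else if t < Te + T2 then 1 else if t < Te + T2 + T1 then -1 else 1

lemma cartan_aux_snd {β : Type} [PseudoEMetricSpace β] {p : β → ℝ} (hp : LipschitzWith 1 p) :
    LipschitzWith 1 (fun q : ℝ × β => p q.2) := by
  have := hp.comp (LipschitzWith.prod_snd (α := ℝ) (β := β))
  rw [one_mul] at this
  exact this

lemma cartan_aux_ac {a b : ℝ} (hab : a ≤ b) {f g g' : ℝ → ℝ}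
    (hf : AbsolutelyContinuousOnInterval f a b) (hgc : ContDiff ℝ 1 g)
    (hg : ∀ t, HasDerivAt g (g' t) t)
    (hd : ∀ᵐ t, t ∈ Icc a b → HasDerivAt f (g' t) t) :
    ∀ t ∈ Icc a b, f t = f a + (g t - g a) := by
  have h1 : AbsolutelyContinuousOnInterval (f - g) a b :=
    hf.sub hgc.contDiffOn.absolutelyContinuousOnInterval
  obtain ⟨C, hC⟩ := h1.const_of_ae_hasDerivAt_zero (by
    rw [uIcc_of_le hab]
    filter_upwards [hd] with t ht hm
    simpa using (ht hm).sub (hg t))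
  rw [uIcc_of_le hab] at hC
  intro t ht
  have e1 := hC t ht
  have e2 := hC a (left_mem_Icc.2 hab)
  simp only [Pi.sub_apply] at e1 e2
  linarith

lemma cartan_aux_seg {T a b s : ℝ} {x y z v w u : ℝ → ℝ}
    (h : IsTraj T x y z v w u (fun _ => 1)) (ha : 0 ≤ a) (hab : a ≤ b) (hb : b ≤ T)
    (hs : s * s = 1) (hu : ∀ t, a ≤ t → t < b → u t = s) :
    x b = x a + s * (b - a) ∧ y b = y a + (b - a) ∧
    z b = z a + (x a - s * y a) / 2 * (b - a) ∧
    v b = v a + ((x a ^ 2 + y a ^ 2) * (b - a) / 2 + (s * x a + y a) * (b - a) ^ 2 / 2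
      + (b - a) ^ 3 / 3) ∧
    w b = w a - s * ((x a ^ 2 + y a ^ 2) * (b - a) / 2 + (s * x a + y a) * (b - a) ^ 2 / 2
      + (b - a) ^ 3 / 3) := by
  obtain ⟨⟨K, hK⟩, hode⟩ := h
  have hsub : uIcc a b ⊆ Icc 0 T := by
    rw [uIcc_of_le hab]; exact Icc_subset_Icc ha hb
  have hK' := hK.mono hsub
  have ac : ∀ p : ℝ × ℝ × ℝ × ℝ × ℝ → ℝ, LipschitzWith 1 p →
      AbsolutelyContinuousOnInterval (fun t => p (x t, y t, z t, v t, w t)) a b := fun p hp =>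
    (hp.comp_lipschitzOnWith hK').absolutelyContinuousOnInterval
  have acx := ac (fun q => q.1) LipschitzWith.prod_fst
  have acy := ac (fun q => q.2.1) (cartan_aux_snd LipschitzWith.prod_fst)
  have acz := ac (fun q => q.2.2.1) (cartan_aux_snd (cartan_aux_snd LipschitzWith.prod_fst))
  have acv := ac (fun q => q.2.2.2.1)
    (cartan_aux_snd (cartan_aux_snd (cartan_aux_snd LipschitzWith.prod_fst)))
  have acw := ac (fun q => q.2.2.2.2)
    (cartan_aux_snd (cartan_aux_snd (cartan_aux_snd LipschitzWith.prod_snd)))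
  simp only at acx acy acz acv acw
  have hode' : ∀ᵐ t, t ∈ Icc a b → u t = s ∧ CartanOde x y z v w u (fun _ => 1) t := by
    rw [ae_restrict_iff' measurableSet_Icc] at hode
    have hne : ∀ᵐ t : ℝ, t ≠ b := by
      simp [ae_iff]
    filter_upwards [hode, hne] with t ht hn hm
    exact ⟨hu t hm.1 (lt_of_le_of_ne hm.2 hn), ht ⟨ha.trans hm.1, hm.2.trans hb⟩⟩
  have hx := cartan_aux_ac hab (g := fun t => s * (t - a)) (g' := fun _ => s) acx (by fun_prop)
    (fun t => by simpa using ((hasDerivAt_id t).sub_const a).const_mul s) (by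
      filter_upwards [hode'] with t ht hm
      obtain ⟨e, h1, -⟩ := ht hm
      rwa [e] at h1)
  have hy := cartan_aux_ac hab (g := fun t => (t - a)) (g' := fun _ => 1) acy (by fun_prop)
    (fun t => by simpa using ((hasDerivAt_id t).sub_const a)) (by
      filter_upwards [hode'] with t ht hm
      obtain ⟨e, -, h1, -⟩ := ht hm
      exact h1)
  have hz := cartan_aux_ac hab (g := fun t => (x a - s * y a) / 2 * (t - a))
    (g' := fun _ => (x a - s * y a) / 2) acz (by fun_prop)
    (fun t => by simpa using ((hasDerivAt_id t).sub_const a).const_mul ((x a - s * y a) / 2)) (by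
      filter_upwards [hode'] with t ht hm
      obtain ⟨e, -, -, h1, -⟩ := ht hm
      convert h1 using 1
      rw [e, hx t hm, hy t hm]; ring)
  have hG : ∀ t, HasDerivAt (fun t => (x a ^ 2 + y a ^ 2) * (t - a) / 2
      + (s * x a + y a) * (t - a) ^ 2 / 2 + (t - a) ^ 3 / 3)
      ((x a ^ 2 + y a ^ 2) / 2 + (s * x a + y a) * (t - a) + (t - a) ^ 2) t := by
    intro t
    have h0 : HasDerivAt (fun t => t - a) 1 t := (hasDerivAt_id t).sub_const a
    refine HasDerivAt.congr_deriv ((((h0.const_mul (x a ^ 2 + y a ^ 2)).div_const 2).add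
      (((h0.pow 2).const_mul (s * x a + y a)).div_const 2)).add ((h0.pow 3).div_const 3)) ?_
    push_cast; ring
  have hq : ∀ t ∈ Icc a b, (x t ^ 2 + y t ^ 2) / 2 =
      (x a ^ 2 + y a ^ 2) / 2 + (s * x a + y a) * (t - a) + (t - a) ^ 2 := by
    intro t hm
    rw [hx t hm, hy t hm]
    linear_combination (t - a) ^ 2 / 2 * hs
  have hv := cartan_aux_ac hab acv (by fun_prop) hG (by
      filter_upwards [hode'] with t ht hm
      obtain ⟨e, -, -, -, h1, -⟩ := ht hm
      convert h1 using 1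
      rw [← hq t hm]; ring)
  have hw := cartan_aux_ac hab acw (by fun_prop) (fun t => (hG t).const_mul (-s)) (by
      filter_upwards [hode'] with t ht hm
      obtain ⟨e, -, -, -, -, h1⟩ := ht hm
      convert h1 using 1
      rw [← hq t hm, e]; ring)
  have hbm : b ∈ Icc a b := right_mem_Icc.2 hab
  refine ⟨?_, ?_, ?_, ?_, ?_⟩
  · rw [hx b hbm]; ring
  · rw [hy b hbm]; ring
  · rw [hz b hbm]; ring
  · rw [hv b hbm]; ring
  · rw [hw b hbm]; ring

set_option maxHeartbeats 4000000 in
/-- For `Te = T1·(T2 − Tb)/(T2 + Tb)` the two symmetric bang-bang trajectories with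
`u2 ≡ 1` from the origin reach the same endpoint at time `T = Tb + T1 + T2 + Te`,
and the `z`-coordinate of this common endpoint vanishes. -/
theorem bang_bang_endpoint_coincidence
    (Tb T1 T2 Te T : ℝ)
    (hTb : 0 < Tb) (hTbT2 : Tb ≤ T2) (hT1 : 0 < T1)
    (hTe : Te = T1 * (T2 - Tb) / (T2 + Tb))
    (hT : T = Tb + T1 + T2 + Te)
    (x y z v w : ℝ → ℝ)
    (htraj : IsTraj T x y z v w (bangControl Tb T1 T2) (fun _ => 1))
    (hstart : (x 0, y 0, z 0, v 0, w 0) = (0, 0, 0, 0, 0))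
    (x' y' z' v' w' : ℝ → ℝ)
    (htraj' : IsTraj T x' y' z' v' w' (bangControl' Te T2 T1) (fun _ => 1))
    (hstart' : (x' 0, y' 0, z' 0, v' 0, w' 0) = (0, 0, 0, 0, 0)) :
    (x T, y T, z T, v T, w T) = (x' T, y' T, z' T, v' T, w' T) ∧ z T = 0 := by
  have hpos : 0 < T2 + Tb := by linarith
  have hTe0 : 0 ≤ Te := by
    rw [hTe]; exact div_nonneg (mul_nonneg hT1.le (by linarith)) hpos.le
  simp only [Prod.mk.injEq] at hstart hstart'
  obtain ⟨a1, a2, a3, a4, a5⟩ := hstart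
  obtain ⟨b1, b2, b3, b4, b5⟩ := hstart'
  have A1 := cartan_aux_seg (a := 0) (b := Tb) (s := 1) htraj le_rfl (by linarith) (by linarith)
    (by norm_num) (fun t h1 h2 => by unfold bangControl; rw [if_pos h2])
  have A2 := cartan_aux_seg (a := Tb) (b := Tb + T1) (s := -1) htraj (by linarith) (by linarith)
    (by linarith) (by norm_num) (fun t h1 h2 => by
      unfold bangControl; rw [if_neg (by linarith), if_pos h2])
  have A3 := cartan_aux_seg (a := Tb + T1) (b := Tb + T1 + T2) (s := 1) htraj (by linarith)
    (by linarith) (by linarith) (by norm_num) (fun t h1 h2 => by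
      unfold bangControl; rw [if_neg (by linarith), if_neg (by linarith), if_pos h2])
  have A4 := cartan_aux_seg (a := Tb + T1 + T2) (b := T) (s := -1) htraj (by linarith)
    (by linarith) (by linarith) (by norm_num) (fun t h1 h2 => by
      unfold bangControl
      rw [if_neg (by linarith), if_neg (by linarith), if_neg (by linarith)])
  have B1 := cartan_aux_seg (a := 0) (b := Te) (s := -1) htraj' le_rfl (by linarith) (by linarith)
    (by norm_num) (fun t h1 h2 => by unfold bangControl'; rw [if_pos h2])
  have B2 := cartan_aux_seg (a := Te) (b := Te + T2) (s := 1) htraj' (by linarith) (by linarith)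
    (by linarith) (by norm_num) (fun t h1 h2 => by
      unfold bangControl'; rw [if_neg (by linarith), if_pos h2])
  have B3 := cartan_aux_seg (a := Te + T2) (b := Te + T2 + T1) (s := -1) htraj' (by linarith)
    (by linarith) (by linarith) (by norm_num) (fun t h1 h2 => by
      unfold bangControl'; rw [if_neg (by linarith), if_neg (by linarith), if_pos h2])
  have B4 := cartan_aux_seg (a := Te + T2 + T1) (b := T) (s := 1) htraj' (by linarith)
    (by linarith) (by linarith) (by norm_num) (fun t h1 h2 => by
      unfold bangControl'
      rw [if_neg (by linarith), if_neg (by linarith), if_neg (by linarith)])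
  have d1 : Tb - 0 = Tb := by ring
  have d2 : Tb + T1 - Tb = T1 := by ring
  have d3 : Tb + T1 + T2 - (Tb + T1) = T2 := by ring
  have d4 : T - (Tb + T1 + T2) = Te := by rw [hT]; ring
  have e1 : Te - 0 = Te := by ring
  have e2 : Te + T2 - Te = T2 := by ring
  have e3 : Te + T2 + T1 - (Te + T2) = T1 := by ring
  have e4 : T - (Te + T2 + T1) = Tb := by rw [hT]; ring
  rw [d1, a1, a2, a3, a4, a5] at A1
  rw [d2] at A2
  rw [d3] at A3
  rw [d4] at A4
  rw [e1, b1, b2, b3, b4, b5] at B1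
  rw [e2] at B2
  rw [e3] at B3
  rw [e4] at B4
  obtain ⟨p1, p2, p3, p4, p5⟩ := A1
  rw [p1, p2, p3, p4, p5] at A2
  obtain ⟨p1, p2, p3, p4, p5⟩ := A2
  rw [p1, p2, p3, p4, p5] at A3
  obtain ⟨p1, p2, p3, p4, p5⟩ := A3
  rw [p1, p2, p3, p4, p5] at A4
  obtain ⟨p1, p2, p3, p4, p5⟩ := A4
  obtain ⟨q1, q2, q3, q4, q5⟩ := B1
  rw [q1, q2, q3, q4, q5] at B2
  obtain ⟨q1, q2, q3, q4, q5⟩ := B2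
  rw [q1, q2, q3, q4, q5] at B3
  obtain ⟨q1, q2, q3, q4, q5⟩ := B3
  rw [q1, q2, q3, q4, q5] at B4
  obtain ⟨q1, q2, q3, q4, q5⟩ := B4
  rw [p1, p2, p3, p4, p5, q1, q2, q3, q4, q5]
  clear p1 p2 p3 p4 p5 q1 q2 q3 q4 q5 d4 e4
  have hne : T2 + Tb ≠ 0 := hpos.ne'
  simp only [Prod.mk.injEq]
  rw [hTe]
  refine ⟨⟨?_, ?_, ?_, ?_, ?_⟩, ?_⟩ <;> field_simp <;> ring
end

section
/- Let q1 ∈ ℝ⁵ be the endpoint at time T of an admissible trajectory of the Cartan control system starting from the origin with control (u1, u2) where u2 ≡ 1 and u1 is measurable with |u1| ≤ 1. Then there exists a piecewise constant control ū1 : [0,T] → [−1,1] with at most 4 points of discontinuity such that the trajectory of the Cartan system from the origin with control (ū1, 1) also has endpoint q1 at time T. -/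
open MeasureTheory Set

/-- `u` is piecewise constant on `[0,T]` with at most 4 switching points:
there is a partition `0 = τ₀ ≤ τ₁ ≤ ⋯ ≤ τ₅ = T` and constants `c i` such that
`u = c i` on each interval `[τ i, τ (i+1))`. -/
def PiecewiseConst4 (T : ℝ) (u : ℝ → ℝ) : Prop :=
  ∃ τ : Fin 6 → ℝ, Monotone τ ∧ τ 0 = 0 ∧ τ 5 = T ∧
    ∃ c : Fin 5 → ℝ, ∀ i : Fin 5, ∀ t ∈ Ico (τ i.castSucc) (τ i.succ), u t = c i


namespace CartanAux

structure St where
  t : ℝ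
  x : ℝ
  A : ℝ
  B : ℝ
  Q : ℝ

noncomputable def step (σ l : ℝ) (S : St) : St where
  t := S.t + l
  x := S.x + σ * l
  A := S.A + S.x * l + σ * l ^ 2 / 2
  B := S.B + S.t * S.x * l + (S.x + σ * S.t) * l ^ 2 / 2 + σ * l ^ 3 / 3
  Q := S.Q + S.x ^ 2 * l + σ * S.x * l ^ 2 + l ^ 3 / 3

noncomputable def St0 : St := ⟨0, 0, 0, 0, 0⟩

noncomputable def st4 (σ a b c d : ℝ) : St := step (-σ) d (step σ c (step (-σ) b (step σ a St0)))

/-- `S'` matches `S` with possibly larger `Q`. -/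
def Dom (S S' : St) : Prop :=
  S'.t = S.t ∧ S'.x = S.x ∧ S'.A = S.A ∧ S'.B = S.B ∧ S.Q ≤ S'.Q

def Red (S : St) : Prop :=
  ∃ σ : ℝ, (σ = 1 ∨ σ = -1) ∧ ∃ a b c d : ℝ, 0 ≤ a ∧ 0 ≤ b ∧ 0 ≤ c ∧ 0 ≤ d ∧
    Dom S (st4 σ a b c d)

lemma Dom.trans {S S' S'' : St} (h : Dom S S') (h' : Dom S' S'') : Dom S S'' := by
  obtain ⟨a, b, c, d, e⟩ := h
  obtain ⟨a', b', c', d', e'⟩ := h'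
  exact ⟨a'.trans a, b'.trans b, c'.trans c, d'.trans d, e.trans e'⟩

lemma Dom.step {S S' : St} (h : Dom S S') (σ l : ℝ) :
    Dom (step σ l S) (step σ l S') := by
  obtain ⟨a, b, c, d, e⟩ := h
  refine ⟨?_, ?_, ?_, ?_, ?_⟩ <;> simp only [CartanAux.step, a, b, c, d]
  linarith

lemma Red.of_dom {S S' : St} (h : Dom S S') (h' : Red S') : Red S := by
  obtain ⟨σ, hσ, a, b, c, d, ha, hb, hc, hd, h1⟩ := h'
  exact ⟨σ, hσ, a, b, c, d, ha, hb, hc, hd, h.trans h1⟩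

noncomputable def st5 (σ p l1 e l2 r : ℝ) : St := step σ r (st4 σ p l1 e l2)

lemma move (σ : ℝ) (hσ : σ = 1 ∨ σ = -1) {p l1 e l2 r p' m1 e' m2 r' L : ℝ}
    (hL : 0 < L) (hl : l1 + l2 = L) (hm : m1 + m2 = L)
    (h0 : p' + m1 + e' + m2 + r' = p + l1 + e + l2 + r)
    (h2 : m1 * (p' + m1 / 2) + m2 * (p' + m1 + e' + m2 / 2) =
      l1 * (p + l1 / 2) + l2 * (p + l1 + e + l2 / 2))
    (h3 : m1 * m2 * e' * (e' + L) = l1 * l2 * e * (e + L))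
    (hee : e ≤ e') (he : 0 < e) (hl1 : 0 ≤ l1) (hl2 : 0 ≤ l2) (hm1 : 0 ≤ m1) (hm2 : 0 ≤ m2) :
    Dom (st5 σ p l1 e l2 r) (st5 σ p' m1 e' m2 r') := by
  have hl2' : l2 = L - l1 := by linarith
  have hm2' : m2 = L - m1 := by linarith
  have hr' : r' = p + l1 + e + l2 + r - p' - m1 - e' - m2 := by linarith
  have h4 : m1 * m2 * e' ≤ l1 * l2 * e := by
    have h5 : m1 * m2 * e' * (e' + L) ≤ l1 * l2 * e * (e' + L) := by
      rw [h3]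
      have : 0 ≤ l1 * l2 * e := by positivity
      nlinarith
    exact le_of_mul_le_mul_right h5 (by linarith)
  subst hr'
  subst hl2' hm2'
  have hM2 : ((p' + m1) ^ 3 - p' ^ 3 + (p' + m1 + e' + (L - m1)) ^ 3 - (p' + m1 + e') ^ 3) / 3 =
     ((p + l1) ^ 3 - p ^ 3 + (p + l1 + e + (L - l1)) ^ 3 - (p + l1 + e) ^ 3) / 3 := by
    apply mul_left_cancel₀ hL.ne'
    linear_combination (m1 * (p' + m1 / 2) + (L - m1) * (p' + m1 + e' + (L - m1) / 2) + l1 * (p + l1 / 2) + (L - l1) * (p + l1 + e + (L - l1) / 2)) * h2 + h3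
  rcases hσ with rfl | rfl
  · refine ⟨?_, ?_, ?_, ?_, ?_⟩ <;> simp only [st5, st4, step, St0]
    · ring
    · ring
    · linear_combination 2 * h2
    · linear_combination hM2
    · refine sub_nonneg.1 (le_of_le_of_eq (b := 4 * (l1 * (L - l1) * e - m1 * (L - m1) * e')) (by linarith) ?_)
      linear_combination -2 * hM2 + 4 * L * h2
  · refine ⟨?_, ?_, ?_, ?_, ?_⟩ <;> simp only [st5, st4, step, St0]
    · ring
    · ring
    · linear_combination -2 * h2
    · linear_combination -hM2
    · refine sub_nonneg.1 (le_of_le_of_eq (b := 4 * (l1 * (L - l1) * e - m1 * (L - m1) * e')) (by linarith) ?_)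
      linear_combination -2 * hM2 + 4 * L * h2

lemma red5 (σ : ℝ) (hσ : σ = 1 ∨ σ = -1) {p l1 e l2 r : ℝ} (hp : 0 ≤ p) (hl1 : 0 ≤ l1)
    (he : 0 ≤ e) (hl2 : 0 ≤ l2) (hr : 0 ≤ r) : Red (st5 σ p l1 e l2 r) := by
  have hσ' : -σ = 1 ∨ -σ = -1 := by rcases hσ with rfl | rfl <;> simp
  have hσσ : σ * σ = 1 := by rcases hσ with rfl | rfl <;> simp
  rcases hl1.eq_or_lt with h | hl1p
  · subst h
    refine ⟨σ, hσ, p + e, l2, r, 0, by linarith, hl2, hr, le_rfl, ?_⟩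
    rcases hσ with rfl | rfl <;>
    refine ⟨?_, ?_, ?_, ?_, le_of_eq ?_⟩ <;> simp only [st5, st4, step, St0] <;> ring
  rcases hl2.eq_or_lt with h | hl2p
  · subst h
    refine ⟨σ, hσ, p, l1, e + r, 0, hp, hl1, by linarith, le_rfl, ?_⟩
    rcases hσ with rfl | rfl <;>
    refine ⟨?_, ?_, ?_, ?_, le_of_eq ?_⟩ <;> simp only [st5, st4, step, St0] <;> ring
  rcases he.eq_or_lt with h | hep
  · subst h
    refine ⟨σ, hσ, p, l1 + l2, r, 0, hp, by linarith, hr, le_rfl, ?_⟩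
    rcases hσ with rfl | rfl <;>
    refine ⟨?_, ?_, ?_, ?_, le_of_eq ?_⟩ <;> simp only [st5, st4, step, St0] <;> ring
  obtain ⟨L, hL⟩ : ∃ L, l1 + l2 = L := ⟨_, rfl⟩
  have hLp : 0 < L := by linarith
  obtain ⟨W, hW⟩ : ∃ W, p + l1 + e + l2 + r = W := ⟨_, rfl⟩
  obtain ⟨M, hM⟩ : ∃ M, l1 * (p + l1 / 2) + l2 * (p + l1 + e + l2 / 2) = M := ⟨_, rfl⟩
  obtain ⟨K, hK⟩ : ∃ K, l1 * l2 * e * (e + L) = K := ⟨_, rfl⟩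
  have hKp : 0 < K := by rw [← hK]; positivity
  obtain ⟨η, hη, hη1⟩ : ∃ η : ℝ, η * η = 1 ∧ l1 - l2 = η * |l1 - l2| := by
    rcases abs_cases (l1 - l2) with h | h
    · exact ⟨1, by norm_num, by linarith⟩
    · exact ⟨-1, by norm_num, by linarith⟩
  -- the curve
  let D : ℝ → ℝ := fun E => √(L ^ 2 - 4 * (K / (E * (E + L))))
  let m1 : ℝ → ℝ := fun E => (L + η * D E) / 2
  let m2 : ℝ → ℝ := fun E => (L - η * D E) / 2
  let p' : ℝ → ℝ := fun E => (M - m1 E * (m1 E / 2) - m2 E * (m1 E + E + m2 E / 2)) / L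
  let r' : ℝ → ℝ := fun E => W - p' E - m1 E - E - m2 E
  have hpos : ∀ E, e ≤ E → 0 < E * (E + L) := fun E hE => by
    have : 0 < E := by linarith
    positivity
  have hle : ∀ E, e ≤ E → K / (E * (E + L)) ≤ l1 * l2 := fun E hE => by
    rw [div_le_iff₀ (hpos E hE), ← hK]
    have : e * (e + L) ≤ E * (E + L) := by nlinarith
    have h1 : 0 < l1 * l2 := by positivity
    nlinarith
  have hnn : ∀ E, e ≤ E → 0 ≤ L ^ 2 - 4 * (K / (E * (E + L))) := fun E hE => by
    have := hle E hE
    have hL2 : L ^ 2 = (l1 + l2) ^ 2 := by rw [hL]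
    nlinarith [sq_nonneg (l1 - l2)]
  have hD2 : ∀ E, e ≤ E → D E * D E = L ^ 2 - 4 * (K / (E * (E + L))) := fun E hE =>
    Real.mul_self_sqrt (hnn E hE)
  have hDle : ∀ E, e ≤ E → D E ≤ L := fun E hE => by
    apply Real.sqrt_le_iff.2 ⟨hLp.le, ?_⟩
    have : 0 < K / (E * (E + L)) := div_pos hKp (hpos E hE)
    linarith
  have hD0 : ∀ E, 0 ≤ D E := fun E => Real.sqrt_nonneg _
  have hη2 : η = 1 ∨ η = -1 := mul_self_eq_one_iff.1 hη
  have hm1 : ∀ E, e ≤ E → 0 ≤ m1 E := fun E hE => by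
    have h1 := hDle E hE
    have h2 := hD0 E
    simp only [m1]
    rcases hη2 with h | h <;> rw [h] <;> linarith
  have hm2 : ∀ E, e ≤ E → 0 ≤ m2 E := fun E hE => by
    have h1 := hDle E hE
    have h2 := hD0 E
    simp only [m2]
    rcases hη2 with h | h <;> rw [h] <;> linarith
  have hmm : ∀ E, m1 E + m2 E = L := fun E => by simp only [m1, m2]; ring
  have hprod : ∀ E, e ≤ E → m1 E * m2 E = K / (E * (E + L)) := fun E hE => by
    simp only [m1, m2]
    linear_combination (-1/4) * hD2 E hE - 1/4 * D E * D E * hη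
  have hDe : D e = |l1 - l2| := by
    simp only [D]
    rw [← Real.sqrt_sq_eq_abs, ← hK]
    congr 1
    have : l1 * l2 * e * (e + L) / (e * (e + L)) = l1 * l2 := by
      have : e + L ≠ 0 := by positivity
      field_simp
    rw [this, ← hL]; ring
  have hm1e : m1 e = l1 := by simp only [m1]; rw [hDe, ← hη1]; linarith
  have hm2e : m2 e = l2 := by simp only [m2]; rw [hDe, ← hη1]; linarith
  have hp'e : p' e = p := by
    simp only [p']; rw [hm1e, hm2e, div_eq_iff hLp.ne', ← hM, ← hL]; ring
  have hr'e : r' e = r := by simp only [r']; rw [hm1e, hm2e, hp'e]; linarith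
  have hcD : ContinuousOn D (Icc e W) := by
    apply ContinuousOn.sqrt
    apply ContinuousOn.sub continuousOn_const
    apply ContinuousOn.mul continuousOn_const
    apply ContinuousOn.div continuousOn_const (by fun_prop)
    intro E hE
    exact (hpos E hE.1).ne'
  have hcm1 : ContinuousOn m1 (Icc e W) := by simp only [m1]; fun_prop
  have hcm2 : ContinuousOn m2 (Icc e W) := by simp only [m2]; fun_prop
  have hcp : ContinuousOn p' (Icc e W) := by simp only [p']; fun_prop
  have hcr : ContinuousOn r' (Icc e W) := by simp only [r']; fun_prop
  have hcφ : ContinuousOn (fun E => min (p' E) (r' E)) (Icc e W) :=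
    ContinuousOn.inf hcp hcr
  have heW : e ≤ W := by linarith
  obtain ⟨E, hE, hE0⟩ : ∃ E ∈ Icc e W, min (p' E) (r' E) = 0 := by
    have := intermediate_value_Icc' heW hcφ
    apply this
    refine ⟨?_, ?_⟩
    · by_contra hcon
      push Not at hcon
      obtain ⟨h1, h2⟩ := lt_min_iff.1 hcon
      have := hmm W
      simp only [r'] at h2
      linarith
    · simp only [hp'e, hr'e]; exact le_min hp hr
  have hdom : Dom (st5 σ p l1 e l2 r) (st5 σ (p' E) (m1 E) E (m2 E) (r' E)) := by
    apply move σ hσ hLp hL (hmm E) _ _ _ hE.1 hep hl1 hl2 (hm1 E hE.1) (hm2 E hE.1)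
    · simp only [r']; linarith
    · have h1 : p' E * L = M - m1 E * (m1 E / 2) - m2 E * (m1 E + E + m2 E / 2) :=
        div_mul_cancel₀ _ hLp.ne'
      linear_combination h1 - hM + p' E * hmm E
    · rw [hprod E hE.1, hK]
      have h1 := (hpos E hE.1).ne'
      rw [mul_assoc]
      exact div_mul_cancel₀ _ h1
  have hp'0 : 0 ≤ p' E := hE0 ▸ min_le_left _ _
  have hr'0 : 0 ≤ r' E := hE0 ▸ min_le_right _ _
  have hE1 : 0 ≤ E := by linarith [hE.1]
  refine Red.of_dom hdom ?_
  rcases min_choice (p' E) (r' E) with h | h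
  · rw [h] at hE0
    rw [hE0]
    refine ⟨-σ, hσ', m1 E, E, m2 E, r' E, hm1 E hE.1, hE1, hm2 E hE.1, hr'0, ?_⟩
    rcases hσ with rfl | rfl <;>
    refine ⟨?_, ?_, ?_, ?_, le_of_eq ?_⟩ <;> simp only [st5, st4, step, St0] <;> ring
  · rw [h] at hE0
    rw [hE0]
    refine ⟨σ, hσ, p' E, m1 E, E, m2 E, hp'0, hm1 E hE.1, hE1, hm2 E hE.1, ?_⟩
    rcases hσ with rfl | rfl <;>
    refine ⟨?_, ?_, ?_, ?_, le_of_eq ?_⟩ <;> simp only [st5, st4, step, St0] <;> ring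

lemma Red.step {S : St} (h : Red S) {τ l : ℝ} (hτ : τ = 1 ∨ τ = -1) (hl : 0 ≤ l) :
    Red (step τ l S) := by
  obtain ⟨σ, hσ, a, b, c, d, ha, hb, hc, hd, h1⟩ := h
  refine Red.of_dom (h1.step τ l) ?_
  by_cases hs : τ = σ
  · subst hs
    exact red5 τ hτ ha hb hc hd hl
  · have hτ' : τ = -σ := by
      rcases hσ with rfl | rfl <;> rcases hτ with rfl | rfl <;> simp at hs ⊢
    subst hτ'
    refine ⟨σ, hσ, a, b, c, d + l, ha, hb, hc, by linarith, ?_⟩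
    rcases hσ with rfl | rfl <;>
    refine ⟨?_, ?_, ?_, ?_, le_of_eq ?_⟩ <;> simp only [st4, CartanAux.step, St0] <;> ring

lemma Red_St0 : Red St0 := by
  refine ⟨1, Or.inl rfl, 0, 0, 0, 0, le_rfl, le_rfl, le_rfl, le_rfl, ?_⟩
  refine ⟨?_, ?_, ?_, ?_, le_of_eq ?_⟩ <;> simp [st4, step, St0]

end CartanAux
namespace CartanAux

lemma int_near {g : ℝ → ℝ} (hg : Continuous g) {t l c δ : ℝ} (hl : 0 ≤ l)
    (h : ∀ s ∈ Icc t (t + l), |g s - c| ≤ δ) :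
    |(∫ s in (0:ℝ)..(t + l), g s) - (∫ s in (0:ℝ)..t, g s) - c * l| ≤ δ * l := by
  rw [intervalIntegral.integral_interval_sub_left (hg.intervalIntegrable _ _)
    (hg.intervalIntegrable _ _)]
  have h1 : (∫ s in t..(t + l), g s) - c * l = ∫ s in t..(t + l), (g s - c) := by
    rw [intervalIntegral.integral_sub (hg.intervalIntegrable _ _) (by simp)]
    simp; ring
  rw [h1, ← Real.norm_eq_abs]
  have := intervalIntegral.norm_integral_le_of_norm_le_const (a := t) (b := t + l)
    (f := fun s => g s - c) (C := δ) (fun s hs => by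
      rw [uIoc_of_le (by linarith)] at hs
      exact h s ⟨hs.1.le, hs.2⟩)
  simpa [abs_of_nonneg hl] using this

lemma abs_step_bound {T : ℝ} {σ l h : ℝ} (hσ : σ = 1 ∨ σ = -1) (hl : 0 ≤ l) (hlh : l ≤ h) (S : St)
    (ht : 0 ≤ S.t) (htT : S.t + l ≤ T) (hx : |S.x| ≤ S.t) :
    |(step σ l S).A - S.A - S.x * l| ≤ h * l ∧
    |(step σ l S).B - S.B - S.t * S.x * l| ≤ 2 * T * h * l ∧
    |(step σ l S).Q - S.Q - S.x ^ 2 * l| ≤ 2 * T * h * l := by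
  obtain ⟨t, x, A, B, Q⟩ := S
  simp only [step] at *
  have hll : l * l ≤ h * l := by nlinarith
  have hT : 0 ≤ T := by linarith
  have hlT : l ≤ T := by linarith
  have hσa : |σ| = 1 := by rcases hσ with rfl | rfl <;> simp
  have e1 : A + x * l + σ * l ^ 2 / 2 - A - x * l = σ * (l ^ 2 / 2) := by ring
  have e2 : B + t * x * l + (x + σ * t) * l ^ 2 / 2 + σ * l ^ 3 / 3 - B - t * x * l
    = ((x + σ * t) / 2 + σ * (l / 3)) * (l * l) := by ring
  have e3 : Q + x ^ 2 * l + σ * x * l ^ 2 + l ^ 3 / 3 - Q - x ^ 2 * l =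
    (σ * x + l / 3) * (l * l) := by ring
  have hσt : |σ * t| ≤ t := by rw [abs_mul, hσa, one_mul, abs_of_nonneg ht]
  have hσx : |σ * x| ≤ t := by rw [abs_mul, hσa, one_mul]; exact hx
  have hσl : |σ * (l / 3)| ≤ l / 3 := by
    rw [abs_mul, hσa, one_mul, abs_of_nonneg (by linarith)]
  have hTl : 2 * T * (l * l) ≤ 2 * T * h * l := by nlinarith
  refine ⟨?_, ?_, ?_⟩
  · rw [e1, abs_mul, hσa, abs_of_nonneg (by positivity)]; nlinarith
  · rw [e2, abs_mul, abs_mul_self]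
    refine le_trans (mul_le_mul_of_nonneg_right (b := _) (c := 2 * T) ?_ (mul_self_nonneg l)) hTl
    rw [abs_le] at *
    constructor <;> linarith
  · rw [e3, abs_mul, abs_mul_self]
    refine le_trans (mul_le_mul_of_nonneg_right (b := _) (c := 2 * T) ?_ (mul_self_nonneg l)) hTl
    rw [abs_le] at *
    constructor <;> linarith

/-- errors at most `ε` between state and integrals. -/
def Near (ξ : ℝ → ℝ) (S : St) (ε : ℝ) : Prop :=
  |S.A - ∫ s in (0:ℝ)..S.t, ξ s| ≤ ε ∧ |S.B - ∫ s in (0:ℝ)..S.t, s * ξ s| ≤ ε ∧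
  |S.Q - ∫ s in (0:ℝ)..S.t, ξ s ^ 2| ≤ ε

lemma near_aux {u v w z p q e c : ℝ} (h1 : |u - v| ≤ e) (h2 : |w - u - c| ≤ p)
    (h3 : |z - v - c| ≤ q) : |w - z| ≤ e + (p + q) := by
  rw [abs_le] at *
  constructor <;> linarith

lemma Near.step {ξ : ℝ → ℝ} (hξ : ∀ s t, |ξ s - ξ t| ≤ |s - t|) (hc : Continuous ξ)
    (hξ0 : ξ 0 = 0) {T σ l h ε : ℝ}
    (hσ : σ = 1 ∨ σ = -1) (hl : 0 ≤ l) (hlh : l ≤ h) {S : St}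
    (ht : 0 ≤ S.t) (htT : S.t + l ≤ T) (hx : |S.x| ≤ S.t) (hx' : |S.x - ξ S.t| ≤ 2 * h)
    (hn : Near ξ S ε) : Near ξ (step σ l S) (ε + (8 * T + 4) * h * l) := by
  obtain ⟨hA, hB, hQ⟩ := abs_step_bound hσ hl hlh S ht htT hx
  obtain ⟨nA, nB, nQ⟩ := hn
  have ht' : (CartanAux.step σ l S).t = S.t + l := rfl
  have hh : 0 ≤ h := by linarith
  have hT : 0 ≤ T := by linarith
  have key : ∀ s ∈ Icc S.t (S.t + l), |ξ s - S.x| ≤ 3 * h := by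
    intro s hs
    have h1 := hξ s S.t
    rw [abs_of_nonneg (by linarith [hs.1] : 0 ≤ s - S.t)] at h1
    have h2 := hs.2
    rw [abs_le] at *
    constructor <;> linarith
  have hξb : ∀ s ∈ Icc S.t (S.t + l), |ξ s| ≤ T := by
    intro s hs
    have h1 := hξ s 0
    rw [hξ0, sub_zero, sub_zero, abs_of_nonneg (by linarith [hs.1] : 0 ≤ s)] at h1
    linarith [hs.2]
  have k1 := int_near hc (t := S.t) (l := l) (c := S.x) (δ := 3 * h) hl key
  have k2 := int_near (g := fun s => s * ξ s) (by fun_prop) (t := S.t) (l := l) (c := S.t * S.x)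
    (δ := 4 * T * h) hl (by
      intro s hs
      have e : s * ξ s - S.t * S.x = s * (ξ s - S.x) + (s - S.t) * S.x := by ring
      rw [e]
      refine (abs_add_le _ _).trans ?_
      rw [abs_mul, abs_mul, abs_of_nonneg (by linarith [hs.1] : 0 ≤ s),
        abs_of_nonneg (by linarith [hs.1] : 0 ≤ s - S.t)]
      have a1 : s * |ξ s - S.x| ≤ T * (3 * h) :=
        mul_le_mul (by linarith [hs.2]) (key s hs) (abs_nonneg _) hT
      have a2 : (s - S.t) * |S.x| ≤ h * T :=
        mul_le_mul (by linarith [hs.2]) (by linarith) (abs_nonneg _) hh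
      linarith)
  have k3 := int_near (g := fun s => ξ s ^ 2) (by fun_prop) (t := S.t) (l := l) (c := S.x ^ 2)
    (δ := 6 * T * h) hl (by
      intro s hs
      have e : ξ s ^ 2 - S.x ^ 2 = (ξ s + S.x) * (ξ s - S.x) := by ring
      rw [e, abs_mul]
      have a1 : |ξ s + S.x| ≤ 2 * T := (abs_add_le _ _).trans (by linarith [hξb s hs])
      have := mul_le_mul a1 (key s hs) (abs_nonneg _) (by linarith)
      linarith)
  have hhl : 0 ≤ h * l := mul_nonneg hh hl
  have hThl : 0 ≤ T * (h * l) := mul_nonneg hT hhl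
  refine ⟨?_, ?_, ?_⟩
  · rw [ht']; refine (near_aux nA hA k1).trans ?_; nlinarith
  · rw [ht']; refine (near_aux nB hB k2).trans ?_; nlinarith
  · rw [ht']; refine (near_aux nQ hQ k3).trans ?_; nlinarith

lemma approx {ξ : ℝ → ℝ} (hξ : ∀ s t, |ξ s - ξ t| ≤ |s - t|) (hc : Continuous ξ)
    (hξ0 : ξ 0 = 0) {T h : ℝ} (hh : 0 ≤ h) (k : ℕ) (hk : k * h ≤ T) :
    ∃ S : St, Red S ∧ S.t = k * h ∧ S.x = ξ (k * h) ∧ Near ξ S ((8 * T + 4) * h * (k * h)) := by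
  induction k with
  | zero => exact ⟨St0, Red_St0, by simp [St0], by simp [St0, hξ0], by simp [Near, St0]⟩
  | succ k ih =>
    push_cast at hk
    have hkh : 0 ≤ k * h := by positivity
    obtain ⟨S, hR, ht, hx, hn⟩ := ih (by linarith)
    obtain ⟨δ, hδ⟩ : ∃ δ, ξ ((k + 1) * h) - ξ (k * h) = δ := ⟨_, rfl⟩
    have hδ1 : |δ| ≤ h := by
      have := hξ ((k + 1) * h) (k * h)
      rw [hδ] at this
      have e : (k + 1) * h - k * h = h := by ring
      rwa [e, abs_of_nonneg hh] at this
    rw [abs_le] at hδ1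
    have hxb : |S.x| ≤ S.t := by
      have := hξ (k * h) 0
      rw [hξ0, sub_zero, sub_zero, abs_of_nonneg hkh] at this
      rwa [hx, ht]
    obtain ⟨l, hl⟩ : ∃ l, (h + δ) / 2 = l := ⟨_, rfl⟩
    obtain ⟨m, hm⟩ : ∃ m, (h - δ) / 2 = m := ⟨_, rfl⟩
    have hl0 : 0 ≤ l := by linarith
    have hm0 : 0 ≤ m := by linarith
    have hlm : l + m = h := by linarith
    have n1 := hn.step hξ hc hξ0 (T := T) (σ := 1) (l := l) (h := h) (Or.inl rfl) hl0 (by linarith)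
      (by rw [ht]; exact hkh) (by rw [ht]; linarith) hxb (by rw [hx, ht]; simp; linarith)
    have t1 : (CartanAux.step 1 l S).t = S.t + l := rfl
    have x1 : (CartanAux.step 1 l S).x = S.x + 1 * l := rfl
    have n2 := n1.step hξ hc hξ0 (T := T) (σ := -1) (l := m) (h := h) (Or.inr rfl) hm0
      (by linarith) (by rw [t1, ht]; linarith) (by rw [t1, ht]; linarith)
      (by rw [t1, x1, one_mul]; refine (abs_add_le _ _).trans ?_; rw [abs_of_nonneg hl0]; linarith)
      (by
        rw [t1, x1, hx, ht]
        have := hξ (k * h) (k * h + l)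
        have e : (k * h - (k * h + l) : ℝ) = -l := by ring
        rw [e, abs_neg, abs_of_nonneg hl0] at this
        rw [abs_le] at this ⊢
        constructor <;> linarith)
    refine ⟨_, (hR.step (Or.inl rfl) hl0).step (Or.inr rfl) hm0, ?_, ?_, ?_⟩
    · simp only [CartanAux.step]; rw [ht]; push_cast; linarith
    · simp only [CartanAux.step]; rw [hx]; push_cast; linarith
    · convert n2 using 1
      push_cast
      rw [← hlm]; ring

lemma high {ξ : ℝ → ℝ} (hξ : ∀ s t, |ξ s - ξ t| ≤ |s - t|) (hc : Continuous ξ)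
    (hξ0 : ξ 0 = 0) {T : ℝ} (hT : 0 ≤ T) :
    ∃ σ : ℝ, (σ = 1 ∨ σ = -1) ∧ ∃ a b c d : ℝ, 0 ≤ a ∧ 0 ≤ b ∧ 0 ≤ c ∧ 0 ≤ d ∧
      (st4 σ a b c d).t = T ∧ (st4 σ a b c d).x = ξ T ∧
      (st4 σ a b c d).A = ∫ s in (0:ℝ)..T, ξ s ∧
      (st4 σ a b c d).B = ∫ s in (0:ℝ)..T, s * ξ s ∧
      ∫ s in (0:ℝ)..T, ξ s ^ 2 ≤ (st4 σ a b c d).Q := by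
  let K : Set (ℝ × ℝ × ℝ × ℝ × ℝ) :=
    ({1, -1} : Set ℝ) ×ˢ Icc 0 T ×ˢ Icc 0 T ×ˢ Icc 0 T ×ˢ Icc 0 T
  have hK : IsCompact K :=
    (Set.toFinite _).isCompact.prod (isCompact_Icc.prod (isCompact_Icc.prod
      (isCompact_Icc.prod isCompact_Icc)))
  let g : ℝ × ℝ × ℝ × ℝ × ℝ → St := fun k => st4 k.1 k.2.1 k.2.2.1 k.2.2.2.1 k.2.2.2.2
  let F : ℝ × ℝ × ℝ × ℝ × ℝ → ℝ := fun k =>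
    |(g k).t - T| + |(g k).x - ξ T| + |(g k).A - ∫ s in (0:ℝ)..T, ξ s|
      + |(g k).B - ∫ s in (0:ℝ)..T, s * ξ s| + max 0 ((∫ s in (0:ℝ)..T, ξ s ^ 2) - (g k).Q)
  have hF : Continuous F := by
    simp only [F, g, st4, step, St0]
    fun_prop
  have hKne : K.Nonempty := ⟨(1, 0, 0, 0, 0), by simp [K, hT]⟩
  obtain ⟨k, hkK, hmin⟩ := hK.exists_isMinOn hKne hF.continuousOn
  have hbd : ∀ n : ℕ, F k ≤ (3 * (8 * T + 4) * T * T) * (1 / ((n:ℝ) + 1)) := by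
    intro n
    have hn : (0:ℝ) < n + 1 := by positivity
    have hnT : ((n + 1 : ℕ) : ℝ) * (T / (n + 1)) = T := by push_cast; field_simp
    obtain ⟨S, hR, ht, hx, nA, nB, nQ⟩ := approx hξ hc hξ0 (T := T) (h := T / (n + 1))
      (by positivity) (n + 1) hnT.le
    rw [hnT] at ht hx nA nB nQ
    rw [ht] at nA nB nQ
    obtain ⟨σ, hσ, a, b, c, d, ha, hb, hc, hd, h1, h2, h3, h4, h5⟩ := hR
    have hsum : a + b + c + d = T := by
      rw [← ht, ← h1]; simp only [st4, step, St0]; ring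
    have hmem : (σ, a, b, c, d) ∈ K := by
      refine ⟨by simpa using hσ, ⟨ha, by linarith⟩, ⟨hb, by linarith⟩, ⟨hc, by linarith⟩,
        ⟨hd, by linarith⟩⟩
    refine (hmin hmem).trans ?_
    simp only [F, g]
    rw [h1, h2, h3, h4, ht, hx]
    have hm : max 0 ((∫ s in (0:ℝ)..T, ξ s ^ 2) - (st4 σ a b c d).Q) ≤
        (8 * T + 4) * (T / (n + 1)) * T := by
      apply max_le (by positivity)
      have := abs_le.1 nQ
      linarith
    have e : (3 * (8 * T + 4) * T * T) * (1 / ((n:ℝ) + 1)) =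
      3 * ((8 * T + 4) * (T / (n + 1)) * T) := by ring
    rw [e]
    simp only [sub_self, abs_zero]
    linarith
  have hF0 : F k ≤ 0 := by
    have := (tendsto_one_div_add_atTop_nhds_zero_nat (𝕜 := ℝ)).const_mul (3 * (8 * T + 4) * T * T)
    rw [mul_zero] at this
    exact ge_of_tendsto' this hbd
  obtain ⟨σ, a, b, c, d⟩ := k
  obtain ⟨hσ, ha, hb, hc', hd⟩ := hkK
  simp only [F, g] at hF0
  have p1 := abs_nonneg ((st4 σ a b c d).t - T)
  have p2 := abs_nonneg ((st4 σ a b c d).x - ξ T)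
  have p3 := abs_nonneg ((st4 σ a b c d).A - ∫ s in (0:ℝ)..T, ξ s)
  have p4 := abs_nonneg ((st4 σ a b c d).B - ∫ s in (0:ℝ)..T, s * ξ s)
  have p5 := le_max_left 0 ((∫ s in (0:ℝ)..T, ξ s ^ 2) - (st4 σ a b c d).Q)
  have p6 := le_max_right 0 ((∫ s in (0:ℝ)..T, ξ s ^ 2) - (st4 σ a b c d).Q)
  refine ⟨σ, by simpa using hσ, a, b, c, d, ha.1, hb.1, hc'.1, hd.1, ?_, ?_, ?_, ?_, ?_⟩
  · exact sub_eq_zero.1 (abs_eq_zero.1 (by linarith))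
  · exact sub_eq_zero.1 (abs_eq_zero.1 (by linarith))
  · exact sub_eq_zero.1 (abs_eq_zero.1 (by linarith))
  · exact sub_eq_zero.1 (abs_eq_zero.1 (by linarith))
  · linarith

end CartanAux
namespace CartanAux

noncomputable def cl (lo hi : ℝ → ℝ) (a b t : ℝ) : ℝ := max (lo t) (min (hi t) (a + b * t))

lemma cl_mem {lo hi : ℝ → ℝ} {a b t : ℝ} (h : lo t ≤ hi t) :
    lo t ≤ cl lo hi a b t ∧ cl lo hi a b t ≤ hi t :=
  ⟨le_max_left _ _, max_le h (min_le_left _ _)⟩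

lemma cl_cont {lo hi : ℝ → ℝ} (hlo : Continuous lo) (hhi : Continuous hi) :
    Continuous (fun p : ℝ × ℝ × ℝ => cl lo hi p.1 p.2.1 p.2.2) := by
  unfold cl; fun_prop

lemma cl_cont' {lo hi : ℝ → ℝ} (hlo : Continuous lo) (hhi : Continuous hi) (a b : ℝ) :
    Continuous (fun t => cl lo hi a b t) := by
  unfold cl; fun_prop

lemma int_sq_sub {g : ℝ → ℝ} (hg : Continuous g) (a b T : ℝ) :
    ∫ t in (0:ℝ)..T, (g t - (a + b * t)) ^ 2 =
      (∫ t in (0:ℝ)..T, g t ^ 2) - 2 * a * (∫ t in (0:ℝ)..T, g t)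
        - 2 * b * (∫ t in (0:ℝ)..T, t * g t) + ∫ t in (0:ℝ)..T, (a + b * t) ^ 2 := by
  have i1 : IntervalIntegrable (fun t => g t ^ 2) volume 0 T :=
    Continuous.intervalIntegrable (by fun_prop) _ _
  have i2 : IntervalIntegrable (fun t => 2 * a * g t) volume 0 T :=
    Continuous.intervalIntegrable (by fun_prop) _ _
  have i3 : IntervalIntegrable (fun t => 2 * b * (t * g t)) volume 0 T :=
    Continuous.intervalIntegrable (by fun_prop) _ _
  have i4 : IntervalIntegrable (fun t => (a + b * t) ^ 2) volume 0 T :=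
    Continuous.intervalIntegrable (by fun_prop) _ _
  rw [← intervalIntegral.integral_const_mul, ← intervalIntegral.integral_const_mul,
    ← intervalIntegral.integral_sub i1 i2, ← intervalIntegral.integral_sub (i1.sub i2) i3,
    ← intervalIntegral.integral_add ((i1.sub i2).sub i3) i4]
  congr 1
  ext t
  ring

lemma cl_min {lo hi y : ℝ → ℝ} (hlo : Continuous lo) (hhi : Continuous hi) (hy : Continuous y)
    {T a b : ℝ} (hT : 0 ≤ T) (h : ∀ t ∈ Icc 0 T, lo t ≤ y t ∧ y t ≤ hi t)
    (hA : ∫ t in (0:ℝ)..T, cl lo hi a b t = ∫ t in (0:ℝ)..T, y t)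
    (hB : ∫ t in (0:ℝ)..T, t * cl lo hi a b t = ∫ t in (0:ℝ)..T, t * y t) :
    ∫ t in (0:ℝ)..T, cl lo hi a b t ^ 2 ≤ ∫ t in (0:ℝ)..T, y t ^ 2 := by
  have hcl := cl_cont' hlo hhi a b
  have key : ∫ t in (0:ℝ)..T, (cl lo hi a b t - (a + b * t)) ^ 2 ≤
      ∫ t in (0:ℝ)..T, (y t - (a + b * t)) ^ 2 := by
    apply intervalIntegral.integral_mono_on hT
      (Continuous.intervalIntegrable (by fun_prop) _ _)
      (Continuous.intervalIntegrable (by fun_prop) _ _)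
    intro t ht
    obtain ⟨h1, h2⟩ := h t ht
    apply sq_le_sq.2
    unfold cl
    rcases le_total (a + b * t) (lo t) with h3 | h3
    · rw [min_eq_right (by linarith), max_eq_left h3, abs_of_nonneg (by linarith),
        abs_of_nonneg (by linarith)]
      linarith
    · rcases le_total (a + b * t) (hi t) with h4 | h4
      · rw [min_eq_right h4, max_eq_right h3]; simp
      · rw [min_eq_left h4, max_eq_right (by linarith), abs_of_nonpos (by linarith),
          abs_of_nonpos (by linarith)]
        linarith
  rw [int_sq_sub hcl, int_sq_sub hy, hA, hB] at key
  linarith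

lemma sign_change {w : ℝ → ℝ} (hw : Continuous w) {T : ℝ} (hT : 0 ≤ T)
    (h : ∀ t ∈ Icc 0 T, ∀ t' ∈ Icc 0 T, t' ≤ t → 0 < w t → 0 ≤ w t')
    (h0 : ∫ t in (0:ℝ)..T, w t = 0) : ∫ t in (0:ℝ)..T, t * w t ≤ 0 := by
  obtain ⟨r, hr⟩ : ∃ r : ℝ, ∀ t ∈ Icc 0 T, (t - r) * w t ≤ 0 := by
    by_cases hne : ∃ t ∈ Icc 0 T, 0 < w t
    · let Z : Set ℝ := {t | t ∈ Icc 0 T ∧ 0 < w t}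
      have hZb : BddAbove Z := ⟨T, fun t ht => ht.1.2⟩
      refine ⟨sSup Z, fun t ht => ?_⟩
      rcases lt_trichotomy t (sSup Z) with h1 | h1 | h1
      · obtain ⟨t', ht', hlt⟩ := exists_lt_of_lt_csSup (by obtain ⟨t, h⟩ := hne; exact ⟨t, h⟩) h1
        have := h t' ht'.1 t ht hlt.le ht'.2
        exact mul_nonpos_of_nonpos_of_nonneg (by linarith) this
      · rw [h1]; simp
      · have : w t ≤ 0 := by
          by_contra hcon
          push Not at hcon
          have : t ≤ sSup Z := le_csSup hZb ⟨ht, hcon⟩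
          linarith
        exact mul_nonpos_of_nonneg_of_nonpos (by linarith) this
    · push Not at hne
      exact ⟨0, fun t ht => mul_nonpos_of_nonneg_of_nonpos (by linarith [ht.1]) (hne t ht)⟩
  have e : ∫ t in (0:ℝ)..T, t * w t = ∫ t in (0:ℝ)..T, (t - r) * w t := by
    have : ∫ t in (0:ℝ)..T, (t - r) * w t =
        (∫ t in (0:ℝ)..T, t * w t) - r * ∫ t in (0:ℝ)..T, w t := by
      rw [← intervalIntegral.integral_const_mul, ← intervalIntegral.integral_sub
        (Continuous.intervalIntegrable (by fun_prop) _ _)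
        (Continuous.intervalIntegrable (by fun_prop) _ _)]
      congr 1; ext t; ring
    rw [this, h0]; ring
  rw [e]
  have := intervalIntegral.integral_mono_on (μ := volume) (f := fun t => (t - r) * w t)
    (g := fun _ => 0) hT
    (Continuous.intervalIntegrable (by fun_prop) _ _)
    (Continuous.intervalIntegrable (by fun_prop) _ _) hr
  simpa using this

lemma exists_line {lo hi y : ℝ → ℝ} (hlo : Continuous lo) (hhi : Continuous hi)
    (hy : Continuous y) (hyL : ∀ s t, |y s - y t| ≤ |s - t|) {T M : ℝ} (hT : 0 ≤ T)
    (h : ∀ t ∈ Icc 0 T, lo t ≤ y t ∧ y t ≤ hi t)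
    (hM : ∀ t ∈ Icc 0 T, -M + t ≤ lo t ∧ hi t ≤ M - t) :
    ∃ a ∈ Icc (-M) M, ∃ b ∈ Icc (-1:ℝ) 1,
      ∫ t in (0:ℝ)..T, cl lo hi a b t = ∫ t in (0:ℝ)..T, y t ∧
      ∫ t in (0:ℝ)..T, t * cl lo hi a b t = ∫ t in (0:ℝ)..T, t * y t := by
  have hcl := cl_cont hlo hhi
  have hcA : Continuous (fun p : ℝ × ℝ => ∫ t in (0:ℝ)..T, cl lo hi p.1 p.2 t) := by
    apply intervalIntegral.continuous_parametric_intervalIntegral_of_continuous'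
    exact hcl.comp (f := fun q : (ℝ × ℝ) × ℝ => (q.1.1, q.1.2, q.2)) (by fun_prop)
  have hcB : Continuous (fun p : ℝ × ℝ => ∫ t in (0:ℝ)..T, t * cl lo hi p.1 p.2 t) := by
    apply intervalIntegral.continuous_parametric_intervalIntegral_of_continuous'
    exact continuous_snd.mul
      (hcl.comp (f := fun q : (ℝ × ℝ) × ℝ => (q.1.1, q.1.2, q.2)) (by fun_prop))
  have hM0 : -M ≤ M := by
    have h1 := hM 0 ⟨le_rfl, hT⟩
    have h2 := h 0 ⟨le_rfl, hT⟩
    linarith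
  have hint : ∀ a b, IntervalIntegrable (fun t => cl lo hi a b t) volume 0 T := fun a b =>
    (cl_cont' hlo hhi a b).intervalIntegrable _ _
  -- for each slope a suitable height
  have hA : ∀ b ∈ Icc (-1:ℝ) 1, ∃ a ∈ Icc (-M) M,
      ∫ t in (0:ℝ)..T, cl lo hi a b t = ∫ t in (0:ℝ)..T, y t := by
    intro b hb
    have hcont : ContinuousOn (fun a => ∫ t in (0:ℝ)..T, cl lo hi a b t) (Icc (-M) M) :=
      (hcA.comp (f := fun a => (a, b)) (by fun_prop)).continuousOn
    apply intermediate_value_Icc hM0 hcont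
    constructor
    · apply intervalIntegral.integral_mono_on hT (hint _ _) (hy.intervalIntegrable _ _)
      intro t ht
      obtain ⟨h1, h2⟩ := h t ht
      obtain ⟨h3, h4⟩ := hM t ht
      have : b * t ≤ t := by nlinarith [hb.2, ht.1]
      exact max_le h1 ((min_le_right _ _).trans (by linarith))
    · apply intervalIntegral.integral_mono_on hT (hy.intervalIntegrable _ _) (hint _ _)
      intro t ht
      obtain ⟨h1, h2⟩ := h t ht
      obtain ⟨h3, h4⟩ := hM t ht
      have : -t ≤ b * t := by nlinarith [hb.1, ht.1]
      exact le_max_of_le_right (le_min h2 (by linarith))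
  have hsub : ∀ a b, (∫ t in (0:ℝ)..T, cl lo hi a b t = ∫ t in (0:ℝ)..T, y t) →
      ∫ t in (0:ℝ)..T, (y t - cl lo hi a b t) = 0 := by
    intro a b hab
    rw [intervalIntegral.integral_sub (hy.intervalIntegrable _ _) (hint _ _), hab, sub_self]
  have hsub' : ∀ a b, ∫ t in (0:ℝ)..T, t * (y t - cl lo hi a b t) =
      (∫ t in (0:ℝ)..T, t * y t) - ∫ t in (0:ℝ)..T, t * cl lo hi a b t := by
    intro a b
    have := cl_cont' hlo hhi a b
    rw [← intervalIntegral.integral_sub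
        (Continuous.intervalIntegrable (by fun_prop) _ _)
        (Continuous.intervalIntegrable (by fun_prop) _ _)]
    congr 1; ext t; ring
  have hB1 : ∀ a, (∫ t in (0:ℝ)..T, cl lo hi a 1 t = ∫ t in (0:ℝ)..T, y t) →
      ∫ t in (0:ℝ)..T, t * y t ≤ ∫ t in (0:ℝ)..T, t * cl lo hi a 1 t := by
    intro a ha
    have hcl' := cl_cont' hlo hhi a 1
    have := sign_change (w := fun t => y t - cl lo hi a 1 t) (by fun_prop) hT (by
      intro t ht t' ht' htt hw
      have hw' : cl lo hi a 1 t < y t := by linarith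
      have h1 := (h t ht).2
      have h2 : min (hi t) (a + 1 * t) < y t := lt_of_le_of_lt (le_max_right _ _) hw'
      have h3 : a + 1 * t < y t := by
        rcases min_lt_iff.1 h2 with h3 | h3
        · linarith
        · exact h3
      have h4 := (abs_le.1 (hyL t t')).2
      rw [abs_of_nonneg (by linarith)] at h4
      apply sub_nonneg.2
      exact max_le (h t' ht').1 ((min_le_right _ _).trans (by linarith))) (hsub a 1 ha)
    rw [hsub'] at this
    linarith
  have hB2 : ∀ a, (∫ t in (0:ℝ)..T, cl lo hi a (-1) t = ∫ t in (0:ℝ)..T, y t) →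
      ∫ t in (0:ℝ)..T, t * cl lo hi a (-1) t ≤ ∫ t in (0:ℝ)..T, t * y t := by
    intro a ha
    have hcl' := cl_cont' hlo hhi a (-1)
    have := sign_change (w := fun t => -(y t - cl lo hi a (-1) t)) (by fun_prop) hT (by
      intro t ht t' ht' htt hw
      have hw' : y t < cl lo hi a (-1) t := by linarith
      have h1 := (h t ht).1
      have h2 : y t < min (hi t) (a + -1 * t) := by
        rcases lt_max_iff.1 hw' with h2 | h2
        · linarith
        · exact h2
      have h3 : y t < a + -1 * t := lt_of_lt_of_le h2 (min_le_right _ _)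
      have h4 := (abs_le.1 (hyL t t')).1
      rw [abs_of_nonneg (by linarith)] at h4
      have : y t' ≤ cl lo hi a (-1) t' :=
        le_max_of_le_right (le_min (h t' ht').2 (by linarith))
      linarith) (by rw [intervalIntegral.integral_neg, hsub a (-1) ha, neg_zero])
    have e : ∫ t in (0:ℝ)..T, t * -(y t - cl lo hi a (-1) t) =
        -∫ t in (0:ℝ)..T, t * (y t - cl lo hi a (-1) t) := by
      rw [← intervalIntegral.integral_neg]; congr 1; ext t; ring
    rw [e, hsub'] at this
    linarith
  -- closed cover of the slopes
  let K : Set (ℝ × ℝ) := Icc (-M) M ×ˢ Icc (-1:ℝ) 1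
  have hK : IsCompact K := isCompact_Icc.prod isCompact_Icc
  let U : Set (ℝ × ℝ) := K ∩ ({p | ∫ t in (0:ℝ)..T, cl lo hi p.1 p.2 t = ∫ t in (0:ℝ)..T, y t} ∩
    {p | ∫ t in (0:ℝ)..T, t * cl lo hi p.1 p.2 t ≤ ∫ t in (0:ℝ)..T, t * y t})
  let V : Set (ℝ × ℝ) := K ∩ ({p | ∫ t in (0:ℝ)..T, cl lo hi p.1 p.2 t = ∫ t in (0:ℝ)..T, y t} ∩
    {p | ∫ t in (0:ℝ)..T, t * y t ≤ ∫ t in (0:ℝ)..T, t * cl lo hi p.1 p.2 t})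
  have hU : IsCompact U := hK.inter_right
    ((isClosed_eq hcA continuous_const).inter (isClosed_le hcB continuous_const))
  have hV : IsCompact V := hK.inter_right
    ((isClosed_eq hcA continuous_const).inter (isClosed_le continuous_const hcB))
  have hU' : IsClosed (Prod.snd '' U) := (hU.image continuous_snd).isClosed
  have hV' : IsClosed (Prod.snd '' V) := (hV.image continuous_snd).isClosed
  have hcover : Icc (-1:ℝ) 1 ⊆ Prod.snd '' U ∪ Prod.snd '' V := by
    intro b hb
    obtain ⟨a, ha, hab⟩ := hA b hb
    rcases le_total (∫ t in (0:ℝ)..T, t * cl lo hi a b t) (∫ t in (0:ℝ)..T, t * y t) with h1 | h1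
    · left; exact ⟨(a, b), ⟨⟨ha, hb⟩, hab, h1⟩, rfl⟩
    · right; exact ⟨(a, b), ⟨⟨ha, hb⟩, hab, h1⟩, rfl⟩
  have hm1 : (-1:ℝ) ∈ Icc (-1:ℝ) 1 := by constructor <;> norm_num
  have hp1 : (1:ℝ) ∈ Icc (-1:ℝ) 1 := by constructor <;> norm_num
  have hUne : (Icc (-1:ℝ) 1 ∩ Prod.snd '' U).Nonempty := by
    obtain ⟨a, ha, hab⟩ := hA (-1) hm1
    exact ⟨-1, hm1, (a, -1), ⟨⟨ha, hm1⟩, hab, hB2 a hab⟩, rfl⟩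
  have hVne : (Icc (-1:ℝ) 1 ∩ Prod.snd '' V).Nonempty := by
    obtain ⟨a, ha, hab⟩ := hA 1 hp1
    exact ⟨1, hp1, (a, 1), ⟨⟨ha, hp1⟩, hab, hB1 a hab⟩, rfl⟩
  obtain ⟨b, hb, ⟨⟨a1, b1⟩, hu, rfl⟩, ⟨⟨a2, b2⟩, hv, hbb⟩⟩ :=
    isPreconnected_closed_iff.1 isPreconnected_Icc _ _ hU' hV' hcover hUne hVne
  simp only at hbb hb
  subst hbb
  obtain ⟨⟨ha1, -⟩, hA1, hB1'⟩ := hu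
  obtain ⟨⟨ha2, -⟩, hA2, hB2'⟩ := hv
  simp only [mem_ofPred_eq] at ha1 hA1 hB1' ha2 hA2 hB2'
  have hmono : ∀ a a', a ≤ a' → ∫ t in (0:ℝ)..T, cl lo hi a b2 t ≤
      ∫ t in (0:ℝ)..T, cl lo hi a' b2 t := by
    intro a a' haa
    apply intervalIntegral.integral_mono_on hT (hint _ _) (hint _ _)
    intro t _
    exact max_le_max_left _ (min_le_min_left _ (by linarith))
  have hcont : ContinuousOn (fun a => ∫ t in (0:ℝ)..T, t * cl lo hi a b2 t) (uIcc a1 a2) :=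
    (hcB.comp (f := fun a => (a, b2)) (by fun_prop)).continuousOn
  obtain ⟨a, ha, hBa⟩ := intermediate_value_uIcc hcont
    (mem_uIcc.2 (Or.inl ⟨hB1', hB2'⟩))
  refine ⟨a, uIcc_subset_Icc ha1 ha2 ha, b2, hb, ?_, hBa⟩
  rcases mem_uIcc.1 ha with h1 | h1
  · exact le_antisymm (hA2 ▸ hmono _ _ h1.2) (hA1 ▸ hmono _ _ h1.1)
  · exact le_antisymm (hA1 ▸ hmono _ _ h1.2) (hA2 ▸ hmono _ _ h1.1)

end CartanAux
namespace CartanAux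

def Exact (g : ℝ → ℝ) (S : St) : Prop :=
  S.A = ∫ s in (0:ℝ)..S.t, g s ∧ S.B = ∫ s in (0:ℝ)..S.t, s * g s ∧
  S.Q = ∫ s in (0:ℝ)..S.t, g s ^ 2

lemma int_poly3 (p l c0 c1 c2 : ℝ) :
    ∫ t in p..(p + l), (c0 + c1 * (t - p) + c2 * (t - p) ^ 2) =
      c0 * l + c1 * l ^ 2 / 2 + c2 * l ^ 3 / 3 := by
  have h : ∀ t ∈ uIcc p (p + l), HasDerivAt
      (fun t => c0 * (t - p) + c1 * (t - p) ^ 2 / 2 + c2 * (t - p) ^ 3 / 3)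
      (c0 + c1 * (t - p) + c2 * (t - p) ^ 2) t := by
    intro t _
    have h1 : HasDerivAt (fun t => t - p) 1 t := (hasDerivAt_id t).sub_const p
    have := ((h1.const_mul c0).add (((h1.pow 2).const_mul c1).div_const 2)).add
      (((h1.pow 3).const_mul c2).div_const 3)
    exact this.congr_deriv (by norm_num; ring)
  rw [intervalIntegral.integral_eq_sub_of_hasDerivAt h
    (Continuous.intervalIntegrable (by fun_prop) _ _)]
  ring

lemma Exact.step {g : ℝ → ℝ} (hg : Continuous g) {S : St} (h : Exact g S) {σ l : ℝ}
    (hσ : σ = 1 ∨ σ = -1) (hl : 0 ≤ l)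
    (hs : ∀ t ∈ Icc S.t (S.t + l), g t = S.x + σ * (t - S.t)) : Exact g (step σ l S) := by
  obtain ⟨h1, h2, h3⟩ := h
  have hσ2 : σ ^ 2 = 1 := by rcases hσ with rfl | rfl <;> norm_num
  have hsplit : ∀ f : ℝ → ℝ, Continuous f → ∫ s in (0:ℝ)..(S.t + l), f s =
      (∫ s in (0:ℝ)..S.t, f s) + ∫ s in S.t..(S.t + l), f s := fun f hf =>
    (intervalIntegral.integral_add_adjacent_intervals (hf.intervalIntegrable _ _)
      (hf.intervalIntegrable _ _)).symm
  have hu : uIcc S.t (S.t + l) = Icc S.t (S.t + l) := uIcc_of_le (by linarith)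
  refine ⟨?_, ?_, ?_⟩ <;> simp only [CartanAux.step]
  · rw [hsplit _ hg, ← h1, intervalIntegral.integral_congr
      (g := fun t => S.x + σ * (t - S.t) + 0 * (t - S.t) ^ 2), int_poly3]
    · ring
    · intro t ht
      rw [hu] at ht
      simp only [hs t ht]; ring
  · rw [hsplit (fun s => s * g s) (by fun_prop), ← h2, intervalIntegral.integral_congr
      (g := fun t => S.t * S.x + (S.x + σ * S.t) * (t - S.t) + σ * (t - S.t) ^ 2), int_poly3]
    · ring
    · intro t ht
      rw [hu] at ht
      simp only [hs t ht]; ring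
  · rw [hsplit (fun s => g s ^ 2) (by fun_prop), ← h3, intervalIntegral.integral_congr
      (g := fun t => S.x ^ 2 + (2 * σ * S.x) * (t - S.t) + 1 * (t - S.t) ^ 2), int_poly3]
    · ring
    · intro t ht
      rw [hu] at ht
      simp only [hs t ht]; linear_combination (t - S.t) ^ 2 * hσ2

noncomputable def y4 (a b c t : ℝ) : ℝ := min (max (min t (2 * a - t)) (t - 2 * b)) (2 * (a + c) - t)

lemma y4_exact {a b c d : ℝ} (ha : 0 ≤ a) (hb : 0 ≤ b) (hc : 0 ≤ c) (hd : 0 ≤ d) :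
    Exact (y4 a b c) (st4 1 a b c d) := by
  have hcont : Continuous (y4 a b c) := by unfold y4; fun_prop
  have h0 : Exact (y4 a b c) St0 := by simp [Exact, St0]
  refine Exact.step hcont (Exact.step hcont (Exact.step hcont (Exact.step hcont h0 ?_ ?_ ?_)
    ?_ ?_ ?_) ?_ ?_ ?_) ?_ ?_ ?_ <;> first | assumption | skip
  · simp
  · intro t ht
    simp only [CartanAux.step, St0, y4] at ht ⊢
    rw [min_eq_left (a := t) (by linarith [ht.2]), max_eq_left (by linarith [ht.1]),
      min_eq_left (by linarith [ht.2])]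
    ring
  · simp
  · intro t ht
    simp only [CartanAux.step, St0, y4] at ht ⊢
    rw [min_eq_right (a := t) (by linarith [ht.1]), max_eq_left (by linarith [ht.2]),
      min_eq_left (by linarith [ht.2])]
    ring
  · simp
  · intro t ht
    simp only [CartanAux.step, St0, y4] at ht ⊢
    rw [min_eq_right (a := t) (by linarith [ht.1]), max_eq_right (by linarith [ht.1]),
      min_eq_left (by linarith [ht.2])]
    ring
  · simp
  · intro t ht
    simp only [CartanAux.step, St0, y4] at ht ⊢
    rw [min_eq_right (a := t) (by linarith [ht.1]), max_eq_right (by linarith [ht.1]),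
      min_eq_right (by linarith [ht.1])]
    ring

lemma lip_max {f g : ℝ → ℝ} (hf : ∀ s t, |f s - f t| ≤ |s - t|)
    (hg : ∀ s t, |g s - g t| ≤ |s - t|) : ∀ s t, |max (f s) (g s) - max (f t) (g t)| ≤ |s - t| :=
  fun s t => (abs_max_sub_max_le_max _ _ _ _).trans (max_le (hf s t) (hg s t))

lemma lip_min {f g : ℝ → ℝ} (hf : ∀ s t, |f s - f t| ≤ |s - t|)
    (hg : ∀ s t, |g s - g t| ≤ |s - t|) : ∀ s t, |min (f s) (g s) - min (f t) (g t)| ≤ |s - t| :=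
  fun s t => (abs_min_sub_min_le_max _ _ _ _).trans (max_le (hf s t) (hg s t))

lemma lip_line {b : ℝ} (hb : b ∈ Icc (-1:ℝ) 1) (a : ℝ) :
    ∀ s t, |(a + b * s) - (a + b * t)| ≤ |s - t| := by
  intro s t
  have : (a + b * s) - (a + b * t) = b * (s - t) := by ring
  rw [this, abs_mul]
  have h1 : |b| ≤ 1 := abs_le.2 hb
  nlinarith [abs_nonneg (s - t)]

lemma lip_up (a : ℝ) : ∀ s t : ℝ, |(a + s) - (a + t)| ≤ |s - t| := by
  intro s t; simp

lemma lip_down (a : ℝ) : ∀ s t : ℝ, |(a - s) - (a - t)| ≤ |s - t| := by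
  intro s t
  rw [abs_sub_comm s t]; simp

noncomputable def loF (X T s t : ℝ) : ℝ := max (min t (2 * s - t)) (X - T + t)
noncomputable def hiF (X T t : ℝ) : ℝ := min t (X + T - t)

lemma y4_lip (a b c : ℝ) : ∀ s t, |y4 a b c s - y4 a b c t| ≤ |s - t| := by
  unfold y4
  refine lip_min (f := fun t => max (min t (2 * a - t)) (t - 2 * b)) (g := fun t => 2 * (a + c) - t)
    (lip_max (f := fun t => min t (2 * a - t)) (g := fun t => t - 2 * b)
      (lip_min (f := fun t => t) (g := fun t => 2 * a - t) (fun s t => le_rfl) (lip_down _)) ?_)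
      (lip_down _)
  intro s t; simp

lemma main_plus {ξ : ℝ → ℝ} (hξ : ∀ s t, |ξ s - ξ t| ≤ |s - t|) (hc : Continuous ξ)
    (hξ0 : ξ 0 = 0) {T : ℝ} (hT : 0 ≤ T) {p q r d : ℝ}
    (hp : 0 ≤ p) (hq : 0 ≤ q) (hr : 0 ≤ r) (hd : 0 ≤ d)
    (ht : (st4 1 p q r d).t = T) (hx : (st4 1 p q r d).x = ξ T)
    (hA : (st4 1 p q r d).A = ∫ s in (0:ℝ)..T, ξ s)
    (hB : (st4 1 p q r d).B = ∫ s in (0:ℝ)..T, s * ξ s)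
    (hQ : ∫ s in (0:ℝ)..T, ξ s ^ 2 ≤ (st4 1 p q r d).Q) :
    ∃ s a b : ℝ, 0 ≤ s ∧ s ≤ T ∧ 2 * s ≤ ξ T + T ∧ b ∈ Icc (-1:ℝ) 1 ∧
      ∫ t in (0:ℝ)..T, cl (loF (ξ T) T s) (hiF (ξ T) T) a b t = ∫ t in (0:ℝ)..T, ξ t ∧
      ∫ t in (0:ℝ)..T, t * cl (loF (ξ T) T s) (hiF (ξ T) T) a b t = ∫ t in (0:ℝ)..T, t * ξ t ∧
      ∫ t in (0:ℝ)..T, cl (loF (ξ T) T s) (hiF (ξ T) T) a b t ^ 2 = ∫ t in (0:ℝ)..T, ξ t ^ 2 := by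
  obtain ⟨eA, eB, eQ⟩ := y4_exact hp hq hr hd
  rw [ht] at eA eB eQ
  rw [hA] at eA
  rw [hB] at eB
  rw [eQ] at hQ
  have hT' : p + q + r + d = T := by rw [← ht]; simp only [st4, step, St0]; ring
  have hX' : p - q + r - d = ξ T := by rw [← hx]; simp only [st4, step, St0]; ring
  obtain ⟨X, hX⟩ : ∃ X, ξ T = X := ⟨_, rfl⟩
  rw [hX] at hX' ⊢
  have hyc : Continuous (y4 p q r) := by unfold y4; fun_prop
  have hloc : ∀ s, Continuous (loF X T s) := fun s => by unfold loF; fun_prop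
  have hhic : Continuous (hiF X T) := by unfold hiF; fun_prop
  have hclc : Continuous (fun z : (ℝ × ℝ × ℝ) × ℝ => cl (loF X T z.1.1) (hiF X T) z.1.2.1 z.1.2.2 z.2) := by
    unfold cl loF hiF; fun_prop
  have hcA : Continuous (fun z : ℝ × ℝ × ℝ => ∫ t in (0:ℝ)..T, cl (loF X T z.1) (hiF X T) z.2.1 z.2.2 t) := by
    apply intervalIntegral.continuous_parametric_intervalIntegral_of_continuous'
    exact hclc
  have hcB : Continuous (fun z : ℝ × ℝ × ℝ => ∫ t in (0:ℝ)..T, t * cl (loF X T z.1) (hiF X T) z.2.1 z.2.2 t) := by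
    apply intervalIntegral.continuous_parametric_intervalIntegral_of_continuous'
    exact continuous_snd.mul hclc
  have hcQ : Continuous (fun z : ℝ × ℝ × ℝ => ∫ t in (0:ℝ)..T, cl (loF X T z.1) (hiF X T) z.2.1 z.2.2 t ^ 2) := by
    apply intervalIntegral.continuous_parametric_intervalIntegral_of_continuous'
    exact hclc.pow 2
  have hybd : ∀ s ∈ Icc 0 p, ∀ t ∈ Icc 0 T, loF X T s t ≤ y4 p q r t ∧ y4 p q r t ≤ hiF X T t := by
    intro s hs t ht
    obtain ⟨ht0, htT⟩ := ht
    obtain ⟨hs0, hsp⟩ := hs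
    have hmin : min t (2 * s - t) ≤ min t (2 * p - t) := min_le_min_left _ (by linarith)
    unfold loF y4 hiF
    constructor
    · apply le_min
      · apply max_le_max hmin; linarith
      · apply max_le
        · exact (min_le_right _ _).trans (by linarith)
        · linarith
    · apply le_min
      · refine (min_le_left _ _).trans (max_le (min_le_left _ _) (by linarith))
      · exact (min_le_right _ _).trans (by linarith)
  have hMbd : ∀ s ∈ Icc 0 p, ∀ t ∈ Icc 0 T, -(4 * T) + t ≤ loF X T s t ∧ hiF X T t ≤ 4 * T - t := by
    intro s hs t ht
    obtain ⟨ht0, htT⟩ := ht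
    obtain ⟨hs0, hsp⟩ := hs
    unfold loF hiF
    constructor
    · exact le_max_of_le_right (by linarith)
    · exact (min_le_left _ _).trans (by linarith)
  have hex : ∀ s ∈ Icc 0 p, ∃ a ∈ Icc (-(4 * T)) (4 * T), ∃ b ∈ Icc (-1:ℝ) 1,
      ∫ t in (0:ℝ)..T, cl (loF X T s) (hiF X T) a b t = ∫ t in (0:ℝ)..T, ξ t ∧
      ∫ t in (0:ℝ)..T, t * cl (loF X T s) (hiF X T) a b t = ∫ t in (0:ℝ)..T, t * ξ t := by
    intro s hs
    rw [eA, eB]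
    exact exists_line (hloc s) hhic hyc (y4_lip p q r) hT (hybd s hs) (hMbd s hs)
  let K : Set (ℝ × ℝ × ℝ) := Icc 0 p ×ˢ Icc (-(4 * T)) (4 * T) ×ˢ Icc (-1:ℝ) 1
  have hK : IsCompact K := isCompact_Icc.prod (isCompact_Icc.prod isCompact_Icc)
  let E : Set (ℝ × ℝ × ℝ) :=
    {z | ∫ t in (0:ℝ)..T, cl (loF X T z.1) (hiF X T) z.2.1 z.2.2 t = ∫ t in (0:ℝ)..T, ξ t} ∩
    {z | ∫ t in (0:ℝ)..T, t * cl (loF X T z.1) (hiF X T) z.2.1 z.2.2 t = ∫ t in (0:ℝ)..T, t * ξ t}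
  have hE : IsClosed E := (isClosed_eq hcA continuous_const).inter (isClosed_eq hcB continuous_const)
  let U : Set (ℝ × ℝ × ℝ) := K ∩ (E ∩
    {z | ∫ t in (0:ℝ)..T, cl (loF X T z.1) (hiF X T) z.2.1 z.2.2 t ^ 2 ≤ ∫ t in (0:ℝ)..T, ξ t ^ 2})
  let V : Set (ℝ × ℝ × ℝ) := K ∩ (E ∩
    {z | ∫ t in (0:ℝ)..T, ξ t ^ 2 ≤ ∫ t in (0:ℝ)..T, cl (loF X T z.1) (hiF X T) z.2.1 z.2.2 t ^ 2})
  have hU : IsCompact U := hK.inter_right (hE.inter (isClosed_le hcQ continuous_const))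
  have hV : IsCompact V := hK.inter_right (hE.inter (isClosed_le continuous_const hcQ))
  have hU' : IsClosed (Prod.fst '' U) := (hU.image continuous_fst).isClosed
  have hV' : IsClosed (Prod.fst '' V) := (hV.image continuous_fst).isClosed
  have hcover : Icc 0 p ⊆ Prod.fst '' U ∪ Prod.fst '' V := by
    intro s hs
    obtain ⟨a, ha, b, hb, h1, h2⟩ := hex s hs
    rcases le_total (∫ t in (0:ℝ)..T, cl (loF X T s) (hiF X T) a b t ^ 2)
      (∫ t in (0:ℝ)..T, ξ t ^ 2) with h3 | h3
    · left; exact ⟨(s, a, b), ⟨⟨hs, ha, hb⟩, ⟨h1, h2⟩, h3⟩, rfl⟩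
    · right; exact ⟨(s, a, b), ⟨⟨hs, ha, hb⟩, ⟨h1, h2⟩, h3⟩, rfl⟩
  have h0p : (0:ℝ) ∈ Icc 0 p := ⟨le_rfl, hp⟩
  have hpp : p ∈ Icc 0 p := ⟨hp, le_rfl⟩
  have hUne : (Icc 0 p ∩ Prod.fst '' U).Nonempty := by
    obtain ⟨a, ha, b, hb, h1, h2⟩ := hex 0 h0p
    refine ⟨0, h0p, (0, a, b), ⟨⟨h0p, ha, hb⟩, ⟨h1, h2⟩, ?_⟩, rfl⟩
    apply cl_min (hloc 0) hhic hc hT _ h1 h2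
    intro t ht
    have k1 := hξ t 0
    have k2 := hξ t T
    rw [hξ0, sub_zero, sub_zero, abs_of_nonneg ht.1] at k1
    rw [hX, abs_sub_comm t T, abs_of_nonneg (by linarith [ht.2] : 0 ≤ T - t)] at k2
    rw [abs_le] at k1 k2
    unfold loF hiF
    constructor
    · apply max_le
      · exact (min_le_right _ _).trans (by linarith)
      · linarith
    · apply le_min <;> linarith
  have hVne : (Icc 0 p ∩ Prod.fst '' V).Nonempty := by
    have hcl : ∀ t ∈ uIcc 0 T, cl (loF X T p) (hiF X T) (-(2 * q)) 1 t = y4 p q r t := by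
      intro t ht
      rw [uIcc_of_le hT] at ht
      obtain ⟨ht0, htT⟩ := ht
      unfold cl loF hiF y4
      rw [show X - T + t = t - 2 * q - 2 * d by linarith,
        show X + T - t = 2 * (p + r) - t by linarith,
        show -(2 * q) + 1 * t = t - 2 * q by ring]
      rcases le_total t (2 * p - t) with h1 | h1
      · rw [min_eq_left h1, max_eq_left (a := t) (b := t - 2 * q - 2 * d) (by linarith),
          max_eq_left (a := t) (b := t - 2 * q) (by linarith),
          min_eq_left (a := t) (b := 2 * (p + r) - t) (by linarith)]
        exact max_eq_left ((min_le_right _ _).trans (by linarith))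
      · rw [min_eq_right h1]
        rcases le_total (t - 2 * q) (2 * p - t) with h2 | h2
        · rw [max_eq_left h2, max_eq_left (a := 2 * p - t) (by linarith), max_eq_left,
            min_eq_left (by linarith)]
          exact (min_le_right _ _).trans (by linarith)
        · rw [max_eq_right h2]
          rcases le_total (t - 2 * q) (2 * (p + r) - t) with h3 | h3
          · rw [min_eq_left h3, min_eq_right (le_min (by linarith) h3), max_eq_right]
            apply max_le <;> linarith
          · rw [min_eq_right h3, min_eq_right (a := t) (by linarith), min_eq_left h3,
              max_eq_right]
            apply max_le <;> linarith
    refine ⟨p, hpp, (p, -(2 * q), 1), ⟨⟨hpp, ⟨by linarith, by linarith⟩, by norm_num⟩,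
      ⟨?_, ?_⟩, ?_⟩, rfl⟩
    · rw [eA]; exact intervalIntegral.integral_congr hcl
    · rw [eB]
      exact intervalIntegral.integral_congr (fun t ht => by simp only [hcl t ht])
    · refine hQ.trans (le_of_eq ?_)
      exact intervalIntegral.integral_congr (fun t ht => by simp only [hcl t ht])
  obtain ⟨s, hs, ⟨⟨s1, a1, b1⟩, hu, rfl⟩, ⟨⟨s2, a2, b2⟩, hv, hss⟩⟩ :=
    isPreconnected_closed_iff.1 isPreconnected_Icc _ _ hU' hV' hcover hUne hVne
  simp only at hss hs
  subst hss
  obtain ⟨⟨-, ha1, hb1⟩, ⟨hA1, hB1⟩, hQ1⟩ := hu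
  obtain ⟨⟨-, ha2, hb2⟩, ⟨hA2, hB2⟩, hQ2⟩ := hv
  simp only [mem_ofPred_eq] at hA1 hB1 hQ1 hA2 hB2 hQ2
  refine ⟨s2, a2, b2, hs.1, by linarith [hs.2], by linarith [hs.2], hb2, hA2, hB2, ?_⟩
  apply le_antisymm _ hQ2
  refine le_trans ?_ hQ1
  apply cl_min (hloc s2) hhic (cl_cont' (hloc s2) hhic a1 b1) hT _ (hA2.trans hA1.symm)
    (hB2.trans hB1.symm)
  intro t ht
  have := hybd s2 hs t ht
  exact cl_mem (this.1.trans this.2)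

end CartanAux
namespace CartanAux

def P3 (a b : ℝ) (f : ℝ → ℝ) : Prop :=
  ∃ r1 r2, a ≤ r1 ∧ r1 ≤ r2 ∧ r2 ≤ b ∧ ∃ c1 ∈ Icc (-1:ℝ) 1, ∃ c2 ∈ Icc (-1:ℝ) 1,
    ∃ c3 ∈ Icc (-1:ℝ) 1, ∃ k1 k2 k3 : ℝ,
    (∀ t ∈ Ioo a r1, f t = k1 + c1 * t) ∧ (∀ t ∈ Ioo r1 r2, f t = k2 + c2 * t) ∧
    (∀ t ∈ Ioo r2 b, f t = k3 + c3 * t)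

lemma neg_mem {c : ℝ} (h : c ∈ Icc (-1:ℝ) 1) : -c ∈ Icc (-1:ℝ) 1 :=
  ⟨by linarith [h.2], by linarith [h.1]⟩

lemma P3.neg {a b : ℝ} {f : ℝ → ℝ} (h : P3 a b f) : P3 a b (fun t => -f t) := by
  obtain ⟨r1, r2, h1, h2, h3, c1, hc1, c2, hc2, c3, hc3, k1, k2, k3, e1, e2, e3⟩ := h
  refine ⟨r1, r2, h1, h2, h3, -c1, neg_mem hc1, -c2, neg_mem hc2, -c3, neg_mem hc3,
    -k1, -k2, -k3, ?_, ?_, ?_⟩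
  · intro t ht; simp only [e1 t ht]; ring
  · intro t ht; simp only [e2 t ht]; ring
  · intro t ht; simp only [e3 t ht]; ring

lemma P3.congr {a b : ℝ} {f g : ℝ → ℝ} (h : P3 a b f) (hfg : ∀ t ∈ Icc a b, g t = f t) :
    P3 a b g := by
  obtain ⟨r1, r2, h1, h2, h3, c1, hc1, c2, hc2, c3, hc3, k1, k2, k3, e1, e2, e3⟩ := h
  refine ⟨r1, r2, h1, h2, h3, c1, hc1, c2, hc2, c3, hc3, k1, k2, k3, ?_, ?_, ?_⟩
  · intro t ht; rw [hfg t ⟨by linarith [ht.1], by linarith [ht.2]⟩, e1 t ht]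
  · intro t ht; rw [hfg t ⟨by linarith [ht.1], by linarith [ht.2]⟩, e2 t ht]
  · intro t ht; rw [hfg t ⟨by linarith [ht.1], by linarith [ht.2]⟩, e3 t ht]

lemma crossing {a b : ℝ} (hab : a ≤ b) (k c k' c' : ℝ) (hc : c' ≤ c) :
    ∃ r, a ≤ r ∧ r ≤ b ∧ (∀ t, a < t → t < r → k + c * t ≤ k' + c' * t) ∧
      (∀ t, t < b → r < t → k' + c' * t ≤ k + c * t) := by
  by_cases h1 : k + c * b ≤ k' + c' * b
  · refine ⟨b, hab, le_rfl, ?_, ?_⟩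
    · intro t h2 h3
      nlinarith [mul_nonneg (sub_nonneg.2 hc) (sub_nonneg.2 h3.le)]
    · intro t h2 h3; linarith
  by_cases h2 : k' + c' * a ≤ k + c * a
  · refine ⟨a, le_rfl, hab, ?_, ?_⟩
    · intro t h2 h3; linarith
    · intro t h2 h3
      nlinarith [mul_nonneg (sub_nonneg.2 hc) (sub_nonneg.2 h3.le)]
  push Not at h1 h2
  have hcc : 0 < c - c' := by
    by_contra hcon
    have : c = c' := by linarith
    subst this
    linarith
  obtain ⟨r, hr⟩ : ∃ r, (c - c') * r = k' - k := ⟨(k' - k) / (c - c'), by field_simp⟩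
  refine ⟨r, ?_, ?_, ?_, ?_⟩
  · by_contra hcon
    nlinarith [mul_pos hcc (sub_pos.2 (not_le.1 hcon))]
  · by_contra hcon
    nlinarith [mul_pos hcc (sub_pos.2 (not_le.1 hcon))]
  · intro t _ h3
    nlinarith [mul_pos hcc (sub_pos.2 h3)]
  · intro t _ h3
    nlinarith [mul_pos hcc (sub_pos.2 h3)]

lemma one_mem : (1:ℝ) ∈ Icc (-1:ℝ) 1 := by constructor <;> norm_num
lemma mone_mem : (-1:ℝ) ∈ Icc (-1:ℝ) 1 := by constructor <;> norm_num

lemma P3_min {a b k0 k k2 c : ℝ} (hab : a ≤ b) (hc : c ∈ Icc (-1:ℝ) 1) :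
    P3 a b (fun t => min (min (k0 + 1 * t) (k2 + (-1) * t)) (k + c * t)) := by
  obtain ⟨r1, ha1, hb1, h1, h1'⟩ := crossing hab k0 1 k c hc.2
  obtain ⟨r2, ha2, hb2, h2, h2'⟩ := crossing hab k c k2 (-1) hc.1
  obtain ⟨r3, ha3, hb3, h3, h3'⟩ := crossing hab k0 1 k2 (-1) (by norm_num)
  rcases le_or_gt r1 r2 with h | h
  · refine ⟨r1, r2, ha1, h, hb2, 1, one_mem, c, hc, -1, mone_mem, k0, k, k2, ?_, ?_, ?_⟩
    · intro t ht
      have e1 := h1 t ht.1 ht.2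
      have e2 := h2 t ht.1 (by linarith [ht.2])
      simp only
      rw [min_eq_left (a := k0 + 1 * t) (e1.trans e2), min_eq_left e1]
    · intro t ht
      have e1 := h1' t (by linarith [ht.2]) ht.1
      have e2 := h2 t (by linarith [ht.1]) ht.2
      exact min_eq_right (le_min e1 e2)
    · intro t ht
      have e1 := h1' t ht.2 (by linarith [ht.1])
      have e2 := h2' t ht.2 ht.1
      simp only
      rw [min_eq_right (a := k0 + 1 * t) (e2.trans e1), min_eq_left e2]
  · refine ⟨r3, r3, ha3, le_rfl, hb3, 1, one_mem, c, hc, -1, mone_mem, k0, k, k2, ?_, ?_, ?_⟩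
    · intro t ht
      have e := h3 t ht.1 ht.2
      simp only
      rw [min_eq_left (a := k0 + 1 * t) e, min_eq_left]
      rcases lt_or_ge t r1 with h4 | h4
      · exact h1 t ht.1 h4
      · exact e.trans (h2' t (by linarith [ht.2]) (by linarith))
    · intro t ht; exact absurd (ht.1.trans ht.2) (lt_irrefl _)
    · intro t ht
      have e := h3' t ht.2 ht.1
      simp only
      rw [min_eq_right (a := k0 + 1 * t) e, min_eq_left]
      rcases lt_or_ge t r1 with h4 | h4
      · exact e.trans (h1 t (by linarith [ht.1]) h4)
      · exact (h2' t ht.2 (by linarith))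

lemma P3_max {a b k0 k k2 c : ℝ} (hab : a ≤ b) (hc : c ∈ Icc (-1:ℝ) 1) :
    P3 a b (fun t => max (max (k0 + (-1) * t) (k2 + 1 * t)) (k + c * t)) := by
  refine (P3_min (k0 := -k0) (k := -k) (k2 := -k2) hab (neg_mem hc)).neg.congr ?_
  intro t _
  rw [show -k0 + 1 * t = -(k0 + (-1) * t) by ring, show -k2 + -1 * t = -(k2 + 1 * t) by ring,
    show -k + -c * t = -(k + c * t) by ring, min_neg_neg, min_neg_neg, neg_neg]

lemma P3_par {a b kl kh k c : ℝ} (hab : a ≤ b) (hk : kl ≤ kh) (hc : c ∈ Icc (-1:ℝ) 1) :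
    P3 a b (fun t => max (kl + 1 * t) (min (kh + 1 * t) (k + c * t))) := by
  obtain ⟨r1, ha1, hb1, h1, h1'⟩ := crossing hab kh 1 k c hc.2
  obtain ⟨r2, ha2, hb2, h2, h2'⟩ := crossing hab kl 1 k c hc.2
  rcases le_or_gt r1 r2 with h | h
  · refine ⟨r1, r2, ha1, h, hb2, 1, one_mem, c, hc, 1, one_mem, kh, k, kl, ?_, ?_, ?_⟩
    · intro t ht
      have e1 := h1 t ht.1 ht.2
      simp only
      rw [min_eq_left e1, max_eq_right (by linarith)]
    · intro t ht
      have e1 := h1' t (by linarith [ht.2]) ht.1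
      have e2 := h2 t (by linarith [ht.1]) ht.2
      simp only
      rw [min_eq_right e1, max_eq_right e2]
    · intro t ht
      have e2 := h2' t ht.2 ht.1
      exact max_eq_left ((min_le_right _ _).trans e2)
  · have e1 := h1 ((r1 + r2) / 2) (by linarith) (by linarith)
    have e2 := h2' ((r1 + r2) / 2) (by linarith) (by linarith)
    have e : kl = kh := by linarith
    subst e
    refine ⟨a, a, le_rfl, le_rfl, hab, 1, one_mem, 1, one_mem, 1, one_mem, kl, kl, kl, ?_, ?_, ?_⟩ <;>
    · intro t ht
      exact max_eq_left (min_le_left _ _)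

lemma P3_par' {a b kl kh k c : ℝ} (hab : a ≤ b) (hk : kl ≤ kh) (hc : c ∈ Icc (-1:ℝ) 1) :
    P3 a b (fun t => max (kl + (-1) * t) (min (kh + (-1) * t) (k + c * t))) := by
  refine (P3_par (kl := -kh) (kh := -kl) (k := -k) hab (by linarith) (neg_mem hc)).neg.congr ?_
  intro t _
  rw [show -kh + 1 * t = -(kh + (-1) * t) by ring, show -kl + 1 * t = -(kl + (-1) * t) by ring,
    show -k + -c * t = -(k + c * t) by ring, min_neg_neg, max_neg_neg, neg_neg]
  rcases le_total (k + c * t) (kh + -1 * t) with h | h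
  · rw [min_eq_right h, min_eq_right (max_le (by linarith) h), max_comm]
  · rw [min_eq_left h, max_eq_right (by linarith), min_eq_left (le_max_of_le_right h)]

def P4 (T : ℝ) (f : ℝ → ℝ) : Prop :=
  ∃ s, 0 ≤ s ∧ s ≤ T ∧ (∃ c ∈ Icc (-1:ℝ) 1, ∃ k, ∀ t ∈ Ioo 0 s, f t = k + c * t) ∧ P3 s T f

lemma P4.neg {T : ℝ} {f : ℝ → ℝ} (h : P4 T f) : P4 T (fun t => -f t) := by
  obtain ⟨s, h1, h2, ⟨c, hc, k, hk⟩, h3⟩ := h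
  refine ⟨s, h1, h2, ⟨-c, neg_mem hc, -k, ?_⟩, h3.neg⟩
  intro t ht; simp only [hk t ht]; ring

lemma P4_cl {X T s a b : ℝ} (hs : 0 ≤ s) (hsT : s ≤ T) (hsX : 2 * s ≤ X + T) (hXT : X ≤ T)
    (hb : b ∈ Icc (-1:ℝ) 1) : P4 T (cl (loF X T s) (hiF X T) a b) := by
  refine ⟨s, hs, hsT, ⟨1, one_mem, 0, ?_⟩, ?_⟩
  · intro t ht
    unfold cl loF hiF
    rw [min_eq_left (a := t) (b := 2 * s - t) (by linarith [ht.2]), max_eq_left (a := t) (b := X - T + t)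
      (by linarith), min_eq_left (a := t) (b := X + T - t) (by linarith [ht.2]),
      max_eq_left (min_le_left _ _)]
    ring
  · have key : ∀ t ∈ Icc s T, cl (loF X T s) (hiF X T) a b t =
      max (max (2 * s + (-1) * t) (X - T + 1 * t)) (min (min (0 + 1 * t) (X + T + (-1) * t)) (a + b * t)) := by
      intro t ht
      unfold cl loF hiF
      rw [min_eq_right (a := t) (b := 2 * s - t) (by linarith [ht.1])]
      ring_nf
    have hlo : ∀ t ∈ Icc s T, max (2 * s + (-1) * t) (X - T + 1 * t) ≤ min (0 + 1 * t) (X + T + (-1) * t) := by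
      intro t ht
      obtain ⟨h1, h2⟩ := ht
      apply max_le <;> apply le_min <;> linarith
    have m1 : ∀ t, s ≤ t → b * (t - s) ≤ t - s := fun t ht => by
      nlinarith [mul_nonneg (sub_nonneg.2 hb.2) (sub_nonneg.2 ht)]
    have m2 : ∀ t, s ≤ t → -(t - s) ≤ b * (t - s) := fun t ht => by
      nlinarith [mul_nonneg (sub_nonneg.2 hb.1) (sub_nonneg.2 ht)]
    have m3 : ∀ t, t ≤ T → b * (T - t) ≤ T - t := fun t ht => by
      nlinarith [mul_nonneg (sub_nonneg.2 hb.2) (sub_nonneg.2 ht)]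
    have m4 : ∀ t, t ≤ T → -(T - t) ≤ b * (T - t) := fun t ht => by
      nlinarith [mul_nonneg (sub_nonneg.2 hb.1) (sub_nonneg.2 ht)]
    rcases le_total s (a + b * s) with c1 | c1 <;> rcases le_total X (a + b * T) with c2 | c2
    · refine (P3_min (k0 := 0) (k2 := X + T) (k := a) hsT hb).congr fun t ht => ?_
      rw [key t ht, max_eq_right]
      refine le_min (hlo t ht) (max_le ?_ ?_)
      · linarith [m2 t ht.1]
      · linarith [m3 t ht.2]
    · refine (P3_par (kl := X - T) (kh := 0) (k := a) hsT (by linarith) hb).congr fun t ht => ?_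
      have e : a + b * t ≤ X + T + (-1) * t := by linarith [m4 t ht.2]
      have e' : 2 * s + (-1) * t ≤ a + b * t := by linarith [m2 t ht.1]
      rw [key t ht, min_assoc, min_eq_right e, max_comm (2 * s + _), max_assoc, max_eq_right (a := 2 * s + (-1) * t)]
      exact le_min (by linarith [ht.1]) e'
    · refine (P3_par' (kl := 2 * s) (kh := X + T) (k := a) hsT (by linarith) hb).congr fun t ht => ?_
      have e : a + b * t ≤ 0 + 1 * t := by linarith [m1 t ht.1]
      have e' : X - T + 1 * t ≤ a + b * t := by linarith [m3 t ht.2]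
      rw [key t ht, min_comm (0 + _), min_assoc, min_eq_right e, max_assoc,
        max_eq_right (a := X - T + 1 * t)]
      exact le_min (by linarith [ht.2]) e'
    · refine (P3_max (k0 := 2 * s) (k2 := X - T) (k := a) hsT hb).congr fun t ht => ?_
      rw [key t ht, min_eq_right]
      refine le_min ?_ ?_
      · linarith [m1 t ht.1]
      · linarith [m4 t ht.2]

lemma cl_zero {X T s a b : ℝ} (hs : 0 ≤ s) (hXT : X ≤ T) (hX : -T ≤ X) :
    cl (loF X T s) (hiF X T) a b 0 = 0 := by
  unfold cl loF hiF
  rw [min_eq_left (a := 0) (by linarith), max_eq_left (a := 0) (by linarith),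
    min_eq_left (a := 0) (by linarith), max_eq_left (min_le_left _ _)]

lemma cl_end {X T s a b : ℝ} (hsX : 2 * s ≤ X + T) (hXT : X ≤ T) :
    cl (loF X T s) (hiF X T) a b T = X := by
  unfold cl loF hiF
  rw [show X - T + T = X by ring, show X + T - T = X by ring,
    min_eq_right hXT, max_eq_right (a := min T _) ((min_le_right _ _).trans (by linarith)),
    max_eq_left (min_le_left _ _)]

lemma st4_neg (a b c d : ℝ) : (st4 (-1) a b c d).t = (st4 1 a b c d).t ∧
    (st4 (-1) a b c d).x = -(st4 1 a b c d).x ∧ (st4 (-1) a b c d).A = -(st4 1 a b c d).A ∧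
    (st4 (-1) a b c d).B = -(st4 1 a b c d).B ∧ (st4 (-1) a b c d).Q = (st4 1 a b c d).Q := by
  refine ⟨rfl, ?_, ?_, ?_, ?_⟩ <;> simp only [st4, step, St0] <;> ring

lemma exists_pw_plus {ξ : ℝ → ℝ} (hξ : ∀ s t, |ξ s - ξ t| ≤ |s - t|) (hc : Continuous ξ)
    (hξ0 : ξ 0 = 0) {T : ℝ} (hT : 0 ≤ T) {p q r d : ℝ}
    (hp : 0 ≤ p) (hq : 0 ≤ q) (hr : 0 ≤ r) (hd : 0 ≤ d)
    (ht : (st4 1 p q r d).t = T) (hx : (st4 1 p q r d).x = ξ T)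
    (hA : (st4 1 p q r d).A = ∫ s in (0:ℝ)..T, ξ s)
    (hB : (st4 1 p q r d).B = ∫ s in (0:ℝ)..T, s * ξ s)
    (hQ : ∫ s in (0:ℝ)..T, ξ s ^ 2 ≤ (st4 1 p q r d).Q) :
    ∃ f : ℝ → ℝ, (∀ s t, |f s - f t| ≤ |s - t|) ∧ Continuous f ∧ P4 T f ∧ f 0 = 0 ∧ f T = ξ T ∧
      ∫ t in (0:ℝ)..T, f t = ∫ t in (0:ℝ)..T, ξ t ∧
      ∫ t in (0:ℝ)..T, t * f t = ∫ t in (0:ℝ)..T, t * ξ t ∧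
      ∫ t in (0:ℝ)..T, f t ^ 2 = ∫ t in (0:ℝ)..T, ξ t ^ 2 := by
  obtain ⟨s, a, b, hs, hsT, hsX, hb, h1, h2, h3⟩ :=
    main_plus hξ hc hξ0 hT hp hq hr hd ht hx hA hB hQ
  have k := hξ T 0
  rw [hξ0, sub_zero, sub_zero, abs_of_nonneg hT, abs_le] at k
  refine ⟨cl (loF (ξ T) T s) (hiF (ξ T) T) a b, ?_, ?_, P4_cl hs hsT hsX k.2 hb,
    cl_zero hs k.2 k.1, cl_end hsX k.2, h1, h2, h3⟩
  · unfold cl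
    refine lip_max (f := loF (ξ T) T s) (g := fun t => min (hiF (ξ T) T t) (a + b * t)) ?_
      (lip_min (f := hiF (ξ T) T) (g := fun t => a + b * t) ?_ (lip_line hb a))
    · unfold loF
      exact lip_max (f := fun t => min t (2 * s - t)) (g := fun t => ξ T - T + t)
        (lip_min (f := fun t => t) (g := fun t => 2 * s - t) (fun s t => le_rfl) (lip_down _))
        (lip_up _)
    · unfold hiF
      exact lip_min (f := fun t => t) (g := fun t => ξ T + T - t) (fun s t => le_rfl) (lip_down _)
  · unfold cl loF hiF; fun_prop

lemma exists_pw {ξ : ℝ → ℝ} (hξ : ∀ s t, |ξ s - ξ t| ≤ |s - t|) (hc : Continuous ξ)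
    (hξ0 : ξ 0 = 0) {T : ℝ} (hT : 0 ≤ T) :
    ∃ f : ℝ → ℝ, (∀ s t, |f s - f t| ≤ |s - t|) ∧ Continuous f ∧ P4 T f ∧ f 0 = 0 ∧ f T = ξ T ∧
      ∫ t in (0:ℝ)..T, f t = ∫ t in (0:ℝ)..T, ξ t ∧
      ∫ t in (0:ℝ)..T, t * f t = ∫ t in (0:ℝ)..T, t * ξ t ∧
      ∫ t in (0:ℝ)..T, f t ^ 2 = ∫ t in (0:ℝ)..T, ξ t ^ 2 := by
  obtain ⟨σ, hσ, p, q, r, d, hp, hq, hr, hd, ht, hx, hA, hB, hQ⟩ := high hξ hc hξ0 hT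
  rcases hσ with rfl | rfl
  · exact exists_pw_plus hξ hc hξ0 hT hp hq hr hd ht hx hA hB hQ
  · obtain ⟨n1, n2, n3, n4, n5⟩ := st4_neg p q r d
    rw [n1] at ht
    rw [n2] at hx
    rw [n3] at hA
    rw [n4] at hB
    rw [n5] at hQ
    have hm : ∀ g : ℝ → ℝ, ∫ s in (0:ℝ)..T, s * -g s = -∫ s in (0:ℝ)..T, s * g s := by
      intro g
      rw [← intervalIntegral.integral_neg]; simp only [mul_neg]
    obtain ⟨f, hf, hfc, h4, h0, hfT, e1, e2, e3⟩ := exists_pw_plus (ξ := fun t => -ξ t) (by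
      intro s t
      have := hξ s t
      rwa [show -ξ s - -ξ t = -(ξ s - ξ t) by ring, abs_neg]) hc.neg (by simp [hξ0]) hT hp hq hr hd
      ht (by linarith) (by rw [intervalIntegral.integral_neg]; linarith)
      (by rw [hm]; linarith) (by simpa only [neg_sq] using hQ)
    refine ⟨fun t => -f t, ?_, hfc.neg, h4.neg, by simp [h0], by simp [hfT], ?_, ?_, ?_⟩
    · intro s t
      have := hf s t
      rwa [show -f s - -f t = -(f s - f t) by ring, abs_neg]
    · rw [intervalIntegral.integral_neg, e1, intervalIntegral.integral_neg, neg_neg]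
    · rw [hm, e2, hm, neg_neg]
    · simpa only [neg_sq] using e3

end CartanAux
namespace CartanAux

def LipT (T : ℝ) (f : ℝ → ℝ) : Prop :=
  ∃ K : ℝ, 0 ≤ K ∧ ∀ s ∈ Icc 0 T, ∀ t ∈ Icc 0 T, |f s - f t| ≤ K * |s - t|

lemma LipT.add {T : ℝ} {f g : ℝ → ℝ} (hf : LipT T f) (hg : LipT T g) :
    LipT T (fun t => f t + g t) := by
  obtain ⟨K, hK, h⟩ := hf
  obtain ⟨L, hL, h'⟩ := hg
  refine ⟨K + L, by positivity, fun s hs t ht => ?_⟩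
  have := abs_add_le (f s - f t) (g s - g t)
  rw [show f s + g s - (f t + g t) = f s - f t + (g s - g t) by ring]
  linarith [h s hs t ht, h' s hs t ht]

lemma LipT.mul {T : ℝ} {f g : ℝ → ℝ} (hf : LipT T f) (hg : LipT T g) :
    LipT T (fun t => f t * g t) := by
  obtain ⟨K, hK, h⟩ := hf
  obtain ⟨L, hL, h'⟩ := hg
  have hb : ∀ (f : ℝ → ℝ) (K : ℝ), 0 ≤ K →
      (∀ s ∈ Icc 0 T, ∀ t ∈ Icc 0 T, |f s - f t| ≤ K * |s - t|) → ∀ s ∈ Icc 0 T,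
      |f s| ≤ |f 0| + K * T := by
    intro f K hK h s hs
    have h1 := h s hs 0 ⟨le_rfl, hs.1.trans hs.2⟩
    have h2 := abs_add_le (f s - f 0) (f 0)
    rw [sub_add_cancel] at h2
    rw [sub_zero, abs_of_nonneg hs.1] at h1
    have := mul_le_mul_of_nonneg_left hs.2 hK
    linarith
  refine ⟨|(|f 0| + K * T)| * L + |(|g 0| + L * T)| * K, by positivity, fun s hs t ht => ?_⟩
  have e : f s * g s - f t * g t = f s * (g s - g t) + g t * (f s - f t) := by ring
  rw [e]
  refine (abs_add_le _ _).trans ?_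
  rw [abs_mul, abs_mul, add_mul, mul_assoc, mul_assoc]
  apply add_le_add
  · exact mul_le_mul ((hb f K hK h s hs).trans (le_abs_self _)) (h' s hs t ht) (abs_nonneg _)
      (abs_nonneg _)
  · exact mul_le_mul ((hb g L hL h' t ht).trans (le_abs_self _)) (h s hs t ht) (abs_nonneg _)
      (abs_nonneg _)

lemma LipT.const (T c : ℝ) : LipT T (fun _ => c) := ⟨0, le_rfl, fun s _ t _ => by simp⟩

lemma LipT.id (T : ℝ) : LipT T (fun t => t) := ⟨1, zero_le_one, fun s _ t _ => by simp⟩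

lemma LipT.int (T : ℝ) {h : ℝ → ℝ} (hh : Continuous h) :
    LipT T (fun t => ∫ s in (0:ℝ)..t, h s) := by
  obtain ⟨C, hC⟩ := (isCompact_Icc (a := (0:ℝ)) (b := T)).exists_bound_of_continuousOn hh.continuousOn
  refine ⟨|C|, abs_nonneg _, fun s hs t ht => ?_⟩
  rw [intervalIntegral.integral_interval_sub_left (hh.intervalIntegrable _ _)
    (hh.intervalIntegrable _ _)]
  rw [← Real.norm_eq_abs]
  apply intervalIntegral.norm_integral_le_of_norm_le_const
  intro r hr
  refine (hC r ?_).trans (le_abs_self _)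
  exact uIcc_subset_Icc ht hs (uIoc_subset_uIcc hr)

lemma LipT.ac {T : ℝ} (hT : 0 ≤ T) {f : ℝ → ℝ} (hf : LipT T f) :
    AbsolutelyContinuousOnInterval f 0 T := by
  obtain ⟨K, hK, h⟩ := hf
  apply LipschitzOnWith.absolutelyContinuousOnInterval (K := K.toNNReal)
  rw [uIcc_of_le hT]
  apply LipschitzOnWith.of_dist_le_mul
  intro s hs t ht
  rw [Real.coe_toNNReal _ hK]
  exact h s hs t ht

lemma LipT.zero {T : ℝ} (hT : 0 ≤ T) {f : ℝ → ℝ} (hf : LipT T f) (h0 : f 0 = 0)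
    (hd : ∀ᵐ t ∂(volume.restrict (Icc 0 T)), HasDerivAt f 0 t) : ∀ t ∈ Icc 0 T, f t = 0 := by
  rw [ae_restrict_iff' measurableSet_Icc] at hd
  obtain ⟨C, hC⟩ := (hf.ac hT).const_of_ae_hasDerivAt_zero (by rwa [uIcc_of_le hT])
  rw [uIcc_of_le hT] at hC
  intro t ht
  rw [hC t ht, ← hC 0 ⟨le_rfl, hT⟩, h0]

lemma lip_of_deriv {T : ℝ} (hT : 0 ≤ T) {x u : ℝ → ℝ} (hx : LipT T x)
    (hu : ∀ᵐ t ∂(volume.restrict (Icc 0 T)), |u t| ≤ 1)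
    (hd : ∀ᵐ t ∂(volume.restrict (Icc 0 T)), HasDerivAt x (u t) t) :
    ∀ s ∈ Icc 0 T, ∀ t ∈ Icc 0 T, |x s - x t| ≤ |s - t| := by
  rw [ae_restrict_iff' measurableSet_Icc] at hd hu
  intro s hs t ht
  have hsub : uIcc t s ⊆ Icc 0 T := uIcc_subset_Icc ht hs
  have hac : AbsolutelyContinuousOnInterval x t s := (hx.ac hT).mono (by rwa [uIcc_of_le hT])
  rw [← hac.integral_deriv_eq_sub]
  have := intervalIntegral.norm_integral_le_of_norm_le_const_ae (a := t) (b := s) (C := 1)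
    (f := deriv x) (by
      filter_upwards [hd, hu] with r h1 h2 h3
      have h4 := hsub (uIoc_subset_uIcc h3)
      rw [(h1 h4).deriv]
      exact h2 h4)
  simpa using this

lemma hasDeriv_int {h : ℝ → ℝ} (hh : Continuous h) (t : ℝ) :
    HasDerivAt (fun t => ∫ s in (0:ℝ)..t, h s) (h t) t :=
  intervalIntegral.integral_hasDerivAt_right (hh.intervalIntegrable _ _)
    (hh.stronglyMeasurableAtFilter _ _) hh.continuousAt

noncomputable def zF (f : ℝ → ℝ) (t : ℝ) : ℝ := (∫ s in (0:ℝ)..t, f s) - t * f t / 2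
noncomputable def vF (f : ℝ → ℝ) (t : ℝ) : ℝ := ∫ s in (0:ℝ)..t, (f s ^ 2 + s ^ 2) / 2
noncomputable def wF (f : ℝ → ℝ) (t : ℝ) : ℝ :=
  (∫ s in (0:ℝ)..t, s * f s) - f t ^ 3 / 6 - t ^ 2 * f t / 2

lemma zF_deriv {f x : ℝ → ℝ} (hf : Continuous f) {t u : ℝ} (hx : HasDerivAt x u t) :
    HasDerivAt (fun t => (∫ s in (0:ℝ)..t, f s) - t * x t / 2) (f t - (x t + t * u) / 2) t := by
  have := (hasDeriv_int hf t).sub (((hasDerivAt_id t).mul hx).div_const 2)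
  exact this.congr_deriv (by simp)

lemma wF_deriv {f x : ℝ → ℝ} (hf : Continuous f) {t u : ℝ} (hx : HasDerivAt x u t) :
    HasDerivAt (fun t => (∫ s in (0:ℝ)..t, s * f s) - x t ^ 3 / 6 - t ^ 2 * x t / 2)
      (t * f t - x t ^ 2 * u / 2 - (t * x t + t ^ 2 * u / 2)) t := by
  have := ((hasDeriv_int (h := fun s => s * f s) (by fun_prop) t).sub ((hx.pow 3).div_const 6)).sub
    ((((hasDerivAt_id t).pow 2).mul hx).div_const 2)
  exact this.congr_deriv (by simp; ring)

lemma LipT.congr {T : ℝ} {f g : ℝ → ℝ} (hf : LipT T f) (h : ∀ t, g t = f t) : LipT T g := by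
  have : g = f := funext h
  rwa [this]

lemma zF_lip {T : ℝ} {f x : ℝ → ℝ} (hf : Continuous f) (hx : LipT T x) :
    LipT T (fun t => (∫ s in (0:ℝ)..t, f s) - t * x t / 2) :=
  ((LipT.int T hf).add ((LipT.const T (-1/2)).mul ((LipT.id T).mul hx))).congr
    (fun t => by ring)

lemma wF_lip {T : ℝ} {f x : ℝ → ℝ} (hf : Continuous f) (hx : LipT T x) :
    LipT T (fun t => (∫ s in (0:ℝ)..t, s * f s) - x t ^ 3 / 6 - t ^ 2 * x t / 2) :=
  (((LipT.int T (h := fun s => s * f s) (by fun_prop)).add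
    ((LipT.const T (-1/6)).mul (hx.mul (hx.mul hx)))).add
    ((LipT.const T (-1/2)).mul (((LipT.id T).mul (LipT.id T)).mul hx))).congr
    (fun t => by ring)

lemma vF_eq {f : ℝ → ℝ} (hf : Continuous f) (T : ℝ) :
    vF f T = (∫ s in (0:ℝ)..T, f s ^ 2) / 2 + (∫ s in (0:ℝ)..T, s ^ 2) / 2 := by
  unfold vF
  rw [intervalIntegral.integral_div, intervalIntegral.integral_add
    (Continuous.intervalIntegrable (by fun_prop) _ _)
    (Continuous.intervalIntegrable (by fun_prop) _ _)]
  ring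

lemma traj_data {T : ℝ} (hT : 0 ≤ T) {x y z v w u1 : ℝ → ℝ}
    (hu1b : ∀ᵐ t ∂(volume.restrict (Icc 0 T)), |u1 t| ≤ 1)
    (htraj : IsTraj T x y z v w u1 (fun _ => 1))
    (hx0 : x 0 = 0) (hy0 : y 0 = 0) (hz0 : z 0 = 0) (hv0 : v 0 = 0) (hw0 : w 0 = 0) :
    ∃ ξ : ℝ → ℝ, (∀ s t, |ξ s - ξ t| ≤ |s - t|) ∧ ξ 0 = 0 ∧ x T = ξ T ∧ y T = T ∧
      z T = zF ξ T ∧ v T = vF ξ T ∧ w T = wF ξ T := by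
  obtain ⟨⟨K, hK⟩, hode⟩ := htraj
  have hK' : ∀ s ∈ Icc 0 T, ∀ t ∈ Icc 0 T, |x s - x t| ≤ K * |s - t| ∧ |y s - y t| ≤ K * |s - t| ∧
      |z s - z t| ≤ K * |s - t| ∧ |v s - v t| ≤ K * |s - t| ∧ |w s - w t| ≤ K * |s - t| := by
    intro s hs t ht
    have := hK.dist_le_mul s hs t ht
    simpa only [Prod.dist_eq, max_le_iff, Real.dist_eq] using this
  have lx : LipT T x := ⟨K, K.2, fun s hs t ht => (hK' s hs t ht).1⟩
  have ly : LipT T y := ⟨K, K.2, fun s hs t ht => (hK' s hs t ht).2.1⟩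
  have lz : LipT T z := ⟨K, K.2, fun s hs t ht => (hK' s hs t ht).2.2.1⟩
  have lv : LipT T v := ⟨K, K.2, fun s hs t ht => (hK' s hs t ht).2.2.2.1⟩
  have lw : LipT T w := ⟨K, K.2, fun s hs t ht => (hK' s hs t ht).2.2.2.2⟩
  have hmem : ∀ᵐ t ∂(volume.restrict (Icc 0 T)), t ∈ Icc 0 T := ae_restrict_mem measurableSet_Icc
  have hy : ∀ t ∈ Icc 0 T, y t = t := by
    intro t ht
    have := LipT.zero hT (f := fun t => y t - t)
      ((ly.add ((LipT.const T (-1)).mul (LipT.id T))).congr (fun t => by ring)) (by simp [hy0]) (by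
        filter_upwards [hode] with t h
        exact (h.2.1.sub (hasDerivAt_id t)).congr_deriv (by simp)) t ht
    linarith
  have hxl := lip_of_deriv hT lx hu1b (hode.mono fun t h => h.1)
  have hm : ∀ t, max 0 (min t T) ∈ Icc 0 T := fun t =>
    ⟨le_max_left _ _, max_le hT (min_le_right _ _)⟩
  obtain ⟨ξ, hξ⟩ : ∃ ξ : ℝ → ℝ, ∀ t, ξ t = x (max 0 (min t T)) := ⟨_, fun _ => rfl⟩
  have hξx : ∀ t ∈ Icc 0 T, ξ t = x t := by
    intro t ht; rw [hξ, min_eq_left ht.2, max_eq_right ht.1]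
  have hξl : ∀ s t, |ξ s - ξ t| ≤ |s - t| := by
    intro s t
    rw [hξ, hξ]
    refine (hxl _ (hm s) _ (hm t)).trans ?_
    exact lip_max (f := fun _ => 0) (g := fun t => min t T) (by simp)
      (lip_min (f := fun t => t) (g := fun _ => T) (by simp) (by simp)) s t
  have hξc : Continuous ξ := by
    apply LipschitzWith.continuous (K := 1)
    apply LipschitzWith.of_dist_le_mul
    intro s t
    simpa [Real.dist_eq] using hξl s t
  have hTT : T ∈ Icc 0 T := ⟨hT, le_rfl⟩
  refine ⟨ξ, hξl, by rw [hξx 0 ⟨le_rfl, hT⟩, hx0], (hξx T hTT).symm, hy T hTT, ?_, ?_, ?_⟩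
  · have := LipT.zero hT (f := fun t => z t - ((∫ s in (0:ℝ)..t, ξ s) - t * x t / 2))
      ((lz.add ((LipT.const T (-1)).mul (zF_lip hξc lx))).congr (fun t => by ring))
      (by simp [hz0]) (by
        filter_upwards [hode, hmem] with t h ht
        refine (h.2.2.1.sub (zF_deriv hξc h.1)).congr_deriv ?_
        rw [hy t ht, hξx t ht]; ring) T hTT
    unfold zF
    rw [hξx T hTT]
    linarith
  · have hc : Continuous (fun s => (ξ s ^ 2 + s ^ 2) / 2) := by fun_prop
    have := LipT.zero hT (f := fun t => v t - ∫ s in (0:ℝ)..t, (ξ s ^ 2 + s ^ 2) / 2)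
      ((lv.add ((LipT.const T (-1)).mul (LipT.int T hc))).congr (fun t => by ring))
      (by simp [hv0]) (by
        filter_upwards [hode, hmem] with t h ht
        refine (h.2.2.2.1.sub (hasDeriv_int hc t)).congr_deriv ?_
        rw [hy t ht, hξx t ht]; ring) T hTT
    unfold vF
    linarith
  · have := LipT.zero hT
      (f := fun t => w t - ((∫ s in (0:ℝ)..t, s * ξ s) - x t ^ 3 / 6 - t ^ 2 * x t / 2))
      ((lw.add ((LipT.const T (-1)).mul (wF_lip hξc lx))).congr (fun t => by ring))
      (by simp [hw0, hx0]) (by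
        filter_upwards [hode, hmem] with t h ht
        refine (h.2.2.2.2.sub (wF_deriv hξc h.1)).congr_deriv ?_
        rw [hy t ht, hξx t ht]; ring) T hTT
    unfold wF
    rw [hξx T hTT]
    linarith

lemma deriv_of_affine {f : ℝ → ℝ} {a b k c t : ℝ} (h : ∀ t ∈ Ioo a b, f t = k + c * t)
    (ht : t ∈ Ioo a b) : HasDerivAt f c t := by
  have h1 : HasDerivAt (fun t => k + c * t) c t :=
    (((hasDerivAt_id t).const_mul c).const_add k).congr_deriv (by simp)
  refine h1.congr_of_eventuallyEq ?_
  filter_upwards [Ioo_mem_nhds ht.1 ht.2] with r hr using h r hr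

lemma traj_build {T : ℝ} {f : ℝ → ℝ} (hf : ∀ s t, |f s - f t| ≤ |s - t|)
    (hfc : Continuous f) (h4 : P4 T f) (h0 : f 0 = 0) :
    ∃ ub : ℝ → ℝ, (∀ t, ub t ∈ Icc (-1:ℝ) 1) ∧ PiecewiseConst4 T ub ∧
        IsTraj T f (fun t => t) (zF f) (vF f) (wF f) ub (fun _ => 1) ∧
        (f 0, (0:ℝ), zF f 0, vF f 0, wF f 0) = (0, 0, 0, 0, 0) := by
  obtain ⟨s, hs, hsT, ⟨c0, hc0, k0, e0⟩, r1, r2, h1, h2, h3, c1, hc1, c2, hc2, c3, hc3,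
    k1, k2, k3, e1, e2, e3⟩ := h4
  refine ⟨fun t => if t < s then c0 else if t < r1 then c1 else if t < r2 then c2 else c3,
    ?_, ?_, ⟨?_, ?_⟩, ?_⟩
  · intro t
    dsimp only
    split_ifs <;> assumption
  · refine ⟨![0, s, r1, r2, T, T], ?_, rfl, rfl, ![c0, c1, c2, c3, c3], ?_⟩
    · rw [Fin.monotone_iff_le_succ]
      intro i
      fin_cases i <;> simp <;> assumption
    · intro i t ht
      fin_cases i <;> simp at ht ⊢
      · intro h; exact absurd ht.2 (not_lt.2 h)
      · rw [if_neg (by linarith [ht.1]), if_pos ht.2]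
      · rw [if_neg (by linarith [ht.1]), if_neg (by linarith [ht.1]), if_pos ht.2]
      · rw [if_neg (by linarith [ht.1]), if_neg (by linarith [ht.1]), if_neg (by linarith [ht.1])]
  · have lx : LipT T f := ⟨1, zero_le_one, fun s _ t _ => by simpa using hf s t⟩
    obtain ⟨K1, hK1, l1⟩ := lx
    obtain ⟨K2, hK2, l2⟩ := LipT.id T
    obtain ⟨K3, hK3, l3⟩ := zF_lip hfc ⟨K1, hK1, l1⟩
    obtain ⟨K4, hK4, l4⟩ := LipT.int T (h := fun s => (f s ^ 2 + s ^ 2) / 2) (by fun_prop)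
    obtain ⟨K5, hK5, l5⟩ := wF_lip hfc ⟨K1, hK1, l1⟩
    have hKs : 0 ≤ K1 + K2 + K3 + K4 + K5 := by positivity
    refine ⟨(K1 + K2 + K3 + K4 + K5).toNNReal, ?_⟩
    apply LipschitzOnWith.of_dist_le_mul
    intro a ha b hb
    rw [Real.coe_toNNReal _ hKs]
    simp only [Prod.dist_eq, max_le_iff, Real.dist_eq]
    have hn := abs_nonneg (a - b)
    have n1 := mul_nonneg hK1 hn
    have n2 := mul_nonneg hK2 hn
    have n3 := mul_nonneg hK3 hn
    have n4 := mul_nonneg hK4 hn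
    have n5 := mul_nonneg hK5 hn
    have q1 := l1 a ha b hb
    have q2 := l2 a ha b hb
    have q3 := l3 a ha b hb
    have q4 := l4 a ha b hb
    have q5 := l5 a ha b hb
    simp only [add_mul]
    unfold zF vF wF
    refine ⟨?_, ?_, ?_, ?_, ?_⟩ <;> linarith
  · rw [ae_restrict_iff' measurableSet_Icc]
    have hfin : ({0, s, r1, r2, T} : Set ℝ).Finite := Set.toFinite _
    filter_upwards [hfin.countable.ae_notMem volume] with t hn ht
    simp only [mem_insert_iff, mem_singleton_iff, not_or] at hn
    obtain ⟨n0, n1, n2, n3, n4⟩ := hn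
    have ht0 : 0 < t := lt_of_le_of_ne ht.1 (Ne.symm n0)
    have htT : t < T := lt_of_le_of_ne ht.2 n4
    have hd : HasDerivAt f ((fun t => if t < s then c0 else if t < r1 then c1 else
        if t < r2 then c2 else c3) t) t := by
      dsimp only
      split_ifs with g1 g2 g3
      · exact deriv_of_affine e0 ⟨ht0, g1⟩
      · exact deriv_of_affine e1 ⟨lt_of_le_of_ne (not_lt.1 g1) (Ne.symm n1), g2⟩
      · exact deriv_of_affine e2 ⟨lt_of_le_of_ne (not_lt.1 g2) (Ne.symm n2), g3⟩
      · exact deriv_of_affine e3 ⟨lt_of_le_of_ne (not_lt.1 g3) (Ne.symm n3), htT⟩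
    refine ⟨hd, hasDerivAt_id t, ?_, ?_, ?_⟩
    · exact (zF_deriv hfc hd).congr_deriv (by ring)
    · exact (hasDeriv_int (h := fun s => (f s ^ 2 + s ^ 2) / 2) (by fun_prop) t).congr_deriv
        (by ring)
    · exact (wF_deriv hfc hd).congr_deriv (by ring)
  · simp [zF, vF, wF, h0]

end CartanAux

/-- Every point reachable at time `T` from the origin by a trajectory with `u2 ≡ 1`
and measurable `|u1| ≤ 1` is also reachable at time `T` by a trajectory whose control
`ū1` is piecewise constant with values in `[−1,1]` and at most 4 discontinuities. -/
theorem singular_reachable_by_piecewise_constant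
    (T : ℝ) (hT : 0 ≤ T) (x y z v w u1 : ℝ → ℝ)
    (hu1 : Measurable u1)
    (hu1b : ∀ᵐ t ∂(volume.restrict (Icc 0 T)), |u1 t| ≤ 1)
    (htraj : IsTraj T x y z v w u1 (fun _ => 1))
    (hstart : (x 0, y 0, z 0, v 0, w 0) = (0, 0, 0, 0, 0)) :
    ∃ ub : ℝ → ℝ, (∀ t, ub t ∈ Icc (-1:ℝ) 1) ∧ PiecewiseConst4 T ub ∧
      ∃ x' y' z' v' w' : ℝ → ℝ,
        IsTraj T x' y' z' v' w' ub (fun _ => 1) ∧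
        (x' 0, y' 0, z' 0, v' 0, w' 0) = (0, 0, 0, 0, 0) ∧
        (x' T, y' T, z' T, v' T, w' T) = (x T, y T, z T, v T, w T) := by
  simp only [Prod.mk.injEq] at hstart
  obtain ⟨hx0, hy0, hz0, hv0, hw0⟩ := hstart
  obtain ⟨ξ, hξ, hξ0, hx, hy, hz, hv, hw⟩ :=
    CartanAux.traj_data hT hu1b htraj hx0 hy0 hz0 hv0 hw0
  have hξc : Continuous ξ := by
    apply LipschitzWith.continuous (K := 1)
    apply LipschitzWith.of_dist_le_mul
    intro s t
    simpa [Real.dist_eq] using hξ s t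
  obtain ⟨f, hf, hfc, h4, h0, hfT, e1, e2, e3⟩ := CartanAux.exists_pw hξ hξc hξ0 hT
  obtain ⟨ub, hub, hpc, htr, hst⟩ := CartanAux.traj_build hf hfc h4 h0
  refine ⟨ub, hub, hpc, f, fun t => t, CartanAux.zF f, CartanAux.vF f, CartanAux.wF f, htr, hst, ?_⟩
  rw [hx, hy, hz, hv, hw, CartanAux.vF_eq hfc, CartanAux.vF_eq hξc]
  simp only [CartanAux.zF, CartanAux.wF, hfT, e1, e2, e3]
end

section
/- Let h4, h5 ∈ ℝ and let θ, h3 : (α,β) → ℝ be differentiable functions such that θ(t) is never an integer multiple of π/2, satisfying θ'(t) = h3(t)/|sin 2θ(t)| and h3'(t) = sgn(cos θ(t))·h4 + sgn(sin θ(t))·h5. Define h1(t) = sgn(cos θ(t))·cos²θ(t) and h2(t) = sgn(sin θ(t))·sin²θ(t). Then |h1(t)| + |h2(t)| = 1 for all t, sgn(h1) = sgn(cos θ), sgn(h2) = sgn(sin θ), and (h1,h2,h3) satisfies the bang-bang vertical subsystem: h1' = −sgn(h2)·h3, h2' = sgn(h1)·h3, h3' = sgn(h1)·h4 + sgn(h2)·h5.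 -/
open Real Set

theorem aux_sign (x : ℝ) (hx : x ≠ 0) : Real.sign (Real.sign x * x ^ 2) = Real.sign x := by
  rcases lt_or_gt_of_ne hx with h | h
  · rw [Real.sign_of_neg h, Real.sign_of_neg]
    have := pow_pos (neg_pos.2 h) 2
    nlinarith
  · rw [Real.sign_of_pos h, Real.sign_of_pos]
    positivity

theorem aux_abs (x : ℝ) (hx : x ≠ 0) : |Real.sign x * x ^ 2| = x ^ 2 := by
  rcases lt_or_gt_of_ne hx with h | h
  · rw [Real.sign_of_neg h]; simp
  · rw [Real.sign_of_pos h]; simp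

theorem aux_mul (x : ℝ) : Real.sign x * x = |x| := by
  rcases lt_trichotomy x 0 with h | h | h
  · rw [Real.sign_of_neg h, abs_of_neg h]; simp
  · simp [h]
  · rw [Real.sign_of_pos h, abs_of_pos h]; simp

theorem aux_deriv (f : ℝ → ℝ) (f' t : ℝ) (hf : HasDerivAt f f' t) (h0 : f t ≠ 0) :
    HasDerivAt (fun s => Real.sign (f s) * f s ^ 2) (2 * |f t| * f') t := by
  have h1 : HasDerivAt (fun s => Real.sign (f t) * f s ^ 2) (2 * |f t| * f') t := by
    refine ((hf.pow 2).const_mul (Real.sign (f t))).congr_deriv ?_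
    rw [← aux_mul]; push_cast; ring
  refine h1.congr_of_eventuallyEq ?_
  rcases lt_or_gt_of_ne h0 with h | h
  · filter_upwards [hf.continuousAt.eventually_lt_const h] with s hs
    rw [Real.sign_of_neg h, Real.sign_of_neg hs]
  · filter_upwards [hf.continuousAt.eventually_const_lt h] with s hs
    rw [Real.sign_of_pos h, Real.sign_of_pos hs]

/-- The angular parameterization of the square `|h1| + |h2| = 1` transforms the
pendulum-like system `θ' = h3/|sin 2θ|`, `h3' = sgn(cos θ)·h4 + sgn(sin θ)·h5`
into the bang-bang vertical subsystem. -/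
theorem angular_coordinate_gives_bang_bang_system
    (α β h4 h5 : ℝ) (θ h3 : ℝ → ℝ)
    (hθne : ∀ t ∈ Ioo α β, ∀ n : ℤ, θ t ≠ n * (π / 2))
    (hθ' : ∀ t ∈ Ioo α β, HasDerivAt θ (h3 t / |Real.sin (2 * θ t)|) t)
    (hh3' : ∀ t ∈ Ioo α β,
      HasDerivAt h3 (Real.sign (Real.cos (θ t)) * h4 + Real.sign (Real.sin (θ t)) * h5) t) :
    ∀ t ∈ Ioo α β,
      |Real.sign (Real.cos (θ t)) * Real.cos (θ t) ^ 2|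
        + |Real.sign (Real.sin (θ t)) * Real.sin (θ t) ^ 2| = 1 ∧
      Real.sign (Real.sign (Real.cos (θ t)) * Real.cos (θ t) ^ 2)
        = Real.sign (Real.cos (θ t)) ∧
      Real.sign (Real.sign (Real.sin (θ t)) * Real.sin (θ t) ^ 2)
        = Real.sign (Real.sin (θ t)) ∧
      HasDerivAt (fun s => Real.sign (Real.cos (θ s)) * Real.cos (θ s) ^ 2)
        (-(Real.sign (Real.sign (Real.sin (θ t)) * Real.sin (θ t) ^ 2)) * h3 t) t ∧
      HasDerivAt (fun s => Real.sign (Real.sin (θ s)) * Real.sin (θ s) ^ 2)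
        (Real.sign (Real.sign (Real.cos (θ t)) * Real.cos (θ t) ^ 2) * h3 t) t ∧
      HasDerivAt h3
        (Real.sign (Real.sign (Real.cos (θ t)) * Real.cos (θ t) ^ 2) * h4
          + Real.sign (Real.sign (Real.sin (θ t)) * Real.sin (θ t) ^ 2) * h5) t := by
  intro t ht
  have hc : Real.cos (θ t) ≠ 0 := by
    intro h
    obtain ⟨k, hk⟩ := Real.cos_eq_zero_iff.1 h
    apply hθne t ht (2 * k + 1)
    rw [hk]; push_cast; ring
  have hs : Real.sin (θ t) ≠ 0 := by
    intro h
    obtain ⟨k, hk⟩ := Real.sin_eq_zero_iff.1 h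
    apply hθne t ht (2 * k)
    rw [← hk]; push_cast; ring
  have hc' := abs_ne_zero.2 hc
  have hs' := abs_ne_zero.2 hs
  have ha : |Real.sin (2 * θ t)| = 2 * |Real.sin (θ t)| * |Real.cos (θ t)| := by
    rw [Real.sin_two_mul, abs_mul, abs_mul]; simp
  have hθ := hθ' t ht
  rw [ha] at hθ
  rw [aux_sign _ hc, aux_sign _ hs, aux_abs _ hc, aux_abs _ hs]
  refine ⟨Real.cos_sq_add_sin_sq _, rfl, rfl, ?_, ?_, hh3' t ht⟩
  · refine (aux_deriv _ _ t hθ.cos hc).congr_deriv ?_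
    have := aux_mul (Real.sin (θ t))
    have h2 : Real.sign (Real.sin (θ t)) * |Real.sin (θ t)| = Real.sin (θ t) := by
      rcases lt_or_gt_of_ne hs with h | h
      · rw [Real.sign_of_neg h, abs_of_neg h]; simp
      · rw [Real.sign_of_pos h, abs_of_pos h]; simp
    field_simp
    linear_combination h3 t * h2
  · refine (aux_deriv _ _ t hθ.sin hs).congr_deriv ?_
    have h2 : Real.sign (Real.cos (θ t)) * |Real.cos (θ t)| = Real.cos (θ t) := by
      rcases lt_or_gt_of_ne hc with h | h
      · rw [Real.sign_of_neg h, abs_of_neg h]; simp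
      · rw [Real.sign_of_pos h, abs_of_pos h]; simp
    field_simp
    linear_combination (-h3 t) * h2
end

section
/- Define linear maps ε¹,…,ε⁷ : ℝ⁵ → ℝ⁵ by ε¹(h1,h2,h3,h4,h5) = (h2,h1,−h3,−h5,−h4), ε²(h) = (−h2,−h1,−h3,h5,h4), ε³(h) = (h1,−h2,−h3,−h4,h5), ε⁴(h) = (−h1,h2,−h3,h4,−h5), ε⁵(h) = (−h2,h1,h3,−h5,h4), ε⁶(h) = (h2,−h1,h3,h5,−h4), ε⁷(h) = (−h1,−h2,h3,−h4,−h5). If h = (h1,…,h5) : (α,β) → ℝ⁵ is a Lipschitz curve with h1(t)·h2(t) ≠ 0 for all t, satisfying a.e. the bang-bang vertical subsystem h1' = −sgn(h2)·h3, h2' = sgn(h1)·h3, h3' = sgn(h1)·h4 + sgn(h2)·h5, h4' = h5' = 0, then for each i ∈ {1,…,7} the curve ε^i ∘ h satisfies the same system. -/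
open MeasureTheory Set

/-- The discrete symmetries `ε¹, …, ε⁷` of the bang-bang vertical subsystem. -/
def eps1 : ℝ × ℝ × ℝ × ℝ × ℝ → ℝ × ℝ × ℝ × ℝ × ℝ
  | (h1, h2, h3, h4, h5) => (h2, h1, -h3, -h5, -h4)

def eps2 : ℝ × ℝ × ℝ × ℝ × ℝ → ℝ × ℝ × ℝ × ℝ × ℝ
  | (h1, h2, h3, h4, h5) => (-h2, -h1, -h3, h5, h4)

def eps3 : ℝ × ℝ × ℝ × ℝ × ℝ → ℝ × ℝ × ℝ × ℝ × ℝ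
  | (h1, h2, h3, h4, h5) => (h1, -h2, -h3, -h4, h5)

def eps4 : ℝ × ℝ × ℝ × ℝ × ℝ → ℝ × ℝ × ℝ × ℝ × ℝ
  | (h1, h2, h3, h4, h5) => (-h1, h2, -h3, h4, -h5)

def eps5 : ℝ × ℝ × ℝ × ℝ × ℝ → ℝ × ℝ × ℝ × ℝ × ℝ
  | (h1, h2, h3, h4, h5) => (-h2, h1, h3, -h5, h4)

def eps6 : ℝ × ℝ × ℝ × ℝ × ℝ → ℝ × ℝ × ℝ × ℝ × ℝ
  | (h1, h2, h3, h4, h5) => (h2, -h1, h3, h5, -h4)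

def eps7 : ℝ × ℝ × ℝ × ℝ × ℝ → ℝ × ℝ × ℝ × ℝ × ℝ
  | (h1, h2, h3, h4, h5) => (-h1, -h2, h3, -h4, -h5)

/-- The bang-bang vertical subsystem of the ℓ∞ sub-Finsler problem on the Cartan group,
for a curve `h = (h1,h2,h3,h4,h5)` in `ℝ⁵`:
`h1' = −sgn(h2)·h3`, `h2' = sgn(h1)·h3`, `h3' = sgn(h1)·h4 + sgn(h2)·h5`, `h4' = h5' = 0`. -/
def BangOde (h : ℝ → ℝ × ℝ × ℝ × ℝ × ℝ) (t : ℝ) : Prop :=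
  HasDerivAt (fun s => (h s).1) (-(Real.sign (h t).2.1) * (h t).2.2.1) t ∧
  HasDerivAt (fun s => (h s).2.1) (Real.sign (h t).1 * (h t).2.2.1) t ∧
  HasDerivAt (fun s => (h s).2.2.1)
    (Real.sign (h t).1 * (h t).2.2.2.1 + Real.sign (h t).2.1 * (h t).2.2.2.2) t ∧
  HasDerivAt (fun s => (h s).2.2.2.1) 0 t ∧
  HasDerivAt (fun s => (h s).2.2.2.2) 0 t

/-- A Lipschitz solution of the bang-bang vertical subsystem on `(α,β)`. -/
def IsBangSol (α β : ℝ) (h : ℝ → ℝ × ℝ × ℝ × ℝ × ℝ) : Prop :=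
  (∃ K, LipschitzOnWith K h (Ioo α β)) ∧
  (∀ᵐ t ∂(volume.restrict (Ioo α β)), BangOde h t)

theorem isBangSol_comp_aux (α β : ℝ) (h : ℝ → ℝ × ℝ × ℝ × ℝ × ℝ)
    (hsol : IsBangSol α β h) (e : ℝ × ℝ × ℝ × ℝ × ℝ → ℝ × ℝ × ℝ × ℝ × ℝ)
    (he : ∃ K, LipschitzWith K e) (ho : ∀ t, BangOde h t → BangOde (e ∘ h) t) :
    IsBangSol α β (e ∘ h) := by
  obtain ⟨⟨K, hK⟩, hae⟩ := hsol
  obtain ⟨L, hL⟩ := he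
  exact ⟨⟨L * K, hL.comp_lipschitzOnWith hK⟩, hae.mono ho⟩

theorem sign_neg_aux (x : ℝ) : Real.sign (-x) = -Real.sign x := Real.sign_neg

theorem lip_aux (e : ℝ × ℝ × ℝ × ℝ × ℝ → ℝ × ℝ × ℝ × ℝ × ℝ)
    (he : ∀ x y, dist (e x) (e y) ≤ dist x y) : ∃ K, LipschitzWith K e :=
  ⟨1, LipschitzWith.of_dist_le_mul (by simpa using he)⟩

/-- The maps `ε¹, …, ε⁷` are symmetries of the bang-bang vertical subsystem:
they transform its solutions (with `h1·h2 ≠ 0`) into solutions. -/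
theorem eps_symmetries_of_bang_bang_system
    (α β : ℝ) (h : ℝ → ℝ × ℝ × ℝ × ℝ × ℝ)
    (hsol : IsBangSol α β h)
    (hne : ∀ t ∈ Ioo α β, (h t).1 * (h t).2.1 ≠ 0) :
    IsBangSol α β (eps1 ∘ h) ∧ IsBangSol α β (eps2 ∘ h) ∧ IsBangSol α β (eps3 ∘ h) ∧
    IsBangSol α β (eps4 ∘ h) ∧ IsBangSol α β (eps5 ∘ h) ∧ IsBangSol α β (eps6 ∘ h) ∧
    IsBangSol α β (eps7 ∘ h) := by
  refine ⟨?_, ?_, ?_, ?_, ?_, ?_, ?_⟩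
  all_goals
    refine isBangSol_comp_aux α β h hsol _ (lip_aux _ ?_) ?_
    · rintro ⟨x1, x2, x3, x4, x5⟩ ⟨y1, y2, y3, y4, y5⟩
      simp only [eps1, eps2, eps3, eps4, eps5, eps6, eps7, Prod.dist_eq, dist_neg_neg]
      refine max_le ?_ (max_le ?_ (max_le ?_ (max_le ?_ ?_))) <;> simp [le_max_iff]
    · rintro t ⟨d1, d2, d3, d4, d5⟩
      have n1 := d1.fun_neg
      have n2 := d2.fun_neg
      have n3 := d3.fun_neg
      have n4 := d4.fun_neg
      have n5 := d5.fun_neg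
      rw [neg_zero] at n4 n5
      simp only [BangOde, eps1, eps2, eps3, eps4, eps5, eps6, eps7, Function.comp, sign_neg_aux]
      refine ⟨?_, ?_, ?_, ?_, ?_⟩
      all_goals
        first
        | (refine d1.congr_deriv ?_; ring; done)
        | (refine d2.congr_deriv ?_; ring; done)
        | (refine d3.congr_deriv ?_; ring; done)
        | (refine n1.congr_deriv ?_; ring; done)
        | (refine n2.congr_deriv ?_; ring; done)
        | (refine n3.congr_deriv ?_; ring; done)
        | exact d4
        | exact d5
        | exact n4
        | exact n5
end

section
/- Let h4, h5 ∈ ℝ and let θ, h3 : (α,β) → ℝ be differentiable functions such that θ(t) is never an integer multiple of π/2, satisfying θ'(t) = h3(t)/|sin 2θ(t)| and h3'(t) = sgn(cos θ(t))·h4 + sgn(sin θ(t))·h5. Then the full energy E(t) = h3(t)²/2 + U(θ(t)) is constant on (α,β), where U(θ) = h5·sgn(cos θ)·cos²θ − h4·sgn(sin θ)·sin²θ is the potential energy. -/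
open Real Set

/-- The potential energy `U(θ) = h5·sgn(cos θ)·cos²θ − h4·sgn(sin θ)·sin²θ` of the
pendulum-like reduction of the bang-bang vertical subsystem. -/
noncomputable def potentialU (h4 h5 θ : ℝ) : ℝ :=
  h5 * Real.sign (Real.cos θ) * Real.cos θ ^ 2 - h4 * Real.sign (Real.sin θ) * Real.sin θ ^ 2

theorem sign_sq_aux (f : ℝ → ℝ) (f' t : ℝ) (h : HasDerivAt f f' t) (h0 : f t ≠ 0) :
    HasDerivAt (fun x => Real.sign (f x) * f x ^ 2) (Real.sign (f t) * (2 * f t * f')) t := by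
  have h2 : HasDerivAt (fun x => Real.sign (f t) * f x ^ 2)
      (Real.sign (f t) * (2 * f t * f')) t := by
    simpa using (h.pow 2).const_mul (Real.sign (f t))
  refine h2.congr_of_eventuallyEq ?_
  rcases lt_or_gt_of_ne h0 with hl | hl
  · filter_upwards [h.continuousAt.eventually_lt_const hl] with x hx
    rw [Real.sign_of_neg hx, Real.sign_of_neg hl]
  · filter_upwards [h.continuousAt.eventually_const_lt hl] with x hx
    rw [Real.sign_of_pos hx, Real.sign_of_pos hl]

/-- Conservation of the full energy `E = h3²/2 + U(θ)` along solutions of the system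
`θ' = h3/|sin 2θ|`, `h3' = sgn(cos θ)·h4 + sgn(sin θ)·h5`. -/
theorem energy_conservation_bang_bang
    (α β h4 h5 : ℝ) (θ h3 : ℝ → ℝ)
    (hθne : ∀ t ∈ Ioo α β, ∀ n : ℤ, θ t ≠ n * (π / 2))
    (hθ' : ∀ t ∈ Ioo α β, HasDerivAt θ (h3 t / |Real.sin (2 * θ t)|) t)
    (hh3' : ∀ t ∈ Ioo α β,
      HasDerivAt h3 (Real.sign (Real.cos (θ t)) * h4 + Real.sign (Real.sin (θ t)) * h5) t) :
    ∀ s ∈ Ioo α β, ∀ t ∈ Ioo α β,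
      h3 s ^ 2 / 2 + potentialU h4 h5 (θ s) = h3 t ^ 2 / 2 + potentialU h4 h5 (θ t) := by
  have hd : ∀ t ∈ Ioo α β,
      HasDerivAt (fun t => h3 t ^ 2 / 2 + potentialU h4 h5 (θ t)) 0 t := by
    intro t ht
    have hs : Real.sin (θ t) ≠ 0 := by
      intro h
      obtain ⟨n, hn⟩ := Real.sin_eq_zero_iff.1 h
      apply hθne t ht (2 * n)
      push_cast
      linarith
    have hc : Real.cos (θ t) ≠ 0 := by
      intro h
      obtain ⟨n, hn⟩ := Real.cos_eq_zero_iff.1 h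
      apply hθne t ht (2 * n + 1)
      push_cast
      linarith
    have h1 := sign_sq_aux _ _ _ (hθ' t ht).cos hc
    have h2 := sign_sq_aux _ _ _ (hθ' t ht).sin hs
    have h := (((hh3' t ht).pow 2).div_const 2).add ((h1.const_mul h5).sub (h2.const_mul h4))
    have hfun : (fun t => h3 t ^ 2 / 2 + potentialU h4 h5 (θ t)) =
        fun t => h3 t ^ 2 / 2 + (h5 * (Real.sign (Real.cos (θ t)) * Real.cos (θ t) ^ 2)
          - h4 * (Real.sign (Real.sin (θ t)) * Real.sin (θ t) ^ 2)) := by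
      funext x
      simp only [potentialU, mul_assoc]
    rw [hfun]
    refine HasDerivAt.congr_deriv h ?_
    rw [Real.sin_two_mul, abs_mul, abs_mul, abs_two]
    rcases lt_or_gt_of_ne hs with hs' | hs' <;> rcases lt_or_gt_of_ne hc with hc' | hc' <;>
      simp only [Real.sign_of_neg, Real.sign_of_pos, abs_of_neg, abs_of_pos, hs', hc'] <;>
      field_simp <;> push_cast <;> ring
  intro s hs t ht
  exact isOpen_Ioo.is_const_of_deriv_eq_zero isPreconnected_Ioo
    (fun x hx => (hd x hx).differentiableAt.differentiableWithinAt)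
    (fun x hx => (hd x hx).deriv) hs ht
end
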